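/- arXiv:2212.07974 — 3 statements merged into one kernel-verified Lean document; each statement's English description precedes it below -/
import Mathlib

section
/- Let α ∈ (0,1) and let α_* ∈ (0,1) be the unique solution in (0,1) of the equation 1/Γ(1-2a)² = 1/(Γ(1-a)·Γ(1-3a)) (α_* ≈ 0.771667). Then the function x ↦ φ(-α, 1-α, -x) is log-concave on [0,∞) if and only if α ≤ α_*. -/
/-- The Wright function `φ(ρ, β, x) = ∑ x^n / (n! Γ(β + ρ n))`. -/
noncomputable def wright (ρ β x : ℝ) : ℝ :=
  ∑' n : ℕ, x ^ n / ((n.factorial : ℝ) * Real.Gamma (β + ρ * n))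

/-- `f` is log-concave on the set `S`. -/
def LogConcaveOn' (f : ℝ → ℝ) (S : Set ℝ) : Prop :=
  ∀ x ∈ S, ∀ y ∈ S, ∀ t ∈ Set.Icc (0 : ℝ) 1,
    f ((1 - t) * x + t * y) ≥ f x ^ (1 - t) * f y ^ t

/-!
Seating `m + 1` customers by the Chinese restaurant process with discount `α` produces weights
`V m i` for the event of `i + 1` occupied tables, and `m ^ α / m! * V m ⌊x m ^ α⌋` converges to the
Wright density at `x`. Log-concavity of the rows of `V` therefore passes to the density. The
recurrence `V (m + 1) (i + 1) = (m + 1 - α (i + 2)) V m (i + 1) + α (i + 1) V m i` preserves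
log-concavity; for `α ≤ 5 / 7` it holds from row `2` on, while for larger `α` it may fail at index
`0`, which is invisible in the limit but has to be prevented from spreading. The defect there is
controlled by a discrete Turán inequality, whose two sides have a ratio that decreases in `m` to the
ratio of `1 / Γ(1 - 2α)²` to `1 / (Γ(1 - α) Γ(1 - 3α))`; hence it holds at every `m` as soon as it
holds in the limit. Conversely, with `aₖ = 1 / Γ(1 - (k + 1) α)`, log-concavity of
`a₀ - a₁ x + a₂ x² / 2 - ⋯` at `0` forces `a₀ a₂ ≤ a₁²`. So log-concavity is governed by the sign
of `a₁² - a₀ a₂`, which is positive at `2 / 3` and negative near `1`, and changes only at its unique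
zero.
-/

open Filter Topology

/-- Log-concavity of the sequence `a` at the interior index `i + 1`. -/
def LogConcaveSeqAt (a : ℕ → ℝ) (i : ℕ) : Prop := a i * a (i + 2) ≤ a (i + 1) ^ 2

/-- The rising factorial `(1 - s)_m = (1 - s)(2 - s)⋯(m - s)`. -/
noncomputable def oneSubPochhammer (s : ℝ) (m : ℕ) : ℝ := (ascPochhammer ℝ m).eval (1 - s)

/-- `m!` times the probability that the Chinese restaurant process with discount `α` and
concentration `0` occupies `i + 1` tables after seating `m + 1` customers. The alternating sum
defines it for every real `α`. -/
noncomputable def blockWeight (α : ℝ) (m i : ℕ) : ℝ :=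
  ∑ j ∈ Finset.range (i + 1), (-1 : ℝ) ^ j * (i.choose j : ℝ) * oneSubPochhammer ((j + 1) * α) m

section BlockWeight

variable {α : ℝ} {m i : ℕ}

lemma oneSubPochhammer_zero (s : ℝ) : oneSubPochhammer s 0 = 1 := by
  simp [oneSubPochhammer]

lemma oneSubPochhammer_succ (s : ℝ) (m : ℕ) :
    oneSubPochhammer s (m + 1) = oneSubPochhammer s m * (m + 1 - s) := by
  rw [oneSubPochhammer, ascPochhammer_succ_eval, oneSubPochhammer]
  ring

lemma oneSubPochhammer_eq_prod (s : ℝ) (m : ℕ) :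
    oneSubPochhammer s m = ∏ l ∈ Finset.range m, ((l : ℝ) + 1 - s) := by
  induction m with
  | zero => simp [oneSubPochhammer_zero]
  | succ m ih => rw [oneSubPochhammer_succ, ih, Finset.prod_range_succ]

lemma blockWeight_zero_right (α : ℝ) (m : ℕ) : blockWeight α m 0 = oneSubPochhammer α m := by
  simp [blockWeight]

lemma blockWeight_one_right (α : ℝ) (m : ℕ) :
    blockWeight α m 1 = oneSubPochhammer α m - oneSubPochhammer (2 * α) m := by
  norm_num [blockWeight, Finset.sum_range_succ]
  ring

lemma blockWeight_two_right (α : ℝ) (m : ℕ) :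
    blockWeight α m 2
      = oneSubPochhammer α m - 2 * oneSubPochhammer (2 * α) m + oneSubPochhammer (3 * α) m := by
  norm_num [blockWeight, Finset.sum_range_succ]
  ring

lemma blockWeight_zero_left_succ (α : ℝ) (i : ℕ) : blockWeight α 0 (i + 1) = 0 := by
  have h : (∑ j ∈ Finset.range (i + 1 + 1), (-1 : ℝ) ^ j * ((i + 1).choose j : ℝ)) = 0 := by
    exact_mod_cast Int.alternating_sum_range_choose_of_ne (Nat.succ_ne_zero i)
  simpa only [blockWeight, oneSubPochhammer_zero, mul_one] using h

lemma blockWeight_succ_zero (α : ℝ) (m : ℕ) :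
    blockWeight α (m + 1) 0 = (m + 1 - α) * blockWeight α m 0 := by
  rw [blockWeight_zero_right, blockWeight_zero_right, oneSubPochhammer_succ, mul_comm]

lemma blockWeight_succ_succ (α : ℝ) (m i : ℕ) :
    blockWeight α (m + 1) (i + 1) =
      (m + 1 - α * (i + 2)) * blockWeight α m (i + 1) + α * (i + 1) * blockWeight α m i := by
  have hpad : blockWeight α m i = ∑ j ∈ Finset.range (i + 1 + 1),
      (-1 : ℝ) ^ j * (i.choose j : ℝ) * oneSubPochhammer ((j + 1) * α) m := by
    rw [Finset.sum_range_succ, Nat.choose_succ_self]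
    simp [blockWeight]
  rw [hpad, blockWeight, blockWeight, Finset.mul_sum, Finset.mul_sum, ← Finset.sum_add_distrib]
  refine Finset.sum_congr rfl fun j hj => ?_
  have hchoose : (i.choose j : ℝ) * (i + 1) = ((i + 1).choose j : ℝ) * (i + 1 - j) := by
    have hcast := congrArg (Nat.cast (R := ℝ)) (Nat.choose_mul_succ_eq i j)
    push_cast [Nat.cast_sub (Finset.mem_range_succ_iff.mp hj)] at hcast
    exact hcast
  rw [oneSubPochhammer_succ]
  linear_combination (-α * (-1) ^ j * oneSubPochhammer ((j + 1) * α) m) * hchoose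

lemma blockWeight_eq_zero_of_lt (α : ℝ) (h : m < i) : blockWeight α m i = 0 := by
  induction m generalizing i with
  | zero =>
    obtain ⟨i, rfl⟩ := Nat.exists_eq_succ_of_ne_zero h.ne'
    exact blockWeight_zero_left_succ α i
  | succ m ih =>
    obtain ⟨i, rfl⟩ := Nat.exists_eq_succ_of_ne_zero (Nat.ne_zero_of_lt h)
    rw [blockWeight_succ_succ, ih (by omega), ih (by omega)]
    ring

lemma blockWeight_pos (h0 : 0 < α) (h1 : α < 1) (h : i ≤ m) : 0 < blockWeight α m i := by
  induction m generalizing i with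
  | zero =>
    obtain rfl : i = 0 := by omega
    simp [blockWeight_zero_right, oneSubPochhammer_zero]
  | succ m ih =>
    rcases i with _ | i
    · rw [blockWeight_succ_zero]
      exact mul_pos (by linarith [m.cast_nonneg (α := ℝ)]) (ih (by omega))
    · have hold : 0 < α * (i + 1) * blockWeight α m i := by
        have := ih (i := i) (by omega)
        positivity
      rw [blockWeight_succ_succ]
      rcases Nat.lt_or_ge m (i + 1) with hi | hi
      · simpa [blockWeight_eq_zero_of_lt α hi] using hold
      · have him : (i : ℝ) + 1 ≤ m := by exact_mod_cast hi
        have hcoeff : 0 < (m : ℝ) + 1 - α * (i + 2) := by nlinarith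
        exact add_pos (mul_pos hcoeff (ih hi)) hold

lemma blockWeight_nonneg (h0 : 0 < α) (h1 : α < 1) (m i : ℕ) : 0 ≤ blockWeight α m i := by
  rcases Nat.lt_or_ge m i with h | h
  · exact (blockWeight_eq_zero_of_lt α h).ge
  · exact (blockWeight_pos h0 h1 h).le

lemma logConcaveSeqAt_blockWeight_of_lt (α : ℝ) (h : m < i + 2) :
    LogConcaveSeqAt (blockWeight α m) i := by
  rw [LogConcaveSeqAt, blockWeight_eq_zero_of_lt α h, mul_zero]
  positivity

end BlockWeight

section RowStep

/-- The failure of log-concavity at the first of two consecutive indices is tolerated, as long as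
the square `α ^ 2 * (t₂ - t₁) ^ 2` produced by the recurrence dominates it. -/
lemma mul_le_sq_of_recurrence {α c d t₀ t₁ t₂ t₃ : ℝ} (hα : 0 ≤ α) (hc : α ≤ c) (hd : α ≤ d)
    (h0 : 0 ≤ t₀) (h1 : 0 < t₁) (hlc : t₁ * t₃ ≤ t₂ ^ 2)
    (hdefect : (c - α) * (t₀ * t₂ - t₁ ^ 2) * ((c + α) * t₁ + (d - α) * t₂)
      ≤ α ^ 2 * (t₂ - t₁) ^ 2 * t₁) :
    ((c - α) * t₀ + (d + α) * t₁) * ((c + α) * t₂ + (d - α) * t₃) ≤ (c * t₁ + d * t₂) ^ 2 := by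
  have hcross : 0 ≤ (c - α) * (d - α) * t₀ * (t₂ ^ 2 - t₁ * t₃) := by
    have := sub_nonneg.2 hc
    have := sub_nonneg.2 hd
    have := sub_nonneg.2 hlc
    positivity
  have hlast : 0 ≤ (d ^ 2 - α ^ 2) * (t₂ ^ 2 - t₁ * t₃) * t₁ :=
    mul_nonneg (mul_nonneg (by nlinarith) (sub_nonneg.2 hlc)) h1.le
  refine le_of_mul_le_mul_right ?_ h1
  linear_combination hdefect + hcross + hlast

variable {α : ℝ} {m i : ℕ}

lemma logConcaveSeqAt_blockWeight_succ_of_defect (h0 : 0 < α) (h1 : α < 1)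
    (hm : α * (m + 2) ≤ m + 1) (hnext : LogConcaveSeqAt (blockWeight α m) (i + 1))
    (hdefect : α * (i + 1) * (blockWeight α m i * blockWeight α m (i + 2)
          - blockWeight α m (i + 1) ^ 2)
        * (α * (i + 3) * blockWeight α m (i + 1)
          + (m + 1 - α * (i + 4)) * blockWeight α m (i + 2))
      ≤ α ^ 2 * (blockWeight α m (i + 2) - blockWeight α m (i + 1)) ^ 2
        * blockWeight α m (i + 1)) :
    LogConcaveSeqAt (blockWeight α (m + 1)) (i + 1) := by
  rcases Nat.lt_or_ge (m + 1) (i + 1 + 2) with h | h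
  · exact logConcaveSeqAt_blockWeight_of_lt α h
  have hi : (i : ℝ) + 2 ≤ m := by exact_mod_cast (by omega : i + 2 ≤ m)
  have hstep := mul_le_sq_of_recurrence (c := α * (i + 2)) (d := m + 1 - α * (i + 3)) h0.le
    (by nlinarith) (by nlinarith) (blockWeight_nonneg h0 h1 m i)
    (blockWeight_pos h0 h1 (by omega)) hnext (by convert hdefect using 2 <;> ring)
  simp only [LogConcaveSeqAt, blockWeight_succ_succ]
  push_cast
  convert hstep using 1 <;> ring_nf

lemma logConcaveSeqAt_blockWeight_succ (h0 : 0 < α) (h1 : α < 1) (hm : α * (m + 2) ≤ m + 1)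
    (hprev : LogConcaveSeqAt (blockWeight α m) i)
    (hnext : LogConcaveSeqAt (blockWeight α m) (i + 1)) :
    LogConcaveSeqAt (blockWeight α (m + 1)) (i + 1) := by
  rcases Nat.lt_or_ge (m + 1) (i + 1 + 2) with h | h
  · exact logConcaveSeqAt_blockWeight_of_lt α h
  refine logConcaveSeqAt_blockWeight_succ_of_defect h0 h1 hm hnext ?_
  have hi : (i : ℝ) + 2 ≤ m := by exact_mod_cast (by omega : i + 2 ≤ m)
  have hcoeff : 0 ≤ (m : ℝ) + 1 - α * (i + 4) := by nlinarith
  have hw := blockWeight_nonneg h0 h1 m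
  have hw1 := hw (i + 1)
  have hw2 := hw (i + 2)
  calc _ ≤ 0 := mul_nonpos_of_nonpos_of_nonneg
        (mul_nonpos_of_nonneg_of_nonpos (by positivity) (sub_nonpos.2 hprev)) (by positivity)
    _ ≤ _ := by positivity

lemma logConcaveSeqAt_blockWeight_succ_zero (h0 : 0 < α) (h1 : α < 1)
    (hm : α * (m + 2) ≤ m + 1) (hnext : LogConcaveSeqAt (blockWeight α m) 0) :
    LogConcaveSeqAt (blockWeight α (m + 1)) 0 := by
  rcases Nat.lt_or_ge (m + 1) 2 with h | h
  · exact logConcaveSeqAt_blockWeight_of_lt α h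
  have hm1 : (1 : ℝ) ≤ m := by exact_mod_cast (by omega : 1 ≤ m)
  have hpos := blockWeight_pos (m := m) (i := 0) h0 h1 (by omega)
  have hstep := mul_le_sq_of_recurrence (c := α) (d := m + 1 - α * 2) (t₀ := 0) h0.le le_rfl
    (by nlinarith) le_rfl hpos hnext (by rw [sub_self, zero_mul, zero_mul]; positivity)
  simp only [LogConcaveSeqAt, blockWeight_succ_succ, blockWeight_succ_zero]
  push_cast
  convert hstep using 1 <;> ring_nf

lemma logConcaveSeqAt_blockWeight_of_le_five_sevenths (h0 : 0 < α) (h1 : α ≤ 5 / 7)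
    (hm : 2 ≤ m) (i : ℕ) : LogConcaveSeqAt (blockWeight α m) i := by
  induction m, hm using Nat.le_induction generalizing i with
  | base =>
    rcases i with _ | i
    · have hfactor : 0 ≤ α ^ 2 * (1 - α) * (5 - 7 * α) :=
        mul_nonneg (mul_nonneg (sq_nonneg α) (by linarith)) (by linarith)
      norm_num [LogConcaveSeqAt, blockWeight_zero_right, blockWeight_one_right,
        blockWeight_two_right, oneSubPochhammer_eq_prod, Finset.prod_range_succ]
      linear_combination hfactor
    · exact logConcaveSeqAt_blockWeight_of_lt α (by omega)
  | succ m hm ih =>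
    have hm' : (2 : ℝ) ≤ m := by exact_mod_cast hm
    rcases i with _ | i
    · exact logConcaveSeqAt_blockWeight_succ_zero h0 (by linarith) (by nlinarith) (ih 0)
    · exact logConcaveSeqAt_blockWeight_succ h0 (by linarith) (by nlinarith) (ih i) (ih (i + 1))

end RowStep

section SignsOfPochhammer

variable {s : ℝ} {m : ℕ}

lemma oneSubPochhammer_pos_of_lt_one (hs : s < 1) (m : ℕ) : 0 < oneSubPochhammer s m := by
  rw [oneSubPochhammer_eq_prod]
  exact Finset.prod_pos fun l _ => by linarith [l.cast_nonneg (α := ℝ)]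

lemma oneSubPochhammer_neg_of_lt_two (h1 : 1 < s) (h2 : s < 2) (hm : 1 ≤ m) :
    oneSubPochhammer s m < 0 := by
  induction m, hm using Nat.le_induction with
  | base => simpa [oneSubPochhammer_eq_prod] using h1
  | succ m hm ih =>
    have hm' : (1 : ℝ) ≤ m := by exact_mod_cast hm
    rw [oneSubPochhammer_succ]
    exact mul_neg_of_neg_of_pos ih (by linarith)

lemma oneSubPochhammer_pos_of_lt_three (h2 : 2 < s) (h3 : s < 3) (hm : 2 ≤ m) :
    0 < oneSubPochhammer s m := by
  induction m, hm using Nat.le_induction with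
  | base =>
    norm_num [oneSubPochhammer_eq_prod, Finset.prod_range_succ]
    nlinarith
  | succ m hm ih =>
    have hm' : (2 : ℝ) ≤ m := by exact_mod_cast hm
    rw [oneSubPochhammer_succ]
    exact mul_pos ih (by linarith)

end SignsOfPochhammer

/-- The finite form, at level `m`, of the inequality `a₀ a₂ ≤ a₁²` between the reciprocal Gamma
values `aₖ = 1 / Γ(1 - (k + 1) α)`: the correction `α ^ 2` makes the ratio of its two sides
monotone in `m`. -/
def PochhammerTuran (α : ℝ) (m : ℕ) : Prop :=
  (m - 1 - α ^ 2) * (oneSubPochhammer α m * oneSubPochhammer (3 * α) m)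
    ≤ (m - 1) * oneSubPochhammer (2 * α) m ^ 2

section MiddleRange

variable {α : ℝ} {m : ℕ}

/-- The constant `1933 / 2500 = 0.7732` separates two thresholds: the level-`6` inequality fails
from `α ≈ 0.77305` on, and row `6` of `blockWeight` is log-concave away from index `0` up to
`α ≈ 0.77333`. Level `6` is the first at which the two are in this order. -/
lemma le_of_pochhammerTuran_six (h1 : α < 1) (hT : PochhammerTuran α 6) : α ≤ 1933 / 2500 := by
  by_contra! hα
  -- `α = (c + u) / (1 + u)` maps `u ∈ (0, ∞)` onto `(c, 1)`, and there the difference of the two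
  -- sides is a rational function of `u` with coefficients of one sign.
  obtain ⟨u, hu, rfl⟩ : ∃ u : ℝ, 0 < u ∧ α = (1933 / 2500 + u) / (1 + u) := by
    refine ⟨(α - 1933 / 2500) / (1 - α), div_pos (by linarith) (by linarith), ?_⟩
    have : 1 - α ≠ 0 := by linarith
    field_simp
    ring
  refine absurd hT (not_le_of_gt (sub_pos.1 ?_))
  simp only [oneSubPochhammer_eq_prod, Finset.prod_range_succ, Finset.range_zero,
    Finset.prod_empty]
  push_cast
  field_simp
  ring_nf
  positivity

lemma oneSubPochhammer_le_mul_neg (h0 : 2 / 3 < α) (h1 : α ≤ 4 / 5) (hm : 3 ≤ m) :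
    oneSubPochhammer α m ≤ m * -oneSubPochhammer (2 * α) m := by
  induction m, hm using Nat.le_induction with
  | base =>
    norm_num [oneSubPochhammer_eq_prod, Finset.prod_range_succ]
    nlinarith [mul_nonneg (sub_nonneg.2 h0.le) (sub_nonneg.2 h1)]
  | succ m hm ih =>
    have hm' : (3 : ℝ) ≤ m := by exact_mod_cast hm
    have hneg := oneSubPochhammer_neg_of_lt_two (s := 2 * α) (m := m) (by linarith)
      (by linarith) (by omega)
    rw [oneSubPochhammer_succ, oneSubPochhammer_succ]
    push_cast
    calc oneSubPochhammer α m * (m + 1 - α)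
        ≤ (m * -oneSubPochhammer (2 * α) m) * (m + 1 - α) :=
          mul_le_mul_of_nonneg_right ih (by linarith)
      _ = -oneSubPochhammer (2 * α) m * (m * (m + 1 - α)) := by ring
      _ ≤ -oneSubPochhammer (2 * α) m * ((m + 1) * (m + 1 - 2 * α)) :=
          mul_le_mul_of_nonneg_left (by nlinarith) (neg_nonneg.2 hneg.le)
      _ = _ := by ring

lemma defect_quadratic_form_le {α n p q : ℝ} (h0 : 0 < α) (h1 : α ≤ 4 / 5) (hn : 6 ≤ n)
    (hp : 0 < p) (hq : 0 < q) (hpq : p ≤ (n - 1) * q) :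
    α * ((n - α) * p ^ 2 + (n - 4 * α) * (q * p)) ≤ (n - 2 - α ^ 2) * (p + q) ^ 2 := by
  have hα2 : α ^ 2 ≤ 1 := by nlinarith
  have hqq : 0 ≤ (n - 2 - α ^ 2) * q ^ 2 := mul_nonneg (by linarith) (sq_nonneg q)
  have hcross : 0 ≤ (n * (2 - α) - 4 + 2 * α ^ 2) * (p * q) :=
    mul_nonneg (by nlinarith) (mul_pos hp hq).le
  suffices 0 ≤ (n * (1 - α) - 2) * p ^ 2 + (n * (2 - α) - 4 + 2 * α ^ 2) * (p * q) by
    linear_combination this + hqq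
  rcases le_or_gt 0 (n * (1 - α) - 2) with hlead | hlead
  · exact add_nonneg (mul_nonneg hlead (sq_nonneg p)) hcross
  · have hpp : (n * (1 - α) - 2) * ((n - 1) * (p * q)) ≤ (n * (1 - α) - 2) * p ^ 2 :=
      mul_le_mul_of_nonpos_left (by nlinarith) hlead.le
    have hcoeff : 0 ≤ (1 - α) * n ^ 2 - n - 2 + 2 * α ^ 2 := by
      nlinarith [mul_nonneg (sub_nonneg.2 h1) (sq_nonneg n), sq_nonneg (α - 4 / 5)]
    linear_combination hpp + mul_nonneg hcoeff (mul_pos hp hq).le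

lemma defect_le {α n p q r : ℝ} (h0 : 0 < α) (h1 : α ≤ 4 / 5) (hn : 6 ≤ n)
    (hp : 0 < p) (hq : 0 < q) (hr : 0 < r) (hpq : p ≤ (n - 1) * q) (hD : q ^ 2 ≤ p * r)
    (hT : (n - 2 - α ^ 2) * (p * r) ≤ (n - 2) * q ^ 2) :
    (p * r - q ^ 2) * (3 * α * (p + q) + (n - 4 * α) * (p + 2 * q + r))
      ≤ α * (q + r) ^ 2 * (p + q) := by
  have hα2 : α ^ 2 ≤ 1 := by nlinarith
  have hK : 0 < n - 2 - α ^ 2 := by linarith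
  have hn4 : 0 ≤ n - 4 * α := by linarith
  have hn1 : 0 ≤ n - α := by linarith
  have hslope : q * (p + q) ≤ (q + r) * p := by linear_combination hD
  have hslope_sq : (q * (p + q)) ^ 2 ≤ ((q + r) * p) ^ 2 := by gcongr
  refine le_of_mul_le_mul_right ?_ (mul_pos hK (add_pos hp hq))
  calc _ = (n - 2 - α ^ 2) * (p * r - q ^ 2)
          * ((n - α) * (p + q) + (n - 4 * α) * (q + r)) * (p + q) := by ring
    _ ≤ α ^ 2 * q ^ 2 * ((n - α) * (p + q) + (n - 4 * α) * (q + r)) * (p + q) := by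
        gcongr ?_ * _ * _
        linear_combination hT
    _ = α ^ 2 * ((n - α) * (q * (p + q)) ^ 2
          + (n - 4 * α) * (q * (q + r)) * (q * (p + q))) := by ring
    _ ≤ α ^ 2 * ((n - α) * ((q + r) * p) ^ 2
          + (n - 4 * α) * (q * (q + r)) * ((q + r) * p)) := by gcongr
    _ = α * (q + r) ^ 2 * (α * ((n - α) * p ^ 2 + (n - 4 * α) * (q * p))) := by ring
    _ ≤ α * (q + r) ^ 2 * ((n - 2 - α ^ 2) * (p + q) ^ 2) := by
        have := defect_quadratic_form_le h0 h1 hn hp hq hpq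
        gcongr
    _ = _ := by ring

lemma logConcaveSeqAt_blockWeight_succ_one (h0 : 2 / 3 < α) (h1 : α ≤ 4 / 5) (hm : 6 ≤ m)
    (hT : PochhammerTuran α m) (hlc : LogConcaveSeqAt (blockWeight α m) 1) :
    LogConcaveSeqAt (blockWeight α (m + 1)) 1 := by
  have hm' : (6 : ℝ) ≤ m := by exact_mod_cast hm
  by_cases hzero : LogConcaveSeqAt (blockWeight α m) 0
  · exact logConcaveSeqAt_blockWeight_succ (by linarith) (by linarith) (by nlinarith) hzero hlc
  refine logConcaveSeqAt_blockWeight_succ_of_defect (by linarith) (by linarith) (by nlinarith)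
    hlc ?_
  simp only [LogConcaveSeqAt, blockWeight_zero_right, blockWeight_one_right,
    blockWeight_two_right, zero_add, not_le] at hzero ⊢
  have hdefect := defect_le (α := α) (n := m + 1) (by linarith) h1 (by linarith)
    (oneSubPochhammer_pos_of_lt_one (s := α) (by linarith) m)
    (neg_pos.2 (oneSubPochhammer_neg_of_lt_two (s := 2 * α) (m := m) (by linarith) (by linarith)
      (by omega)))
    (oneSubPochhammer_pos_of_lt_three (s := 3 * α) (m := m) (by linarith) (by linarith)
      (by omega))
    (by simpa using oneSubPochhammer_le_mul_neg h0 h1 (by omega))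
    (by linear_combination hzero) (by rw [PochhammerTuran] at hT; linear_combination hT)
  push_cast
  linear_combination α * hdefect

lemma blockWeight_six (α : ℝ) :
    blockWeight α 6 1 = α * (1 - α) * (1764 - 3108 * α + 2037 * α ^ 2 - 588 * α ^ 3 + 63 * α ^ 4) ∧
    blockWeight α 6 2 = α ^ 2 * (1 - α) * (3248 - 5572 * α + 3178 * α ^ 2 - 602 * α ^ 3) ∧
    blockWeight α 6 3 = α ^ 3 * (1 - α) * (4410 - 6090 * α + 2100 * α ^ 2) ∧
    blockWeight α 6 4 = α ^ 4 * (1 - α) * (4200 - 3360 * α) ∧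
    blockWeight α 6 5 = α ^ 5 * (1 - α) * 2520 ∧
    blockWeight α 6 6 = 720 * α ^ 6 := by
  refine ⟨?_, ?_, ?_, ?_, ?_, ?_⟩ <;>
    simp only [blockWeight, oneSubPochhammer_eq_prod, Finset.sum_range_succ,
      Finset.prod_range_succ, Finset.range_zero, Finset.sum_empty, Finset.prod_empty,
      Nat.choose] <;>
    push_cast <;> ring

lemma logConcaveSeqAt_blockWeight_six_succ (h0 : 0 < α) (h1 : α ≤ 1933 / 2500) (i : ℕ) :
    LogConcaveSeqAt (blockWeight α 6) (i + 1) := by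
  obtain ⟨w1, w2, w3, w4, w5, w6⟩ := blockWeight_six α
  have hα : 0 < 1 - α := by linarith
  obtain ⟨t, ht, hαt⟩ : ∃ t : ℝ, 0 ≤ t ∧ α = 1933 / 2500 - t :=
    ⟨1933 / 2500 - α, sub_nonneg.2 h1, by ring⟩
  rw [LogConcaveSeqAt, ← sub_nonneg]
  rcases i with _ | _ | _ | _ | i
  · have hq : 0 ≤ (3248 - 5572 * α + 3178 * α ^ 2 - 602 * α ^ 3) ^ 2
        - (1764 - 3108 * α + 2037 * α ^ 2 - 588 * α ^ 3 + 63 * α ^ 4)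
          * (4410 - 6090 * α + 2100 * α ^ 2) := by
      rw [hαt]; ring_nf; positivity
    rw [w1, w2, w3]
    linear_combination (α ^ 2 * (1 - α)) ^ 2 * hq
  · have hq : 0 ≤ (4410 - 6090 * α + 2100 * α ^ 2) ^ 2
        - (3248 - 5572 * α + 3178 * α ^ 2 - 602 * α ^ 3) * (4200 - 3360 * α) := by
      rw [hαt]; ring_nf; positivity
    rw [w2, w3, w4]
    linear_combination (α ^ 3 * (1 - α)) ^ 2 * hq
  · have hq : 0 ≤ (4200 - 3360 * α) ^ 2 - (4410 - 6090 * α + 2100 * α ^ 2) * 2520 := by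
      rw [hαt]; ring_nf; positivity
    rw [w3, w4, w5]
    linear_combination (α ^ 4 * (1 - α)) ^ 2 * hq
  · have hq : 0 ≤ 3326400 - 3931200 * α := by linarith
    rw [w4, w5, w6]
    linear_combination α ^ 10 * (1 - α) * hq
  · exact sub_nonneg.2 (logConcaveSeqAt_blockWeight_of_lt α (by omega))

lemma logConcaveSeqAt_blockWeight_of_pochhammerTuran (h0 : 2 / 3 < α) (h1 : α < 1)
    (hT : ∀ m, 2 ≤ m → PochhammerTuran α m) (hm : 6 ≤ m) (i : ℕ) :
    LogConcaveSeqAt (blockWeight α m) (i + 1) := by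
  have hα : α ≤ 1933 / 2500 := le_of_pochhammerTuran_six h1 (hT 6 (by norm_num))
  induction m, hm using Nat.le_induction generalizing i with
  | base => exact logConcaveSeqAt_blockWeight_six_succ (by linarith) hα i
  | succ m hm ih =>
    have hm' : (6 : ℝ) ≤ m := by exact_mod_cast hm
    rcases i with _ | i
    · exact logConcaveSeqAt_blockWeight_succ_one h0 (by linarith) hm (hT m (by omega)) (ih 0)
    · exact logConcaveSeqAt_blockWeight_succ (by linarith) h1 (by nlinarith) (ih i) (ih (i + 1))

end MiddleRange

/-- The rising factorial normalised by Euler's limit, so that it tends to `1 / Γ(1 - s)`. -/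
noncomputable def normPochhammer (s : ℝ) (m : ℕ) : ℝ :=
  (m : ℝ) ^ s * oneSubPochhammer s m / m.factorial

section NormPochhammer

lemma oneSubPochhammer_natCast_add_one {k m : ℕ} (h : k < m) :
    oneSubPochhammer (k + 1) m = 0 := by
  rw [oneSubPochhammer_eq_prod]
  exact Finset.prod_eq_zero (Finset.mem_range.mpr h) (sub_self _)

lemma tendsto_normPochhammer (s : ℝ) :
    Tendsto (normPochhammer s) atTop (𝓝 (Real.Gamma (1 - s))⁻¹) := by
  by_cases hG : Real.Gamma (1 - s) = 0
  · obtain ⟨k, hk⟩ := (Real.Gamma_eq_zero_iff _).1 hG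
    obtain rfl : s = k + 1 := by linarith
    rw [hG, inv_zero]
    refine tendsto_const_nhds.congr' ?_
    filter_upwards [eventually_gt_atTop k] with m hm
    simp [normPochhammer, oneSubPochhammer_natCast_add_one hm]
  · have hlim := ((Real.GammaSeq_tendsto_Gamma (1 - s)).inv₀ hG).mul
      (tendsto_natCast_div_add_atTop (1 - s))
    rw [mul_one] at hlim
    refine hlim.congr' ?_
    filter_upwards [eventually_gt_atTop 0, eventually_gt_atTop ⌈s⌉₊] with n hn hns
    have hn' : (0 : ℝ) < n := by exact_mod_cast hn
    have hs' : s < n := Nat.lt_of_ceil_lt hns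
    have hprod : ∏ j ∈ Finset.range (n + 1), (1 - s + (j : ℝ))
        = oneSubPochhammer s n * (n + (1 - s)) := by
      rw [Finset.prod_range_succ, oneSubPochhammer_eq_prod, add_comm (1 - s)]
      exact congrArg (· * _) (Finset.prod_congr rfl fun j _ => by ring)
    have hd : (n : ℝ) + (1 - s) ≠ 0 := by linarith
    rw [Real.GammaSeq, hprod, normPochhammer, Real.rpow_sub hn', Real.rpow_one]
    field_simp

lemma abs_oneSubPochhammer_le_pow {s : ℝ} {L m : ℕ} (h0 : 0 ≤ s) (hs : s ≤ L) (hm : m ≤ L) :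
    |oneSubPochhammer s m| ≤ (L : ℝ) ^ m := by
  rw [oneSubPochhammer_eq_prod, Finset.abs_prod]
  refine (Finset.prod_le_prod (fun _ _ => abs_nonneg _) fun i hi => ?_).trans_eq
    (Finset.prod_const _ |>.trans (by rw [Finset.card_range]))
  have hiL : (i : ℝ) + 1 ≤ L := by exact_mod_cast (Finset.mem_range.1 hi).trans_le hm
  rw [abs_le]
  constructor <;> linarith [i.cast_nonneg (α := ℝ)]

lemma add_one_rpow_mul_sub_le {s x : ℝ} (h0 : 0 ≤ s) (hs : s ≤ x) (hx : 0 < x) :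
    (x + 1) ^ s * (x - s) ≤ x ^ s * x := by
  have hbase : (x + 1) ^ s ≤ x ^ s * Real.exp (s / x) := by
    have hexp : x + 1 ≤ x * Real.exp x⁻¹ := by
      nlinarith [Real.add_one_le_exp x⁻¹, mul_inv_cancel₀ hx.ne']
    calc (x + 1) ^ s ≤ (x * Real.exp x⁻¹) ^ s := Real.rpow_le_rpow (by positivity) hexp h0
      _ = x ^ s * Real.exp (s / x) := by
        rw [Real.mul_rpow hx.le (Real.exp_pos _).le, ← Real.exp_mul, inv_mul_eq_div]
  have hfactor : x - s ≤ x * Real.exp (-(s / x)) := by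
    calc x - s = x * (-(s / x) + 1) := by field_simp; ring
      _ ≤ _ := by gcongr; exact Real.add_one_le_exp _
  calc (x + 1) ^ s * (x - s)
      ≤ (x ^ s * Real.exp (s / x)) * (x * Real.exp (-(s / x))) :=
        mul_le_mul hbase hfactor (sub_nonneg.2 hs) (by positivity)
    _ = x ^ s * x * (Real.exp (s / x) * Real.exp (-(s / x))) := by ring
    _ = x ^ s * x := by rw [← Real.exp_add, add_neg_cancel, Real.exp_zero, mul_one]

/-- The left-hand side is nonincreasing in `m ≥ L`, and at most the right-hand side for `m ≤ L`. -/
lemma add_one_rpow_mul_abs_oneSubPochhammer_le {s : ℝ} {L : ℕ} (h0 : 0 ≤ s) (hs : s ≤ L)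
    (m : ℕ) : (m + 1 : ℝ) ^ s * |oneSubPochhammer s m| / m.factorial
      ≤ (L + 1 : ℝ) ^ s * Real.exp L := by
  have hsmall {k : ℕ} (hk : k ≤ L) : (k + 1 : ℝ) ^ s * |oneSubPochhammer s k| / k.factorial
      ≤ (L + 1 : ℝ) ^ s * Real.exp L := by
    rw [mul_div_assoc]
    gcongr
    calc |oneSubPochhammer s k| / k.factorial ≤ (L : ℝ) ^ k / k.factorial := by
          gcongr
          exact abs_oneSubPochhammer_le_pow h0 hs hk
      _ ≤ Real.exp L := Real.pow_div_factorial_le_exp _ L.cast_nonneg k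
  rcases le_total m L with hm | hm
  · exact hsmall hm
  induction m, hm using Nat.le_induction with
  | base => exact hsmall le_rfl
  | succ m hm ih =>
    have hm' : (L : ℝ) ≤ m := by exact_mod_cast hm
    have hdecay := add_one_rpow_mul_sub_le (x := m + 1) h0 (by linarith) (by positivity)
    refine le_trans ?_ ih
    rw [oneSubPochhammer_succ, abs_mul, abs_of_nonneg (by linarith : 0 ≤ (m : ℝ) + 1 - s),
      Nat.factorial_succ]
    push_cast
    rw [div_le_div_iff₀ (by positivity) (by positivity)]
    calc _ = |oneSubPochhammer s m| * m.factorial * ((m + 1 + 1 : ℝ) ^ s * (m + 1 - s)) := by ring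
      _ ≤ |oneSubPochhammer s m| * m.factorial * ((m + 1 : ℝ) ^ s * (m + 1)) := by gcongr
      _ = _ := by ring

/-- A bound, uniform in `m`, of `normPochhammer ((j + 1) * α) m`. -/
noncomputable def pochhammerBound (α : ℝ) (j : ℕ) : ℝ :=
  ((j + 1).factorial * Real.exp (j + 2)) ^ α * Real.exp (j + 1)

lemma abs_normPochhammer_le_pochhammerBound {α : ℝ} (h0 : 0 ≤ α) (h1 : α ≤ 1) (j m : ℕ) :
    |normPochhammer ((j + 1) * α) m| ≤ pochhammerBound α j := by
  have hs : 0 ≤ (j + 1) * α := by positivity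
  calc |normPochhammer ((j + 1) * α) m|
      = (m : ℝ) ^ ((j + 1) * α) * |oneSubPochhammer ((j + 1) * α) m| / m.factorial := by
        rw [normPochhammer, abs_div, abs_mul, abs_of_nonneg (by positivity), Nat.abs_cast]
    _ ≤ (m + 1 : ℝ) ^ ((j + 1) * α) * |oneSubPochhammer ((j + 1) * α) m| / m.factorial := by
        gcongr
        linarith
    _ ≤ (((j + 1 : ℕ) : ℝ) + 1) ^ ((j + 1) * α) * Real.exp (j + 1 : ℕ) :=
        add_one_rpow_mul_abs_oneSubPochhammer_le hs (by push_cast; nlinarith) m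
    _ = ((j + 2 : ℝ) ^ (j + 1)) ^ α * Real.exp (j + 1) := by
        rw [← Real.rpow_natCast, ← Real.rpow_mul (by positivity)]
        push_cast
        ring_nf
    _ ≤ pochhammerBound α j := by
        rw [pochhammerBound]
        gcongr
        rw [← div_le_iff₀' (by positivity)]
        exact Real.pow_div_factorial_le_exp _ (by positivity) _

lemma summable_pow_div_factorial_mul_pochhammerBound {α X : ℝ} (h1 : α < 1) (hX : 0 < X) :
    Summable fun j : ℕ => X ^ j / j.factorial * pochhammerBound α j := by
  have hpos (j : ℕ) : 0 < X ^ j / j.factorial * pochhammerBound α j := by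
    rw [pochhammerBound]
    positivity
  have hshift (c : ℝ) : Tendsto (fun j : ℕ => (j : ℝ) + c) atTop atTop :=
    tendsto_atTop_add_const_right _ _ tendsto_natCast_atTop_atTop
  have hratio : Tendsto (fun j : ℕ => X * Real.exp 1 ^ α * Real.exp 1
      * (((j : ℝ) + 2) ^ (-(1 - α)) * (1 + 1 / ((j : ℝ) + 1)))) atTop (𝓝 0) := by
    have hone : Tendsto (fun j : ℕ => 1 + 1 / ((j : ℝ) + 1)) atTop (𝓝 (1 + 0)) :=
      (tendsto_const_nhds.div_atTop (hshift 1)).const_add 1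
    simpa using ((((tendsto_rpow_neg_atTop (sub_pos.2 h1)).comp (hshift 2)).mul
      hone).const_mul (X * Real.exp 1 ^ α * Real.exp 1))
  refine summable_of_ratio_test_tendsto_lt_one one_pos (.of_forall fun j => (hpos j).ne')
    (hratio.congr fun j => ?_)
  rw [Real.norm_of_nonneg (hpos _).le, Real.norm_of_nonneg (hpos _).le, eq_div_iff (hpos j).ne',
    pochhammerBound, pochhammerBound, Nat.factorial_succ (j + 1), Nat.factorial_succ j]
  have hj : (0 : ℝ) < j + 2 := by positivity
  have hexp2 : Real.exp (j + 1 + 2) = Real.exp (j + 2) * Real.exp 1 := by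
    rw [← Real.exp_add]; ring_nf
  push_cast
  rw [hexp2, Real.exp_add (j + 1) 1, show (j : ℝ) + 1 + 1 = j + 2 by ring,
    show (j + 2 : ℝ) * ((j + 1) * j.factorial) * (Real.exp (j + 2) * Real.exp 1)
      = (j + 2) * Real.exp 1 * ((j + 1) * j.factorial * Real.exp (j + 2)) by ring,
    Real.mul_rpow (x := (j + 2) * Real.exp 1) (by positivity) (by positivity),
    Real.mul_rpow (x := (j : ℝ) + 2) hj.le (Real.exp_pos 1).le,
    neg_sub, Real.rpow_sub_one hj.ne', pow_succ]
  field_simp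
  ring

end NormPochhammer

section LogConcaveLimits

lemma sub_mul_add_mul_le_of_concave {b : ℕ → ℝ} {k N : ℕ}
    (hb : ∀ i, i + 2 ≤ N → b i + b (i + 2) ≤ 2 * b (i + 1)) (hk : k ≤ N) :
    ((N : ℝ) - k) * b 0 + k * b N ≤ N * b k := by
  rcases hk.eq_or_lt with rfl | hkN
  · simp
  have hanti {i j : ℕ} (hij : i ≤ j) (hj : j < N) : b (j + 1) - b j ≤ b (i + 1) - b i := by
    induction j, hij using Nat.le_induction with
    | base => exact le_rfl
    | succ j _ ih => linarith [hb j (by omega), ih (by omega)]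
  have hleft : k * (b (k + 1) - b k) ≤ b k - b 0 := by
    rw [← Finset.sum_range_sub b k]
    simpa using Finset.card_nsmul_le_sum (Finset.range k) (fun i => b (i + 1) - b i) _
      fun i hi => hanti (Finset.mem_range.1 hi).le hkN
  have hright : b N - b k ≤ (N - k) * (b (k + 1) - b k) := by
    rw [← Finset.sum_Ico_sub b hk]
    simpa [Nat.cast_sub hk] using Finset.sum_le_card_nsmul (Finset.Ico k N)
      (fun i => b (i + 1) - b i) _
      fun i hi => hanti (Finset.mem_Ico.1 hi).1 (Finset.mem_Ico.1 hi).2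
  have hNk : (0 : ℝ) ≤ N - k := sub_nonneg.2 (by exact_mod_cast hk)
  linear_combination ((N : ℝ) - k) * hleft + (k : ℝ) * hright

lemma rpow_mul_rpow_le_of_logConcaveSeqAt {a : ℕ → ℝ} {p k q : ℕ} (hpk : p ≤ k) (hkq : k ≤ q)
    (hpq : p < q) (hpos : ∀ i ≤ q, 0 < a i) (ha : ∀ i, p ≤ i → LogConcaveSeqAt a i) :
    a p ^ (1 - ((k : ℝ) - p) / ((q : ℝ) - p)) * a q ^ (((k : ℝ) - p) / ((q : ℝ) - p)) ≤ a k := by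
  have hlog := sub_mul_add_mul_le_of_concave (b := fun i => Real.log (a (p + i)))
    (k := k - p) (N := q - p) (fun i hi => ?_) (by omega)
  · have hp := hpos p hpq.le
    have hq := hpos q le_rfl
    have hD : (0 : ℝ) < q - p := sub_pos.2 (by exact_mod_cast hpq)
    simp only [add_zero, Nat.add_sub_cancel' hpk, Nat.add_sub_cancel' hpq.le, Nat.cast_sub hpk,
      Nat.cast_sub hpq.le] at hlog
    rw [← Real.log_le_log_iff (by positivity) (hpos k hkq),
      Real.log_mul (by positivity) (by positivity), Real.log_rpow hp, Real.log_rpow hq,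
      ← mul_le_mul_iff_right₀ hD]
    refine le_of_eq_of_le ?_ hlog
    field_simp
  · have h0 := hpos (p + i) (by omega)
    have h2 := hpos (p + i + 2) (by omega)
    have := Real.log_le_log (mul_pos h0 h2) (ha (p + i) (by omega))
    rw [Real.log_mul h0.ne' h2.ne', Real.log_pow] at this
    exact_mod_cast this

lemma logConcaveOn'_of_lt {f : ℝ → ℝ} {S : Set ℝ} (hf : ∀ x ∈ S, 0 ≤ f x)
    (hlt : ∀ x ∈ S, ∀ y ∈ S, x < y → ∀ t ∈ Set.Ioo (0 : ℝ) 1,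
      f x ^ (1 - t) * f y ^ t ≤ f ((1 - t) * x + t * y)) : LogConcaveOn' f S := by
  rintro x hx y hy t ⟨ht0, ht1⟩
  rcases ht0.eq_or_lt with rfl | ht0
  · simp
  rcases ht1.eq_or_lt with rfl | ht1
  · simp
  rcases lt_trichotomy x y with hxy | rfl | hyx
  · exact hlt x hx y hy hxy t ⟨ht0, ht1⟩
  · rw [← Real.rpow_add_of_nonneg (hf x hx) (by linarith) ht0.le, sub_add_cancel,
      Real.rpow_one, ← add_mul, sub_add_cancel, one_mul]
  · have h := hlt y hy x hx hyx (1 - t) ⟨by linarith, by linarith⟩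
    rwa [sub_sub_cancel, mul_comm, add_comm (t * y)] at h

variable {N : ℕ → ℝ} {x : ℝ} {u : ℕ → ℕ}

lemma tendsto_floor_add_one_div (hN : Tendsto N atTop atTop) (hx : 0 ≤ x) :
    Tendsto (fun m => ((⌊x * N m⌋₊ + 1 : ℕ) : ℝ) / N m) atTop (𝓝 x) := by
  have h := ((tendsto_nat_floor_mul_div_atTop hx).comp hN).add
    (tendsto_const_nhds (x := (1 : ℝ)).div_atTop hN)
  rw [add_zero] at h
  refine h.congr fun m => ?_
  push_cast
  exact (add_div _ _ _).symm

lemma eventually_le_of_tendsto_div (hN : Tendsto N atTop atTop)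
    (hNo : Tendsto (fun m : ℕ => N m / m) atTop (𝓝 0))
    (hu : Tendsto (fun m => (u m : ℝ) / N m) atTop (𝓝 x)) : ∀ᶠ m in atTop, u m ≤ m := by
  have hlim := hu.mul hNo
  rw [mul_zero] at hlim
  filter_upwards [hlim.eventually_lt_const one_pos, hN.eventually_gt_atTop 0,
    eventually_gt_atTop 0] with m hm hNm hm0
  have hm0' : (0 : ℝ) < m := by exact_mod_cast hm0
  rw [div_mul_div_cancel₀ hNm.ne', div_lt_one hm0'] at hm
  exact_mod_cast hm.le

lemma nonneg_of_tendsto {a : ℕ → ℕ → ℝ} {y : ℝ} (hx : 0 ≤ x) (hN : Tendsto N atTop atTop)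
    (hNo : Tendsto (fun m : ℕ => N m / m) atTop (𝓝 0)) (hpos : ∀ᶠ m in atTop, ∀ i ≤ m, 0 < a m i)
    (hlim : ∀ u : ℕ → ℕ, Tendsto (fun m => (u m : ℝ) / N m) atTop (𝓝 x) →
      Tendsto (fun m => a m (u m)) atTop (𝓝 y)) : 0 ≤ y := by
  have hfloor := tendsto_floor_add_one_div hN hx
  refine ge_of_tendsto (hlim _ hfloor) ?_
  filter_upwards [hpos, eventually_le_of_tendsto_div hN hNo hfloor] with m hm hu
    using (hm _ hu).le

/-- Interpolation at the indices `⌊x N⌋ + 1`: the shift by one avoids index `0`, where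
log-concavity is not assumed. -/
lemma logConcaveOn'_Ici_of_tendsto {a : ℕ → ℕ → ℝ} {f : ℝ → ℝ} (hN : Tendsto N atTop atTop)
    (hNo : Tendsto (fun m : ℕ => N m / m) atTop (𝓝 0)) (hpos : ∀ᶠ m in atTop, ∀ i ≤ m, 0 < a m i)
    (ha : ∀ᶠ m in atTop, ∀ i, LogConcaveSeqAt (a m) (i + 1))
    (hlim : ∀ x, ∀ u : ℕ → ℕ, Tendsto (fun m => (u m : ℝ) / N m) atTop (𝓝 x) →
      Tendsto (fun m => a m (u m)) atTop (𝓝 (f x))) :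
    LogConcaveOn' f (Set.Ici 0) := by
  have hfloor {x : ℝ} (hx : 0 ≤ x) := tendsto_floor_add_one_div hN hx
  have hle {x : ℝ} (hx : 0 ≤ x) := eventually_le_of_tendsto_div hN hNo (hfloor hx)
  refine logConcaveOn'_of_lt (fun x hx => nonneg_of_tendsto hx hN hNo hpos (hlim x))
    fun x hx y _ hxy t ht => ?_
  set z := (1 - t) * x + t * y with hz
  have hx0 : 0 ≤ x := hx
  have hxz : x ≤ z := by nlinarith [ht.1]
  have hzy : z ≤ y := by nlinarith [ht.2]
  have hyx : 0 < y - x := sub_pos.2 hxy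
  have hux := hfloor hx0
  have huy := hfloor (hx0.trans hxy.le)
  have huz := hfloor (hx0.trans hxz)
  have hθ := (huz.sub hux).div (huy.sub hux) hyx.ne'
  rw [show (z - x) / (y - x) = t by rw [div_eq_iff hyx.ne', hz]; ring] at hθ
  refine le_of_tendsto_of_tendsto
    (((hlim x _ hux).rpow (hθ.const_sub 1) (Or.inr (sub_pos.2 ht.2))).mul
      ((hlim y _ huy).rpow hθ (Or.inr ht.1))) (hlim z _ huz) ?_
  filter_upwards [ha, hpos, hle (hx0.trans hxy.le), hN.eventually_gt_atTop 0,
    (huy.sub hux).eventually_const_lt hyx] with m hlc hm hmy hNm hlt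
  simp only [Pi.div_apply, ← sub_div, div_div_div_cancel_right₀ hNm.ne'] at hlt ⊢
  have hlt' : ⌊x * N m⌋₊ + 1 < ⌊y * N m⌋₊ + 1 := by
    exact_mod_cast sub_pos.1 ((div_pos_iff_of_pos_right hNm).1 hlt)
  refine rpow_mul_rpow_le_of_logConcaveSeqAt (by gcongr) (by gcongr) hlt'
    (fun i hi => hm i (hi.trans hmy)) fun i hi => ?_
  obtain ⟨i, rfl⟩ := Nat.exists_eq_succ_of_ne_zero (Nat.ne_zero_of_lt hi)
  exact hlc i

end LogConcaveLimits

/-- The Mittag-Leffler density `x ↦ φ(-α, 1 - α, -x)`, extended to all real `x`. -/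
noncomputable def wrightDensity (α x : ℝ) : ℝ := wright (-α) (1 - α) (-x)

/-- The coefficient `aₖ = 1 / Γ(1 - (k + 1) α)` of `(-x) ^ k / k!` in `wrightDensity α x`; it is
`0` at the poles of `Γ`. -/
noncomputable def recipGammaCoeff (α : ℝ) (k : ℕ) : ℝ := (Real.Gamma (1 - (k + 1) * α))⁻¹

section ScalingLimit

variable {α x : ℝ}

lemma wrightDensity_eq_tsum (α x : ℝ) :
    wrightDensity α x
      = ∑' k : ℕ, (-1 : ℝ) ^ k * (x ^ k / k.factorial) * recipGammaCoeff α k := by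
  refine tsum_congr fun k => ?_
  rw [recipGammaCoeff, show 1 - α + -α * (k : ℝ) = 1 - (k + 1) * α by ring, neg_pow x k]
  ring

lemma abs_recipGammaCoeff_le_pochhammerBound (h0 : 0 ≤ α) (h1 : α ≤ 1) (k : ℕ) :
    |recipGammaCoeff α k| ≤ pochhammerBound α k :=
  le_of_tendsto' (tendsto_normPochhammer _).abs
    (abs_normPochhammer_le_pochhammerBound h0 h1 k)

lemma tendsto_natCast_rpow_atTop (h0 : 0 < α) :
    Tendsto (fun m : ℕ => (m : ℝ) ^ α) atTop atTop :=
  (tendsto_rpow_atTop h0).comp tendsto_natCast_atTop_atTop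

lemma tendsto_natCast_rpow_div_self (h1 : α < 1) :
    Tendsto (fun m : ℕ => (m : ℝ) ^ α / m) atTop (𝓝 0) := by
  refine ((tendsto_rpow_neg_atTop (sub_pos.2 h1)).comp tendsto_natCast_atTop_atTop).congr' ?_
  filter_upwards [eventually_ne_atTop 0] with m hm
  rw [Function.comp_apply, neg_sub, Real.rpow_sub_one (by exact_mod_cast hm)]

lemma tendsto_descFactorial_div_pow {N : ℕ → ℝ} {u : ℕ → ℕ} (hN : Tendsto N atTop atTop)
    (hu : Tendsto (fun m => (u m : ℝ) / N m) atTop (𝓝 x)) (j : ℕ) :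
    Tendsto (fun m => ((u m).descFactorial j : ℝ) / N m ^ j) atTop (𝓝 (x ^ j)) := by
  induction j with
  | zero => simp
  | succ j ih =>
    have hlim := ih.mul (hu.sub (tendsto_const_nhds (x := (j : ℝ)).div_atTop hN))
    rw [sub_zero, ← pow_succ] at hlim
    refine hlim.congr fun m => ?_
    rw [← descPochhammer_eval_eq_descFactorial ℝ, ← descPochhammer_eval_eq_descFactorial ℝ,
      descPochhammer_succ_eval, ← sub_div, div_mul_div_comm, pow_succ]

lemma scaled_blockWeight_eq_tsum {m : ℕ} (hm : 0 < m) (α : ℝ) (i : ℕ) :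
    (m : ℝ) ^ α / m.factorial * blockWeight α m i
      = ∑' j : ℕ, (-1 : ℝ) ^ j * (i.descFactorial j / ((m : ℝ) ^ α) ^ j / j.factorial)
        * normPochhammer ((j + 1) * α) m := by
  have hm' : (0 : ℝ) < m := by exact_mod_cast hm
  rw [tsum_eq_sum (s := Finset.range (i + 1)) fun j hj => ?_, blockWeight, Finset.mul_sum]
  · refine Finset.sum_congr rfl fun j _ => ?_
    have hpow : (m : ℝ) ^ ((j + 1) * α) = ((m : ℝ) ^ α) ^ j * (m : ℝ) ^ α := by
      rw [← pow_succ, ← Real.rpow_mul_natCast hm'.le, mul_comm]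
      push_cast
      rfl
    rw [normPochhammer, hpow, Nat.descFactorial_eq_factorial_mul_choose]
    push_cast
    field_simp
  · rw [Nat.descFactorial_eq_zero_iff_lt.2 (by simpa using hj)]
    simp

lemma tendsto_scaled_blockWeight (h0 : 0 < α) (h1 : α < 1) {u : ℕ → ℕ}
    (hu : Tendsto (fun m : ℕ => (u m : ℝ) / (m : ℝ) ^ α) atTop (𝓝 x)) :
    Tendsto (fun m : ℕ => (m : ℝ) ^ α / m.factorial * blockWeight α m (u m)) atTop
      (𝓝 (wrightDensity α x)) := by
  have hN := tendsto_natCast_rpow_atTop h0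
  have hx : x < |x| + 1 := by linarith [le_abs_self x]
  have hlim : Tendsto (fun m : ℕ => ∑' j : ℕ, (-1 : ℝ) ^ j
      * ((u m).descFactorial j / ((m : ℝ) ^ α) ^ j / j.factorial)
      * normPochhammer ((j + 1) * α) m) atTop (𝓝 (wrightDensity α x)) := by
    rw [wrightDensity_eq_tsum]
    refine tendsto_tsum_of_dominated_convergence
      (summable_pow_div_factorial_mul_pochhammerBound h1 (by positivity : 0 < |x| + 1))
      (fun j => (((tendsto_descFactorial_div_pow hN hu j).div_const _).const_mul _).mul
        (tendsto_normPochhammer _)) ?_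
    filter_upwards [hu.eventually_lt_const hx] with m hm j
    rw [norm_mul, norm_mul, norm_pow, norm_neg, norm_one, one_pow, one_mul,
      Real.norm_of_nonneg (by positivity)]
    refine mul_le_mul ?_ (abs_normPochhammer_le_pochhammerBound h0.le h1.le j m)
      (norm_nonneg _) (by positivity)
    gcongr
    calc ((u m).descFactorial j : ℝ) / ((m : ℝ) ^ α) ^ j
        ≤ (u m : ℝ) ^ j / ((m : ℝ) ^ α) ^ j := by
          gcongr
          exact_mod_cast Nat.descFactorial_le_pow _ _
      _ = ((u m : ℝ) / (m : ℝ) ^ α) ^ j := (div_pow _ _ _).symm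
      _ ≤ (|x| + 1) ^ j := by gcongr
  refine hlim.congr' ?_
  filter_upwards [eventually_gt_atTop 0] with m hm using (scaled_blockWeight_eq_tsum hm α _).symm

lemma eventually_scaled_blockWeight_pos (h0 : 0 < α) (h1 : α < 1) :
    ∀ᶠ m : ℕ in atTop, ∀ i ≤ m, 0 < (m : ℝ) ^ α / m.factorial * blockWeight α m i := by
  filter_upwards [eventually_gt_atTop 0] with m hm i hi
  have := blockWeight_pos h0 h1 hi
  positivity

lemma wrightDensity_nonneg (h0 : 0 < α) (h1 : α < 1) (hx : 0 ≤ x) : 0 ≤ wrightDensity α x :=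
  nonneg_of_tendsto
    (a := fun m i => (m : ℝ) ^ α / m.factorial * blockWeight α m i) hx
    (tendsto_natCast_rpow_atTop h0) (tendsto_natCast_rpow_div_self h1)
    (eventually_scaled_blockWeight_pos h0 h1) fun _ hu => tendsto_scaled_blockWeight h0 h1 hu

lemma logConcaveOn'_wrightDensity (h0 : 0 < α) (h1 : α < 1)
    (hlc : ∀ᶠ m in atTop, ∀ i, LogConcaveSeqAt (blockWeight α m) (i + 1)) :
    LogConcaveOn' (wrightDensity α) (Set.Ici 0) := by
  refine logConcaveOn'_Ici_of_tendsto
    (a := fun m i => (m : ℝ) ^ α / m.factorial * blockWeight α m i)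
    (tendsto_natCast_rpow_atTop h0) (tendsto_natCast_rpow_div_self h1)
    (eventually_scaled_blockWeight_pos h0 h1) ?_
    fun x u hu => tendsto_scaled_blockWeight h0 h1 hu
  filter_upwards [hlc] with m hm i
  have := mul_le_mul_of_nonneg_left (hm i) (sq_nonneg ((m : ℝ) ^ α / m.factorial))
  rw [LogConcaveSeqAt]
  linear_combination this

end ScalingLimit

section SecondOrderNecessity

variable {f : ℝ → ℝ} {S : Set ℝ} {c : ℕ → ℝ}

lemma LogConcaveOn'.mul_le_sq_midpoint {x y : ℝ} (hf : LogConcaveOn' f S)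
    (hnn : ∀ z ∈ S, 0 ≤ f z) (hx : x ∈ S) (hy : y ∈ S) : f x * f y ≤ f ((x + y) / 2) ^ 2 := by
  have h := hf x hx y hy (1 / 2) ⟨by norm_num, by norm_num⟩
  rw [show (1 - 1 / 2) * x + 1 / 2 * y = (x + y) / 2 by ring,
    show (1 : ℝ) - 1 / 2 = 1 / 2 by norm_num, ← Real.sqrt_eq_rpow, ← Real.sqrt_eq_rpow,
    ← Real.sqrt_mul (hnn x hx)] at h
  exact (Real.sqrt_le_left ((Real.sqrt_nonneg _).trans h)).1 h

lemma tendsto_tsum_mul_pow (hc : Summable fun j => ‖c j‖) :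
    Tendsto (fun x : ℝ => ∑' j, c j * x ^ j) (𝓝 0) (𝓝 (c 0)) := by
  have hlim : ∑' j, c j * (0 : ℝ) ^ j = c 0 := by
    rw [tsum_eq_single 0 fun j hj => by simp [hj]]
    simp
  rw [← hlim]
  refine tendsto_tsum_of_dominated_convergence hc
    (fun j => ((continuous_pow j).tendsto 0).const_mul (c j)) ?_
  filter_upwards [Metric.closedBall_mem_nhds (0 : ℝ) one_pos] with x hx j
  rw [norm_mul, norm_pow]
  exact mul_le_of_le_one_right (norm_nonneg _)
    (pow_le_one₀ (norm_nonneg x) (mem_closedBall_zero_iff.1 hx))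

lemma tsum_mul_pow_eq_add_sq_mul (hc : Summable fun j => ‖c j‖) {x : ℝ}
    (hx : x ∈ Set.Icc (0 : ℝ) 1) :
    ∑' j, c j * x ^ j = c 0 + c 1 * x + x ^ 2 * ∑' j, c (j + 2) * x ^ j := by
  have hs : Summable fun j => c j * x ^ j := by
    refine Summable.of_norm_bounded hc fun j => ?_
    rw [norm_mul, norm_pow, Real.norm_of_nonneg hx.1]
    exact mul_le_of_le_one_right (norm_nonneg _) (pow_le_one₀ hx.1 hx.2)
  rw [← hs.sum_add_tsum_nat_add 2, ← tsum_mul_left]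
  simp only [Finset.sum_range_succ, Finset.sum_range_zero, pow_zero, pow_one, mul_one, zero_add]
  congr 2
  ext j
  ring

lemma LogConcaveOn'.two_mul_coeff_mul_le_sq (hf : LogConcaveOn' f (Set.Icc 0 1))
    (hnn : ∀ x ∈ Set.Icc (0 : ℝ) 1, 0 ≤ f x) (hc : Summable fun j => ‖c j‖)
    (hfc : ∀ x ∈ Set.Icc (0 : ℝ) 1, f x = ∑' j, c j * x ^ j) : 2 * (c 0 * c 2) ≤ c 1 ^ 2 := by
  let r : ℝ → ℝ := fun x => ∑' j, c (j + 2) * x ^ j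
  have hexp {x : ℝ} (hx : x ∈ Set.Icc (0 : ℝ) 1) : f x = c 0 + c 1 * x + x ^ 2 * r x :=
    (hfc x hx).trans (tsum_mul_pow_eq_add_sq_mul hc hx)
  have hr : Tendsto r (𝓝 0) (𝓝 (c 2)) :=
    tendsto_tsum_mul_pow (c := fun j => c (j + 2)) ((summable_nat_add_iff 2).2 hc)
  have hid : Tendsto (fun x : ℝ => x) (𝓝[>] 0) (𝓝 0) := nhdsWithin_le_nhds
  have hr1 : Tendsto r (𝓝[>] 0) (𝓝 (c 2)) := hr.comp hid
  have hr2 : Tendsto (fun x => r (2 * x)) (𝓝[>] 0) (𝓝 (c 2)) :=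
    hr.comp (by simpa using hid.const_mul 2)
  -- Divide `f 0 * f (2 * x) ≤ f x ^ 2` by `x ^ 2`: the terms of order `0` and `1` cancel.
  have hle : ∀ᶠ x in 𝓝[>] (0 : ℝ), 4 * c 0 * r (2 * x)
      ≤ c 1 ^ 2 + 2 * c 0 * r x + x * (2 * c 1 * r x + x * r x ^ 2) := by
    filter_upwards [Ioc_mem_nhdsGT (show (0 : ℝ) < 1 / 2 by norm_num)] with x ⟨hx0, hx1⟩
    have hmid := hf.mul_le_sq_midpoint hnn (x := 0) (y := 2 * x) (by simp)
      ⟨by linarith, by linarith⟩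
    rw [show (0 + 2 * x) / 2 = x by ring, hexp (x := 0) (by simp),
      hexp (x := 2 * x) ⟨by linarith, by linarith⟩,
      hexp (x := x) ⟨by linarith, by linarith⟩] at hmid
    refine le_of_mul_le_mul_left ?_ (pow_pos hx0 2)
    linear_combination hmid
  have hlim := le_of_tendsto_of_tendsto (hr2.const_mul (4 * c 0))
    (((hr1.const_mul (2 * c 0)).const_add (c 1 ^ 2)).add
      (hid.mul ((hr1.const_mul (2 * c 1)).add (hid.mul (hr1.pow 2))))) hle
  linarith

end SecondOrderNecessity

/-- The Turán difference `a₁² - a₀ a₂` of the first three coefficients of the Mittag-Leffler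
density; its zero in `(0, 1)` is the critical exponent. -/
noncomputable def turanGap (α : ℝ) : ℝ :=
  recipGammaCoeff α 1 ^ 2 - recipGammaCoeff α 0 * recipGammaCoeff α 2

/-- The ratio of the two sides of `PochhammerTuran α (k + 2)`. -/
noncomputable def turanRatio (α : ℝ) (k : ℕ) : ℝ :=
  oneSubPochhammer (2 * α) (k + 2) ^ 2
    / (oneSubPochhammer α (k + 2) * oneSubPochhammer (3 * α) (k + 2))
    * ((k + 1) / (k + 1 - α ^ 2))

section TuranGap

variable {α αs : ℝ}

lemma turanGap_eq (α : ℝ) :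
    turanGap α = 1 / Real.Gamma (1 - 2 * α) ^ 2
      - 1 / (Real.Gamma (1 - α) * Real.Gamma (1 - 3 * α)) := by
  simp only [turanGap, recipGammaCoeff, one_div, mul_inv, inv_pow]
  norm_num

lemma continuous_recipGammaCoeff (k : ℕ) : Continuous fun α => recipGammaCoeff α k := by
  have hinv : Continuous fun s : ℝ => (Real.Gamma s)⁻¹ := by
    refine (Complex.continuous_re.comp (Complex.differentiable_one_div_Gamma.continuous.comp
      Complex.continuous_ofReal)).congr fun s => ?_
    rw [Function.comp_apply, Function.comp_apply, Complex.Gamma_ofReal, ← Complex.ofReal_inv,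
      Complex.ofReal_re]
  exact hinv.comp (by fun_prop)

lemma continuous_turanGap : Continuous turanGap :=
  ((continuous_recipGammaCoeff 1).pow 2).sub
    ((continuous_recipGammaCoeff 0).mul (continuous_recipGammaCoeff 2))

lemma turanGap_two_thirds_pos : 0 < turanGap (2 / 3) := by
  have hpole : recipGammaCoeff (2 / 3) 2 = 0 := by
    rw [recipGammaCoeff, inv_eq_zero, Real.Gamma_eq_zero_iff]
    exact ⟨1, by norm_num⟩
  have hne : recipGammaCoeff (2 / 3) 1 ≠ 0 := by
    refine inv_ne_zero (Real.Gamma_ne_zero fun n hn => ?_)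
    have : (3 * n : ℝ) = 1 := by linear_combination 3 * hn
    have : 3 * n = 1 := by exact_mod_cast this
    omega
  rw [turanGap, hpole, mul_zero, sub_zero]
  positivity

lemma turanGap_nonneg_of_logConcaveOn' (h0 : 0 < α) (h1 : α < 1)
    (hlc : LogConcaveOn' (wrightDensity α) (Set.Ici 0)) : 0 ≤ turanGap α := by
  let c : ℕ → ℝ := fun j => (-1) ^ j / j.factorial * recipGammaCoeff α j
  have hc : Summable fun j => ‖c j‖ := by
    refine Summable.of_nonneg_of_le (fun j => norm_nonneg _) (fun j => ?_)
      (summable_pow_div_factorial_mul_pochhammerBound h1 one_pos)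
    rw [norm_mul, norm_div, norm_pow, norm_neg, norm_one, Real.norm_natCast]
    exact mul_le_mul_of_nonneg_left (abs_recipGammaCoeff_le_pochhammerBound h0.le h1.le j)
      (by positivity)
  have hseries (x : ℝ) : wrightDensity α x = ∑' j, c j * x ^ j := by
    rw [wrightDensity_eq_tsum]
    exact tsum_congr fun j => by ring
  have hcoeff : 2 * (c 0 * c 2) ≤ c 1 ^ 2 :=
    LogConcaveOn'.two_mul_coeff_mul_le_sq (fun x hx y hy => hlc x hx.1 y hy.1)
      (fun x hx => wrightDensity_nonneg h0 h1 hx.1) hc fun x _ => hseries x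
  norm_num [c] at hcoeff
  rw [turanGap]
  linear_combination hcoeff

lemma recipGammaCoeff_zero_mul_two_pos (h0 : 2 / 3 < α) (h1 : α < 1) :
    0 < recipGammaCoeff α 0 * recipGammaCoeff α 2 := by
  have hpos : 0 < Real.Gamma (1 - 3 * α + 1 + 1) := Real.Gamma_pos_of_pos (by linarith)
  rw [Real.Gamma_add_one (by linarith), Real.Gamma_add_one (by linarith), ← mul_assoc] at hpos
  have hfac : 0 < (1 - 3 * α + 1) * (1 - 3 * α) :=
    mul_pos_of_neg_of_neg (by linarith) (by linarith)
  have hΓ₃ : 0 < Real.Gamma (1 - 3 * α) := (mul_pos_iff_of_pos_left hfac).1 hpos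
  have hΓ₁ : 0 < Real.Gamma (1 - α) := Real.Gamma_pos_of_pos (by linarith)
  have hcoeff : recipGammaCoeff α 0 * recipGammaCoeff α 2
      = (Real.Gamma (1 - α))⁻¹ * (Real.Gamma (1 - 3 * α))⁻¹ := by
    norm_num [recipGammaCoeff]
  rw [hcoeff]
  exact mul_pos (inv_pos.2 hΓ₁) (inv_pos.2 hΓ₃)

lemma oneSubPochhammer_mul_pos (h0 : 2 / 3 < α) (h1 : α < 1) (k : ℕ) :
    0 < oneSubPochhammer α (k + 2) * oneSubPochhammer (3 * α) (k + 2) :=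
  mul_pos (oneSubPochhammer_pos_of_lt_one h1 _)
    (oneSubPochhammer_pos_of_lt_three (by linarith) (by linarith) (by omega))

lemma sq_div_mul_mul_div_le {n : ℝ} (h0 : 0 < α) (h1 : α < 1) (hn : 3 ≤ n) :
    (n - 2 * α) ^ 2 / ((n - α) * (n - 3 * α)) * ((n - 1) / (n - 1 - α ^ 2))
      ≤ (n - 2) / (n - 2 - α ^ 2) := by
  have hα : α ^ 2 < 1 := by nlinarith
  have hnα : 0 < n - α := by linarith
  have hn3α : 0 < n - 3 * α := by linarith
  have hn1 : 0 < n - 1 - α ^ 2 := by linarith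
  have hn2 : 0 < n - 2 - α ^ 2 := by linarith
  have hfactors : (n - 1) * (n - 2 - α ^ 2) ≤ (n - α) * (n - 3 * α) := by
    have : 0 ≤ (1 - α) * ((3 - α) * n - 2 * (1 + α)) :=
      mul_nonneg (by linarith) (by nlinarith)
    linear_combination this
  rw [div_mul_div_comm, div_le_div_iff₀ (by positivity) hn2]
  linear_combination α ^ 2 * hfactors

lemma turanRatio_succ (α : ℝ) (k : ℕ) :
    turanRatio α (k + 1) = oneSubPochhammer (2 * α) (k + 2) ^ 2
      / (oneSubPochhammer α (k + 2) * oneSubPochhammer (3 * α) (k + 2))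
      * ((k + 3 - 2 * α) ^ 2 / ((k + 3 - α) * (k + 3 - 3 * α))
        * ((k + 3 - 1) / (k + 3 - 1 - α ^ 2))) := by
  have hk : ((k + 2 : ℕ) : ℝ) + 1 = k + 3 := by push_cast; ring
  have hk' : ((k + 1 : ℕ) : ℝ) + 1 = k + 3 - 1 := by push_cast; ring
  rw [turanRatio, show k + 1 + 2 = k + 2 + 1 by ring]
  simp only [oneSubPochhammer_succ _ (k + 2), hk, hk']
  field_simp

lemma antitone_turanRatio (h0 : 2 / 3 < α) (h1 : α < 1) : Antitone (turanRatio α) := by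
  refine antitone_nat_of_succ_le fun k => ?_
  have hpos := oneSubPochhammer_mul_pos h0 h1 k
  have hstep := sq_div_mul_mul_div_le (n := k + 3) (by linarith) h1 (by simp)
  rw [turanRatio_succ, turanRatio, show (k : ℝ) + 1 = k + 3 - 2 by ring]
  gcongr

lemma normPochhammer_sq_div_mul (α : ℝ) {m : ℕ} (hm : 0 < m) :
    normPochhammer (2 * α) m ^ 2 / (normPochhammer α m * normPochhammer (3 * α) m)
      = oneSubPochhammer (2 * α) m ^ 2
        / (oneSubPochhammer α m * oneSubPochhammer (3 * α) m) := by
  have hm' : (0 : ℝ) < m := by exact_mod_cast hm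
  have hpow : ((m : ℝ) ^ (2 * α)) ^ 2 = (m : ℝ) ^ α * (m : ℝ) ^ (3 * α) := by
    rw [← Real.rpow_mul_natCast hm'.le, ← Real.rpow_add hm']
    congr 1
    push_cast
    ring
  have hscale : (m : ℝ) ^ α * (m : ℝ) ^ (3 * α) / (m.factorial : ℝ) ^ 2 ≠ 0 := by positivity
  rw [← mul_div_mul_left (oneSubPochhammer (2 * α) m ^ 2) _ hscale]
  simp only [normPochhammer]
  congr 1
  · rw [← hpow]
    ring
  · ring

lemma tendsto_turanRatio (h0 : 2 / 3 < α) (h1 : α < 1) :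
    Tendsto (turanRatio α) atTop
      (𝓝 (recipGammaCoeff α 1 ^ 2 / (recipGammaCoeff α 0 * recipGammaCoeff α 2))) := by
  have hnorm (k : ℕ) : Tendsto (normPochhammer ((k + 1) * α)) atTop (𝓝 (recipGammaCoeff α k)) :=
    tendsto_normPochhammer _
  have hpoch := ((((hnorm 1).pow 2).div ((hnorm 0).mul (hnorm 2))
    (recipGammaCoeff_zero_mul_two_pos h0 h1).ne').comp (tendsto_add_atTop_nat 2))
  have hcorr : Tendsto (fun k : ℕ => ((k : ℝ) + 1) / (k + 1 - α ^ 2)) atTop (𝓝 1) := by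
    refine ((tendsto_natCast_div_add_atTop (-α ^ 2)).comp (tendsto_add_atTop_nat 1)).congr
      fun k => ?_
    rw [Function.comp_apply]
    push_cast
    ring
  rw [← mul_one (recipGammaCoeff α 1 ^ 2 / _)]
  refine (hpoch.mul hcorr).congr fun k => ?_
  rw [turanRatio, ← normPochhammer_sq_div_mul α (by omega : 0 < k + 2)]
  norm_num

lemma pochhammerTuran_of_turanGap_nonneg (h0 : 2 / 3 < α) (h1 : α < 1) (hgap : 0 ≤ turanGap α)
    {m : ℕ} (hm : 2 ≤ m) : PochhammerTuran α m := by
  obtain ⟨k, rfl⟩ := Nat.exists_eq_add_of_le' hm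
  have hlim : 1 ≤ recipGammaCoeff α 1 ^ 2 / (recipGammaCoeff α 0 * recipGammaCoeff α 2) :=
    (one_le_div (recipGammaCoeff_zero_mul_two_pos h0 h1)).2 (sub_nonneg.1 hgap)
  have hratio : 1 ≤ turanRatio α k :=
    hlim.trans ((antitone_turanRatio h0 h1).le_of_tendsto (tendsto_turanRatio h0 h1) k)
  have hcorr : 0 < (k : ℝ) + 1 - α ^ 2 := by nlinarith [k.cast_nonneg (α := ℝ)]
  rw [turanRatio, div_mul_div_comm,
    one_le_div (mul_pos (oneSubPochhammer_mul_pos h0 h1 k) hcorr)] at hratio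
  rw [PochhammerTuran]
  push_cast
  linear_combination hratio

lemma turanGap_neg (h0 : 1933 / 2500 < α) (h1 : α < 1) : turanGap α < 0 := by
  by_contra! hgap
  have hT := pochhammerTuran_of_turanGap_nonneg (by linarith) h1 hgap (by norm_num : 2 ≤ 6)
  exact h0.not_ge (le_of_pochhammerTuran_six h1 hT)

lemma le_of_turanGap_nonneg (h0 : 0 < α) (h1 : α < 1)
    (huniq : ∀ a ∈ Set.Ioo (0 : ℝ) 1, turanGap a = 0 → a = αs) (hgap : 0 ≤ turanGap α) :
    α ≤ αs := by
  have hα : α ≤ 1933 / 2500 := by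
    by_contra! hα
    exact hgap.not_gt (turanGap_neg hα h1)
  obtain ⟨c, ⟨hαc, hc⟩, hc0⟩ := intermediate_value_Icc' (by linarith : α ≤ 4 / 5)
    continuous_turanGap.continuousOn ⟨(turanGap_neg (by norm_num) (by norm_num)).le, hgap⟩
  rwa [← huniq c ⟨by linarith, by linarith⟩ hc0]

lemma turanGap_nonneg_of_le (h0 : 2 / 3 < α) (h1 : α < 1)
    (huniq : ∀ a ∈ Set.Ioo (0 : ℝ) 1, turanGap a = 0 → a = αs) (hle : α ≤ αs) :
    0 ≤ turanGap α := by
  by_contra! hneg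
  obtain ⟨c, ⟨hc, hcα⟩, hc0⟩ := intermediate_value_Icc' h0.le continuous_turanGap.continuousOn
    ⟨hneg.le, turanGap_two_thirds_pos.le⟩
  obtain rfl : c = α := hcα.antisymm (hle.trans_eq (huniq c ⟨by linarith, by linarith⟩ hc0).symm)
  exact hneg.ne hc0

end TuranGap

/-- Theorem B: for `α ∈ (0,1)`, the Wright density `x ↦ φ(-α, 1-α, -x)` is
log-concave on `[0,∞)` iff `α ≤ α_*`, where `α_*` is the unique solution in `(0,1)`
of `1/Γ(1-2a)² = 1/(Γ(1-a)Γ(1-3a))`. -/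
theorem wright_logConcave_iff (α αs : ℝ) (hα : α ∈ Set.Ioo (0 : ℝ) 1)
    (hαs : αs ∈ Set.Ioo (0 : ℝ) 1)
    (heq : 1 / Real.Gamma (1 - 2 * αs) ^ 2
      = 1 / (Real.Gamma (1 - αs) * Real.Gamma (1 - 3 * αs)))
    (huniq : ∀ a ∈ Set.Ioo (0 : ℝ) 1,
      1 / Real.Gamma (1 - 2 * a) ^ 2
        = 1 / (Real.Gamma (1 - a) * Real.Gamma (1 - 3 * a)) → a = αs) :
    LogConcaveOn' (fun x => wright (-α) (1 - α) (-x)) (Set.Ici 0) ↔ α ≤ αs := by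
  obtain ⟨h0, h1⟩ := hα
  have hunique : ∀ a ∈ Set.Ioo (0 : ℝ) 1, turanGap a = 0 → a = αs := fun a ha hgap =>
    huniq a ha (sub_eq_zero.1 (turanGap_eq a ▸ hgap))
  change LogConcaveOn' (wrightDensity α) (Set.Ici 0) ↔ α ≤ αs
  constructor
  · intro hlc
    exact le_of_turanGap_nonneg h0 h1 hunique (turanGap_nonneg_of_logConcaveOn' h0 h1 hlc)
  · intro hle
    refine logConcaveOn'_wrightDensity h0 h1 ?_
    filter_upwards [eventually_ge_atTop 6] with m hm i
    rcases le_or_gt α (2 / 3) with hα | hα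
    · exact logConcaveSeqAt_blockWeight_of_le_five_sevenths h0 (by linarith) (by omega) (i + 1)
    · have hgap : 0 ≤ turanGap α := turanGap_nonneg_of_le hα h1 hunique hle
      exact logConcaveSeqAt_blockWeight_of_pochhammerTuran hα h1
        (fun _ => pochhammerTuran_of_turanGap_nonneg hα h1 hgap) hm i
end

section
/- For every α ∈ (0,1) and β ≥ 0, the function f(x) = φ(-α, β, -x) is unimodal on [0,∞): there exists m ≥ 0 such that f is nondecreasing on [0,m] and nonincreasing on [m,∞). Moreover, if β ≥ α then one may take m = 0 (f is nonincreasing on all of [0,∞)), while if β < α then every such m is strictly positive (f is not nonincreasing on [0,∞)). -/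
/-!
Write `f_β x = φ(-α, β, -x)`, so that `f_β' = -f_{β - α}` and unimodality of `f_β` amounts to a
single sign change of `f_{β - α}` on `(0, ∞)`. For `γ < 1` the function `f_γ` has a Hankel-type
integral over the line `Im w = π` with integrand `Im (exp (y (e ^ w - e ^ (α w)) + (1 - γ) w))`,
where `x = y ^ (1 - α)`. Deforming this line to the curve `0 < Im w = θ < π` on which
`e ^ w - e ^ (α w)` is real gives
`π y ^ (γ - 1) f_γ(y ^ (1 - α)) = ∫ θ in (0, π), exp (-y E(θ)) h(θ)`, with the increasing
Kanter–Zolotarev function `E > 0`. The sign of `h` is that of a cosine whose phase can be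
controlled: `h ≥ 0` when `0 ≤ γ < 1`, and `h` passes at most once from nonnegative to negative when
`-1 ≤ γ < 0`. In the first case `f_γ ≥ 0` and `f_γ` decays faster than any power; in the second case
`f_γ`, like a Laplace transform of `h`, changes sign at most once, from negative to positive. The
recurrence `f_γ(x) = γ f_{γ + 1}(x) + α x f_{γ + 1 - α}(x)` carries the decay, and with it the
positivity, to larger parameters.
-/

namespace MWright

open Real Set Filter Topology MeasureTheory Asymptotics
open scoped Nat

/-! ### Real analysis -/

theorem le_of_hasDerivAt_nonneg_of_tendsto {F F' : ℝ → ℝ} {a b A B : ℝ} (hab : a < b)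
    (hF : ∀ t ∈ Ioo a b, HasDerivAt F (F' t) t) (hF' : ∀ t ∈ Ioo a b, 0 ≤ F' t)
    (hA : Tendsto F (𝓝[>] a) (𝓝 A)) (hB : Tendsto F (𝓝[<] b) (𝓝 B)) : A ≤ B := by
  have hmono : MonotoneOn F (Ioo a b) := by
    refine monotoneOn_of_hasDerivWithinAt_nonneg (f' := F') (convex_Ioo a b)
      (fun t ht ↦ (hF t ht).continuousAt.continuousWithinAt) ?_ ?_ <;> rw [interior_Ioo]
    exacts [fun t ht ↦ (hF t ht).hasDerivWithinAt, hF']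
  obtain ⟨c, hc⟩ := exists_between hab
  have hAc : A ≤ F c := le_of_tendsto hA <| by
    filter_upwards [Ioo_mem_nhdsGT hc.1] with t ht
    exact hmono ⟨ht.1, ht.2.trans hc.2⟩ hc ht.2.le
  have hcB : F c ≤ B := ge_of_tendsto hB <| by
    filter_upwards [Ioo_mem_nhdsLT hc.2] with t ht
    exact hmono hc ⟨hc.1.trans ht.1, ht.2⟩ ht.1.le
  exact hAc.trans hcB

theorem exists_threshold_of_single_sign_change {ι : Type*} [LinearOrder ι] {s : Set ι}
    {E h : ι → ℝ} (hE : MonotoneOn E s) (hbdd : BddBelow (E '' s))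
    (hcross : ∀ a ∈ s, ∀ b ∈ s, a < b → 0 ≤ h b → 0 ≤ h a) (hneg : ∃ b ∈ s, h b < 0) :
    ∃ c, ∀ a ∈ s, (E a < c → 0 ≤ h a) ∧ (c < E a → h a ≤ 0) := by
  refine ⟨sInf (E '' {b ∈ s | h b < 0}), fun a ha ↦ ⟨fun hlt ↦ ?_, fun hlt ↦ ?_⟩⟩
  · by_contra! hlt'
    exact notMem_of_lt_csInf hlt (hbdd.mono (image_mono (sep_subset _ _))) ⟨a, ⟨ha, hlt'⟩, rfl⟩
  · obtain ⟨_, ⟨b, ⟨hb, hhb⟩, rfl⟩, hba⟩ := exists_lt_of_csInf_lt (Nonempty.image E hneg) hlt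
    by_contra! hpos
    exact hhb.not_ge <| hcross b hb a ha (hE.reflect_lt hb ha hba) hpos.le

theorem summable_pow_div_factorial_mul_abs_succ {c : ℕ → ℝ}
    (hc : ∀ r : ℝ, Summable fun n : ℕ ↦ r ^ n / n ! * c n) {r : ℝ} (hr : 1 ≤ r) :
    Summable fun n : ℕ ↦ r ^ n / n ! * |c (n + 1)| := by
  have : 0 < r := one_pos.trans_le hr
  refine Summable.of_nonneg_of_le (fun n ↦ by positivity) (fun n ↦ ?_)
    ((summable_nat_add_iff 1).2 (hc (2 * r)).abs)
  have hn : ((n + 1 : ℕ) : ℝ) ≤ 2 ^ (n + 1) := mod_cast Nat.lt_two_pow_self.le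
  have hpow : r ^ n ≤ r ^ (n + 1) := pow_le_pow_right₀ hr n.le_succ
  rw [abs_mul, abs_of_pos (by positivity : 0 < (2 * r) ^ (n + 1) / ((n + 1)! : ℝ))]
  refine mul_le_mul_of_nonneg_right ?_ (abs_nonneg _)
  rw [Nat.factorial_succ, mul_pow, div_le_div_iff₀ (by positivity) (by positivity)]
  push_cast at hn ⊢
  calc r ^ n * ((n + 1) * n !) = (n + 1) * r ^ n * n ! := by ring
    _ ≤ 2 ^ (n + 1) * r ^ (n + 1) * n ! := by gcongr

theorem hasDerivAt_tsum_pow_div_factorial {c : ℕ → ℝ}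
    (hc : ∀ r : ℝ, Summable fun n : ℕ ↦ r ^ n / n ! * c n) (x : ℝ) :
    HasDerivAt (fun x : ℝ ↦ ∑' n : ℕ, x ^ n / n ! * c n) (∑' n : ℕ, x ^ n / n ! * c (n + 1)) x := by
  let X := |x| + 1
  have hX1 : 1 ≤ X := le_add_of_nonneg_left (abs_nonneg x)
  have hX0 : 0 < X := one_pos.trans_le hX1
  have hterm (n : ℕ) (y : ℝ) : (n + 1 : ℕ) * y ^ (n + 1 - 1) / (n + 1)! * c (n + 1)
      = y ^ n / n ! * c (n + 1) := by
    rw [Nat.factorial_succ, Nat.add_sub_cancel]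
    push_cast
    field_simp
  have hsum := summable_pow_div_factorial_mul_abs_succ hc hX1
  have hderiv := hasDerivAt_tsum_of_isPreconnected (𝕜 := ℝ) (t := Metric.ball 0 X)
    (y₀ := 0) (y := x)
    (u := fun n : ℕ ↦ n.casesOn 0 fun m ↦ X ^ m / m ! * |c (m + 1)|)
    (g := fun n y ↦ y ^ n / n ! * c n) (g' := fun n y ↦ n * y ^ (n - 1) / n ! * c n)
    ((summable_nat_add_iff 1).1 hsum) Metric.isOpen_ball (convex_ball _ _).isPreconnected
    (fun n y _ ↦ ((hasDerivAt_pow n y).div_const _).mul_const _) ?_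
    (Metric.mem_ball_self hX0) (hc 0) (by simp [X])
  · refine hderiv.congr_deriv ?_
    rw [tsum_eq_zero_add']
    · simp only [hterm, Nat.cast_zero, zero_mul, zero_div, zero_add]
    · simp only [hterm]
      refine Summable.of_norm_bounded hsum fun n ↦ ?_
      rw [norm_mul, norm_div, norm_pow, Real.norm_natCast]
      simp only [norm_eq_abs]
      gcongr
      exact le_add_of_nonneg_right zero_le_one
  · rintro (_ | n) y hy
    · simp
    · have hyX : ‖y‖ ≤ X := (mem_ball_zero_iff.1 hy).le
      change _ ≤ X ^ n / n ! * ‖c (n + 1)‖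
      rw [hterm, norm_mul, norm_div, norm_pow, Real.norm_natCast]
      gcongr

/-! ### The Gamma function -/

theorem inv_Gamma_eq_self_mul (z : ℝ) : (Gamma z)⁻¹ = z * (Gamma (z + 1))⁻¹ := by
  rcases eq_or_ne z 0 with rfl | hz
  · simp [Gamma_zero]
  · rw [Gamma_add_one hz, mul_inv, mul_inv_cancel_left₀ hz]

theorem inv_Gamma_eq_sin_mul_Gamma {z : ℝ} (hz : z < 1) :
    (Gamma z)⁻¹ = sin (π * z) / π * Gamma (1 - z) := by
  have hpos : Gamma (1 - z) ≠ 0 := (Gamma_pos_of_pos (sub_pos.2 hz)).ne'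
  have hrefl := Gamma_mul_Gamma_one_sub z
  rw [← inv_div, ← hrefl, mul_inv, inv_mul_cancel_right₀ hpos]

theorem abs_inv_Gamma_le {z : ℝ} (hz : z < 1) : |(Gamma z)⁻¹| ≤ Gamma (1 - z) := by
  have hpos : 0 < Gamma (1 - z) := Gamma_pos_of_pos (sub_pos.2 hz)
  have hsin : |sin (π * z) / π| ≤ 1 := by
    rw [abs_div, abs_of_pos pi_pos, div_le_one pi_pos]
    exact (abs_sin_le_one _).trans (by linarith [pi_gt_three])
  rw [inv_Gamma_eq_sin_mul_Gamma hz, abs_mul, abs_of_pos hpos]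
  exact mul_le_of_le_one_left hpos.le hsin

theorem continuous_inv_Gamma : Continuous fun z : ℝ ↦ (Gamma z)⁻¹ := by
  have h : Continuous fun z : ℝ ↦ ((Complex.Gamma z)⁻¹).re := Complex.continuous_re.comp
    (Complex.differentiable_one_div_Gamma.continuous.comp Complex.continuous_ofReal)
  refine h.congr fun z ↦ ?_
  rw [Complex.Gamma_ofReal, ← Complex.ofReal_inv, Complex.ofReal_re]

theorem exists_abs_inv_Gamma_le (B : ℝ) :
    ∃ C, ∀ z ≤ B, ∀ t, 2 ≤ t → 1 - z ≤ t → |(Gamma z)⁻¹| ≤ C * Gamma t := by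
  obtain ⟨C, hC⟩ := (isCompact_Icc (a := -1) (b := B)).exists_bound_of_continuousOn
    continuous_inv_Gamma.continuousOn
  refine ⟨max C 1, fun z hz t ht hzt ↦ ?_⟩
  have hmono := Gamma_strictMonoOn_Ici.monotoneOn
  have hone : 1 ≤ Gamma t := Gamma_two ▸ hmono self_mem_Ici ht ht
  rcases le_or_gt (-1) z with hz' | hz'
  · calc |(Gamma z)⁻¹| ≤ C := hC z ⟨hz', hz⟩
      _ ≤ max C 1 := le_max_left _ _
      _ ≤ max C 1 * Gamma t := le_mul_of_one_le_right (by positivity) hone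
  · calc |(Gamma z)⁻¹| ≤ Gamma (1 - z) := abs_inv_Gamma_le (by linarith)
      _ ≤ Gamma t := hmono (mem_Ici.2 (by linarith)) ht hzt
      _ ≤ max C 1 * Gamma t := le_mul_of_one_le_left (by positivity) (le_max_right _ _)

/-! ### Gamma integrals in exponential coordinates -/

theorem integrable_exp_neg_mul_exp_add_mul {a b : ℝ} (ha : 0 < a) (hb : 0 < b) :
    Integrable fun v : ℝ ↦ exp (-b * exp v + a * v) := by
  have h := integrableOn_rpow_mul_exp_neg_mul_rpow (p := 1) (s := a - 1) (b := b)
    (by linarith) one_pos hb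
  rw [← Real.range_exp, ← image_univ, integrableOn_image_iff_integrableOn_abs_deriv_smul
    MeasurableSet.univ (fun x _ ↦ (hasDerivAt_exp x).hasDerivWithinAt) exp_injective.injOn,
    integrableOn_univ] at h
  refine h.congr (Eventually.of_forall fun v ↦ ?_)
  simp only [abs_exp, smul_eq_mul, rpow_one]
  rw [← exp_mul, ← exp_add, ← exp_add]
  ring_nf

theorem integral_exp_neg_mul_exp_add_mul {a b : ℝ} (ha : 0 < a) (hb : 0 < b) :
    ∫ v : ℝ, exp (-b * exp v + a * v) = b ^ (-a) * Gamma a := by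
  have h := integral_rpow_mul_exp_neg_mul_Ioi ha hb
  rw [← Real.range_exp, ← image_univ, integral_image_eq_integral_abs_deriv_smul
    MeasurableSet.univ (fun x _ ↦ (hasDerivAt_exp x).hasDerivWithinAt) exp_injective.injOn,
    setIntegral_univ] at h
  rw [rpow_neg hb.le, ← inv_rpow hb.le, ← one_div, ← h]
  congr with v
  simp only [abs_exp, smul_eq_mul]
  rw [← exp_mul, ← exp_add, ← exp_add]
  ring_nf

-- Young's inequality, in the form of the convexity of `exp` between `v` and a large `s`.
theorem exists_mul_exp_mul_le {α : ℝ} (hα : α ∈ Ico (0 : ℝ) 1) (c : ℝ) {ε : ℝ} (hε : 0 < ε) :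
    ∃ C, ∀ v, c * exp (α * v) ≤ C + ε * exp v := by
  have hα' : 0 < 1 - α := sub_pos.2 hα.2
  set s := log ((|c| + 1) / ε) / (1 - α)
  have hs : ε * exp ((1 - α) * s) = |c| + 1 := by
    rw [mul_div_cancel₀ _ hα'.ne', exp_log (by positivity), mul_div_cancel₀ _ hε.ne']
  refine ⟨ε * exp s, fun v ↦ ?_⟩
  have hconv : exp (α * v + (1 - α) * s) ≤ α * exp v + (1 - α) * exp s :=
    convexOn_exp.2 (mem_univ v) (mem_univ s) hα.1 hα'.le (by ring)
  calc c * exp (α * v) ≤ (|c| + 1) * exp (α * v) := by gcongr; linarith [le_abs_self c]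
    _ = ε * exp (α * v + (1 - α) * s) := by rw [← hs, exp_add]; ring
    _ ≤ ε * (α * exp v + (1 - α) * exp s) := by gcongr
    _ ≤ ε * (1 * exp v + 1 * exp s) := by gcongr <;> linarith [hα.1, hα.2]
    _ = ε * exp s + ε * exp v := by ring

theorem integrable_exp_neg_mul_exp_add_mul_exp {α : ℝ} (hα : α ∈ Ico (0 : ℝ) 1) {b k : ℝ}
    (hb : 0 < b) (c : ℝ) (hk : 0 < k) :
    Integrable fun v : ℝ ↦ exp (-b * exp v + c * exp (α * v) + k * v) := by
  obtain ⟨C, hC⟩ := exists_mul_exp_mul_le hα c (half_pos hb)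
  refine ((integrable_exp_neg_mul_exp_add_mul hk (half_pos hb)).const_mul (exp C)).mono'
    (by fun_prop) (Eventually.of_forall fun v ↦ ?_)
  rw [norm_of_nonneg (exp_pos _).le, ← exp_add]
  exact exp_le_exp.2 (by linarith [hC v])

-- The terms are the integrals of the terms of the exponential series of `X * exp (α * v)`.
theorem summable_pow_div_factorial_mul_Gamma {α : ℝ} (hα : α ∈ Ico (0 : ℝ) 1) {a X : ℝ}
    (ha : 0 < a) (hX : 0 ≤ X) : Summable fun n : ℕ ↦ X ^ n / n ! * Gamma (a + α * n) := by
  have hterm (n : ℕ) : X ^ n / n ! * Gamma (a + α * n)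
      = ∫ v : ℝ, X ^ n / n ! * exp (-1 * exp v + (a + α * n) * v) := by
    have := mul_nonneg hα.1 n.cast_nonneg
    rw [integral_const_mul, integral_exp_neg_mul_exp_add_mul (by positivity) one_pos, one_rpow,
      one_mul]
  have hint (n : ℕ) : Integrable fun v : ℝ ↦ X ^ n / n ! * exp (-1 * exp v + (a + α * n) * v) := by
    have := mul_nonneg hα.1 n.cast_nonneg
    exact (integrable_exp_neg_mul_exp_add_mul (by positivity) one_pos).const_mul _
  refine summable_of_sum_range_le (c := ∫ v : ℝ, exp (-1 * exp v + X * exp (α * v) + a * v))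
    (fun n ↦ ?_) fun N ↦ ?_
  · rw [hterm]
    exact integral_nonneg fun v ↦ by positivity
  · simp only [hterm]
    rw [← integral_finsetSum _ fun n _ ↦ hint n]
    refine integral_mono (integrable_finsetSum _ fun n _ ↦ hint n)
      (integrable_exp_neg_mul_exp_add_mul_exp hα one_pos X ha) fun v ↦ ?_
    calc ∑ n ∈ Finset.range N, X ^ n / n ! * exp (-1 * exp v + (a + α * n) * v)
        = (∑ n ∈ Finset.range N, (X * exp (α * v)) ^ n / n !) * exp (-1 * exp v + a * v) := by
          rw [Finset.sum_mul]
          refine Finset.sum_congr rfl fun n _ ↦ ?_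
          rw [mul_pow, ← exp_nat_mul, mul_div_right_comm, mul_assoc, ← exp_add]
          ring_nf
      _ ≤ exp (X * exp (α * v)) * exp (-1 * exp v + a * v) := by
          gcongr
          exact sum_le_exp_of_nonneg (by positivity) N
      _ = exp (-1 * exp v + X * exp (α * v) + a * v) := by rw [← exp_add]; ring_nf

/-! ### The M-Wright function -/

/-- The M-Wright function `x ↦ φ(-α, β, -x)`, proportional to the density of `M_{α,β}`. -/
noncomputable def mWright (α β x : ℝ) : ℝ := wright (-α) β (-x)

section Series

variable {α : ℝ}

theorem mWright_eq_tsum (α β x : ℝ) :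
    mWright α β x = ∑' n : ℕ, (-x) ^ n / n ! * (Gamma (β - α * n))⁻¹ :=
  tsum_congr fun n ↦ by rw [div_mul_eq_div_div, div_eq_mul_inv (_ / _), neg_mul, ← sub_eq_add_neg]

theorem exists_abs_inv_Gamma_sub_mul_le (hα : 0 ≤ α) (B : ℝ) :
    ∃ C, ∀ β ∈ Icc (-|B|) |B|, ∀ n : ℕ, |(Gamma (β - α * n))⁻¹| ≤ C * Gamma (2 + |B| + α * n) := by
  obtain ⟨C, hC⟩ := exists_abs_inv_Gamma_le |B|
  refine ⟨C, fun β hβ n ↦ ?_⟩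
  have hn : 0 ≤ α * n := by positivity
  have hB := abs_nonneg B
  exact hC _ (by linarith [hβ.2]) _ (by linarith) (by linarith [hβ.1])

theorem hasSum_mWright (hα : α ∈ Ioo (0 : ℝ) 1) (β x : ℝ) :
    HasSum (fun n : ℕ ↦ (-x) ^ n / n ! * (Gamma (β - α * n))⁻¹) (mWright α β x) := by
  obtain ⟨C, hC⟩ := exists_abs_inv_Gamma_sub_mul_le hα.1.le β
  rw [mWright_eq_tsum]
  refine (Summable.of_norm_bounded ((summable_pow_div_factorial_mul_Gamma
    (Ioo_subset_Ico_self hα) (by positivity : 0 < 2 + |β|) (abs_nonneg x)).mul_left C)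
    fun n ↦ ?_).hasSum
  rw [norm_mul, norm_div, norm_pow, norm_neg, Real.norm_natCast, mul_left_comm]
  exact mul_le_mul_of_nonneg_left (hC β ⟨neg_abs_le β, le_abs_self β⟩ n) (by positivity)

theorem continuous_mWright_param (hα : α ∈ Ioo (0 : ℝ) 1) (x : ℝ) :
    Continuous fun β ↦ mWright α β x := by
  refine continuous_iff_continuousAt.2 fun β ↦ ?_
  set B := |β| + 1
  have hB : |B| = B := abs_of_pos (by positivity)
  obtain ⟨C, hC⟩ := exists_abs_inv_Gamma_sub_mul_le hα.1.le B
  rw [hB] at hC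
  have hcont : ContinuousOn (fun β ↦ mWright α β x) (Icc (-B) B) := by
    simp only [mWright_eq_tsum]
    refine continuousOn_tsum (fun n ↦ (continuous_const.mul
      (continuous_inv_Gamma.comp (by fun_prop))).continuousOn)
      ((summable_pow_div_factorial_mul_Gamma (Ioo_subset_Ico_self hα)
        (by positivity : 0 < 2 + B) (abs_nonneg x)).mul_left C) fun n b hb ↦ ?_
    rw [norm_mul, norm_div, norm_pow, norm_neg, Real.norm_natCast, mul_left_comm]
    exact mul_le_mul_of_nonneg_left (hC b hb n) (by positivity)
  exact hcont.continuousAt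
    (Icc_mem_nhds (by linarith [neg_abs_le β]) (by linarith [le_abs_self β]))

theorem hasDerivAt_mWright (hα : α ∈ Ioo (0 : ℝ) 1) (β x : ℝ) :
    HasDerivAt (mWright α β) (-(mWright α (β - α) x)) x := by
  have hsum (r : ℝ) : Summable fun n : ℕ ↦ r ^ n / n ! * (Gamma (β - α * n))⁻¹ := by
    simpa using (hasSum_mWright hα β (-r)).summable
  have hderiv := (hasDerivAt_tsum_pow_div_factorial hsum (-x)).comp x (hasDerivAt_neg x)
  rw [mul_neg_one] at hderiv
  rw [mWright_eq_tsum]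
  refine (hderiv.congr_deriv ?_).congr_of_eventuallyEq
    (Eventually.of_forall fun y ↦ mWright_eq_tsum α β y)
  congr! 6 with n
  push_cast
  ring

theorem mWright_eq_add (hα : α ∈ Ioo (0 : ℝ) 1) (β x : ℝ) :
    mWright α β x = β * mWright α (β + 1) x + α * x * mWright α (β + 1 - α) x := by
  have hshift : HasSum (fun n : ℕ ↦ (-α * n) * ((-x) ^ n / n ! * (Gamma (β + 1 - α * n))⁻¹))
      (α * x * mWright α (β + 1 - α) x) := by
    rw [← hasSum_nat_add_iff' 1]
    simp only [Finset.range_one, Finset.sum_singleton, Nat.cast_zero, mul_zero, zero_mul, sub_zero]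
    refine ((hasSum_mWright hα (β + 1 - α) x).mul_left (α * x)).congr_fun fun n ↦ ?_
    rw [Nat.factorial_succ, show β + 1 - α * (n + 1 : ℕ) = β + 1 - α - α * n by push_cast; ring]
    push_cast
    field_simp
    ring
  refine (hasSum_mWright hα β x).unique
    ((((hasSum_mWright hα (β + 1) x).mul_left β).add hshift).congr_fun fun n ↦ ?_)
  rw [inv_Gamma_eq_self_mul (β - α * n), sub_add_eq_add_sub]
  ring

theorem mWright_zero_right (α β : ℝ) : mWright α β 0 = (Gamma β)⁻¹ := by
  rw [mWright_eq_tsum, tsum_eq_single 0 fun n hn ↦ by simp [hn]]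
  simp

end Series

/-! ### Primitives of entire functions -/

theorem exists_primitive_eq_setIntegral_Iic {G : ℂ → ℂ} (hG : Differentiable ℂ G) {g : ℝ → ℝ}
    (hle : ∀ z, ‖G z‖ ≤ g z.re) (hmono : Monotone g) (hint : ∀ u, IntegrableOn g (Iic u))
    (hlim : Tendsto g atBot (𝓝 0)) :
    ∃ P : ℂ → ℂ, (∀ z, HasDerivAt P (G z) z) ∧
      ∀ θ u : ℝ, P (u + θ * Complex.I) = ∫ v in Iic u, G (v + θ * Complex.I) := by
  obtain ⟨P, hP⟩ := hG.isExactOn_univ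
  replace hP (z : ℂ) : HasDerivAt P (G z) z := hP z (mem_univ z)
  have hline (θ v : ℝ) :
      HasDerivAt (fun v : ℝ ↦ P (v + θ * Complex.I)) (G (v + θ * Complex.I)) v := by
    simpa [Function.comp_def] using
      (hP (v + θ * Complex.I)).comp v ((hasDerivAt_id v).ofReal_comp.add_const (θ * Complex.I))
  have hintG (θ u : ℝ) : IntegrableOn (fun v : ℝ ↦ G (v + θ * Complex.I)) (Iic u) :=
    Integrable.mono' (hint u) (hG.continuous.comp (by fun_prop)).aestronglyMeasurable
      (Eventually.of_forall fun v ↦ (hle _).trans_eq (by simp))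
  have hdiff (θ : ℝ) : Tendsto (fun v : ℝ ↦ P (v + θ * Complex.I) - P (v + (0 : ℝ) * Complex.I))
      atBot (𝓝 0) := by
    refine squeeze_zero_norm (fun v ↦ ?_) (by simpa using hlim.mul_const |θ|)
    have hmem (t : ℝ) : (v + t * Complex.I : ℂ) ∈ {z : ℂ | z.re ≤ v} := by simp
    simpa using (convex_halfSpace_re_le v).norm_image_sub_le_of_norm_hasDerivWithin_le
      (fun z _ ↦ (hP z).hasDerivWithinAt) (fun z hz ↦ (hle z).trans (hmono hz)) (hmem 0) (hmem θ)
  obtain ⟨l, hl⟩ : ∃ l, Tendsto (fun v : ℝ ↦ P (v + (0 : ℝ) * Complex.I)) atBot (𝓝 l) :=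
    ⟨_, tendsto_limUnder_of_hasDerivAt_of_integrableOn_Iic (a := 0) (fun v _ ↦ hline 0 v)
      (hintG 0 0)⟩
  refine ⟨fun z ↦ P z - l, fun z ↦ (hP z).sub_const l, fun θ u ↦ ?_⟩
  rw [integral_Iic_of_hasDerivAt_of_tendsto' (fun v _ ↦ hline θ v) (hintG θ u)
    (by simpa using (hdiff θ).add hl)]

/-! ### The Hankel-type kernel -/

/-- The integrand, in the variable `w = log z`, of the Hankel integral of the M-Wright function at
`x = y ^ (1 - α)` with parameter `1 - k`, rescaled so that the contour does not depend on `y`. -/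
noncomputable def kernel (α y k : ℝ) (w : ℂ) : ℂ :=
  Complex.exp (y * (Complex.exp w - Complex.exp (α * w)) + k * w)

section Kernel

variable {α y k : ℝ}

theorem differentiable_kernel (α y k : ℝ) : Differentiable ℂ (kernel α y k) := by
  unfold kernel
  fun_prop

theorem kernel_ofReal_add_mul_I (α y k v θ : ℝ) : kernel α y k (v + θ * Complex.I) =
    Complex.exp ⟨y * (exp v * cos θ - exp (α * v) * cos (α * θ)) + k * v,
      y * (exp v * sin θ - exp (α * v) * sin (α * θ)) + k * θ⟩ := by
  have hmul : (α : ℂ) * (v + θ * Complex.I) = (α * v : ℝ) + (α * θ : ℝ) * Complex.I := by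
    push_cast
    ring
  rw [kernel, hmul, Complex.exp_add (v : ℂ), Complex.exp_add ((α * v : ℝ) : ℂ), Complex.exp_mul_I,
    Complex.exp_mul_I, Complex.mk_eq_add_mul_I]
  push_cast
  ring_nf

theorem norm_kernel (α y k v θ : ℝ) : ‖kernel α y k (v + θ * Complex.I)‖ =
    exp (y * (exp v * cos θ - exp (α * v) * cos (α * θ)) + k * v) := by
  rw [kernel_ofReal_add_mul_I, Complex.norm_exp]

theorem im_kernel (α y k v θ : ℝ) : (kernel α y k (v + θ * Complex.I)).im =
    exp (y * (exp v * cos θ - exp (α * v) * cos (α * θ)) + k * v) *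
      sin (y * (exp v * sin θ - exp (α * v) * sin (α * θ)) + k * θ) := by
  rw [kernel_ofReal_add_mul_I, Complex.exp_im]

theorem norm_kernel_le (hy : 0 ≤ y) (z : ℂ) :
    ‖kernel α y k z‖ ≤ exp (y * (exp z.re + exp (α * z.re)) + k * z.re) := by
  nth_rw 1 [← Complex.re_add_im z]
  rw [norm_kernel, sub_eq_add_neg, ← mul_neg]
  gcongr
  · exact mul_le_of_le_one_right (exp_pos _).le (cos_le_one _)
  · exact mul_le_of_le_one_right (exp_pos _).le (neg_le.2 (neg_one_le_cos _))

theorem monotone_kernel_bound (hα : 0 ≤ α) (hy : 0 ≤ y) (hk : 0 ≤ k) :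
    Monotone fun v : ℝ ↦ exp (y * (exp v + exp (α * v)) + k * v) := by
  intro u v huv
  dsimp only
  gcongr

theorem integrableOn_Iic_kernel_bound (hα : 0 ≤ α) (hy : 0 ≤ y) (hk : 0 < k) (u : ℝ) :
    IntegrableOn (fun v : ℝ ↦ exp (y * (exp v + exp (α * v)) + k * v)) (Iic u) := by
  refine Integrable.mono' ((integrableOn_exp_mul_Iic hk u).const_mul
    (exp (y * (exp u + exp (α * u))))) (by fun_prop) ?_
  refine (ae_restrict_iff' measurableSet_Iic).2 (Eventually.of_forall fun v (hv : v ≤ u) ↦ ?_)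
  rw [norm_of_nonneg (exp_pos _).le, ← exp_add]
  gcongr

theorem tendsto_kernel_bound_atBot (hα : 0 < α) (hk : 0 < k) :
    Tendsto (fun v : ℝ ↦ exp (y * (exp v + exp (α * v)) + k * v)) atBot (𝓝 0) :=
  tendsto_exp_atBot.comp <| ((tendsto_exp_atBot.add (tendsto_exp_atBot.comp
    (tendsto_id.const_mul_atBot hα))).const_mul y).add_atBot (tendsto_id.const_mul_atBot hk)

theorem integrableOn_Iic_kernel (hα : 0 ≤ α) (hy : 0 ≤ y) (hk : 0 < k) (θ u : ℝ) :
    IntegrableOn (fun v : ℝ ↦ kernel α y k (v + θ * Complex.I)) (Iic u) :=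
  Integrable.mono' (integrableOn_Iic_kernel_bound hα hy hk u)
    ((differentiable_kernel α y k).continuous.comp (by fun_prop)).aestronglyMeasurable
    (Eventually.of_forall fun v ↦ (norm_kernel_le hy _).trans_eq (by simp))

theorem hasSum_im_kernel_pi (α y k v : ℝ) :
    HasSum (fun n : ℕ ↦ (-y) ^ n / n ! * sin (π * (k + α * n)) *
      exp (-y * exp v + (k + α * n) * v)) (kernel α y k (v + π * Complex.I)).im := by
  set w : ℂ := v + π * Complex.I
  have hw : Complex.exp w = -exp v := by simp [w, Complex.exp_add]
  have hseries := (NormedSpace.expSeries_div_hasSum_exp (-(y : ℂ) * Complex.exp (α * w))).mul_left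
    (Complex.exp (y * Complex.exp w + k * w))
  rw [← Complex.exp_eq_exp_ℂ, ← Complex.exp_add] at hseries
  have hkernel : kernel α y k w
      = Complex.exp (y * Complex.exp w + k * w + -(y : ℂ) * Complex.exp (α * w)) := by
    rw [kernel]
    ring_nf
  rw [hkernel]
  refine (Complex.imCLM.hasSum hseries).congr_fun fun n ↦ ?_
  have hterm : Complex.exp (y * Complex.exp w + k * w) *
      ((-(y : ℂ) * Complex.exp (α * w)) ^ n / n !) = (((-y) ^ n / n ! : ℝ) : ℂ) *
      Complex.exp ⟨-y * exp v + (k + α * n) * v, π * (k + α * n)⟩ := by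
    have hexp : (⟨-y * exp v + (k + α * n) * v, π * (k + α * n)⟩ : ℂ)
        = (y * Complex.exp w + k * w) + n * (α * w) := by
      rw [hw, Complex.mk_eq_add_mul_I]
      push_cast
      ring
    rw [hexp, Complex.exp_add _ (n * (α * w)), mul_pow, ← Complex.exp_nat_mul]
    push_cast
    ring
  rw [hterm, Complex.imCLM_apply, Complex.im_ofReal_mul, Complex.exp_im]
  ring

/-- The M-Wright function with parameter `1 - k`, in the scale `x = y ^ (1 - α)` and with the
normalization that makes it a Laplace transform in `y`. -/
noncomputable def laplaceProfile (α k y : ℝ) : ℝ := y ^ (-k) * mWright α (1 - k) (y ^ (1 - α))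

theorem pow_mul_rpow_neg_add_mul (α k : ℝ) (hy : 0 < y) (n : ℕ) :
    y ^ n * y ^ (-(k + α * n)) = y ^ (-k) * (y ^ (1 - α)) ^ n := by
  rw [← rpow_natCast, ← rpow_natCast, ← rpow_add hy, ← rpow_mul hy.le, ← rpow_add hy]
  ring_nf

theorem summable_integral_norm_kernel_terms (hα : α ∈ Ioo (0 : ℝ) 1) (hy : 0 < y) (hk : 0 < k) :
    Summable fun n : ℕ ↦ ∫ v : ℝ, ‖(-y) ^ n / n ! * sin (π * (k + α * n)) *
      exp (-y * exp v + (k + α * n) * v)‖ := by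
  refine Summable.of_nonneg_of_le (fun n ↦ integral_nonneg fun v ↦ norm_nonneg _) (fun n ↦ ?_)
    ((summable_pow_div_factorial_mul_Gamma (Ioo_subset_Ico_self hα) hk
      (by positivity : 0 ≤ y ^ (1 - α))).mul_left (y ^ (-k)))
  have hpos : 0 < k + α * n := by have := hα.1; positivity
  have := Gamma_pos_of_pos hpos
  simp only [norm_mul, norm_of_nonneg (exp_pos _).le]
  rw [integral_const_mul, integral_exp_neg_mul_exp_add_mul hpos hy, norm_div, norm_pow,
    norm_neg, Real.norm_natCast, norm_of_nonneg hy.le]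
  calc y ^ n / n ! * ‖sin (π * (k + α * n))‖ * (y ^ (-(k + α * n)) * Gamma (k + α * n))
      ≤ y ^ n / n ! * 1 * (y ^ (-(k + α * n)) * Gamma (k + α * n)) := by
        gcongr
        exact abs_sin_le_one _
    _ = y ^ (-k) * ((y ^ (1 - α)) ^ n / n ! * Gamma (k + α * n)) := by
        linear_combination (Gamma (k + α * n) / n !) * pow_mul_rpow_neg_add_mul α k hy n

theorem integral_im_kernel_pi (hα : α ∈ Ioo (0 : ℝ) 1) (hy : 0 < y) (hk : 0 < k) :
    ∫ v : ℝ, (kernel α y k (v + π * Complex.I)).im = π * laplaceProfile α k y := by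
  have hpos (n : ℕ) : 0 < k + α * n := by have := hα.1; positivity
  have hexp (n : ℕ) := integral_exp_neg_mul_exp_add_mul (hpos n) hy
  have hsum := hasSum_integral_of_summable_integral_norm (μ := (volume : Measure ℝ))
    (F := fun (n : ℕ) (v : ℝ) ↦ (-y) ^ n / n ! * sin (π * (k + α * n)) *
      exp (-y * exp v + (k + α * n) * v))
    (fun n ↦ (integrable_exp_neg_mul_exp_add_mul (hpos n) hy).const_mul _)
    (summable_integral_norm_kernel_terms hα hy hk)
  simp only [fun v ↦ (hasSum_im_kernel_pi α y k v).tsum_eq] at hsum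
  refine hsum.unique ((((hasSum_mWright hα (1 - k) (y ^ (1 - α))).mul_left (y ^ (-k))).mul_left
    π).congr_fun fun n ↦ ?_)
  have hsin : sin (π * (1 - k - α * n)) = sin (π * (k + α * n)) := by
    rw [← sin_pi_sub]
    ring_nf
  rw [integral_const_mul, hexp, inv_Gamma_eq_sin_mul_Gamma (by linarith [hpos n]), hsin,
    show 1 - (1 - k - α * n) = k + α * n by ring, neg_pow y, neg_pow (y ^ (1 - α))]
  have := pi_ne_zero
  field_simp
  linear_combination (sin (π * (k + α * n)) * Gamma (k + α * n)) *
    pow_mul_rpow_neg_add_mul α k hy n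

end Kernel

/-! ### The contour on which the exponent is real -/

/-- The ratio `sin (a θ) / sin θ`, through which the contour and its exponent are expressed. -/
noncomputable def sinRatio (a θ : ℝ) : ℝ := sin (a * θ) / sin θ

/-- The real part of the point with imaginary part `θ ∈ (0, π)` on the contour where
`e ^ w - e ^ (α w)` is real. -/
noncomputable def contourRe (α θ : ℝ) : ℝ := log (sinRatio α θ) / (1 - α)

/-- The derivative of `contourRe α` on `(0, π)`. -/
noncomputable def contourSlope (α θ : ℝ) : ℝ := (α * cot (α * θ) - cot θ) / (1 - α)

/-- The Kanter–Zolotarev function, which is the value of `e ^ (α w) - e ^ w` at the point of the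
contour with imaginary part `θ`. -/
noncomputable def kanter (α θ : ℝ) : ℝ := exp (α * contourRe α θ) * sinRatio (1 - α) θ

/-- The density `Im (e ^ (k w) w')` at the point `w` of the contour with imaginary part `θ`. -/
noncomputable def contourDensity (α k θ : ℝ) : ℝ :=
  exp (k * contourRe α θ) * (contourSlope α θ * sin (k * θ) + cos (k * θ))

/-- The imaginary part of the integral of the kernel over the horizontal half-line that ends at the
point of the contour with imaginary part `θ`. -/
noncomputable def contourIntegral (α y k θ : ℝ) : ℝ :=
  ∫ v in Iic (contourRe α θ), (kernel α y k (v + θ * Complex.I)).im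

section Contour

variable {α a y k θ : ℝ}

theorem sin_mul_pos (ha : a ∈ Ioo (0 : ℝ) 1) (hθ : θ ∈ Ioo 0 π) : 0 < sin (a * θ) :=
  sin_pos_of_pos_of_lt_pi (mul_pos ha.1 hθ.1) ((mul_lt_of_lt_one_left hθ.1 ha.2).trans hθ.2)

theorem sinRatio_pos (ha : a ∈ Ioo (0 : ℝ) 1) (hθ : θ ∈ Ioo 0 π) : 0 < sinRatio a θ :=
  div_pos (sin_mul_pos ha hθ) (sin_pos_of_mem_Ioo hθ)

theorem hasDerivAt_sinRatio (ha : a ∈ Ioo (0 : ℝ) 1) (hθ : θ ∈ Ioo 0 π) :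
    HasDerivAt (sinRatio a) (sinRatio a θ * (a * cot (a * θ) - cot θ)) θ := by
  have hsin := sin_pos_of_mem_Ioo hθ
  have hsina := sin_mul_pos ha hθ
  refine (((hasDerivAt_const_mul a).sin).div (hasDerivAt_sin θ) hsin.ne').congr_deriv ?_
  rw [sinRatio, cot_eq_cos_div_sin, cot_eq_cos_div_sin]
  field_simp

theorem tendsto_sinRatio_zero (a : ℝ) : Tendsto (sinRatio a) (𝓝[>] 0) (𝓝 a) := by
  have hslope (b : ℝ) : Tendsto (fun t ↦ t⁻¹ * sin (b * t)) (𝓝[>] 0) (𝓝 b) := by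
    simpa using (hasDerivAt_const_mul (x := (0 : ℝ)) b).sin.tendsto_slope_zero_right
  have hdiv := (hslope a).div (hslope 1) one_ne_zero
  rw [div_one] at hdiv
  refine hdiv.congr' ?_
  filter_upwards [self_mem_nhdsWithin] with t ht
  rw [Pi.div_apply, one_mul, mul_div_mul_left _ _ (inv_ne_zero (mem_Ioi.1 ht).ne'), sinRatio]

theorem tendsto_sinRatio_pi (ha : a ∈ Ioo (0 : ℝ) 1) :
    Tendsto (sinRatio a) (𝓝[<] π) atTop := by
  have hsina : 0 < sin (a * π) := sin_pos_of_pos_of_lt_pi (mul_pos ha.1 pi_pos)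
    (mul_lt_of_lt_one_left pi_pos ha.2)
  have hnum : Tendsto (fun t ↦ sin (a * t)) (𝓝[<] π) (𝓝 (sin (a * π))) :=
    (by fun_prop : Continuous fun t ↦ sin (a * t)).continuousWithinAt
  have hden : Tendsto sin (𝓝[<] π) (𝓝[>] 0) := by
    refine tendsto_nhdsWithin_iff.2 ⟨sin_pi ▸ continuous_sin.continuousWithinAt, ?_⟩
    filter_upwards [Ioo_mem_nhdsLT pi_pos] with t ht using sin_pos_of_mem_Ioo ht
  exact (hnum.pos_mul_atTop hsina hden.inv_tendsto_nhdsGT_zero)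

theorem hasDerivAt_contourRe (hα : α ∈ Ioo (0 : ℝ) 1) (hθ : θ ∈ Ioo 0 π) :
    HasDerivAt (contourRe α) (contourSlope α θ) θ := by
  have hpos := sinRatio_pos hα hθ
  refine (((hasDerivAt_sinRatio hα hθ).log hpos.ne').div_const _).congr_deriv ?_
  rw [mul_div_cancel_left₀ _ hpos.ne', contourSlope]

theorem tendsto_contourRe_zero (hα : 0 < α) :
    Tendsto (contourRe α) (𝓝[>] 0) (𝓝 (log α / (1 - α))) :=
  ((tendsto_sinRatio_zero α).log hα.ne').div_const _

theorem tendsto_contourRe_pi (hα : α ∈ Ioo (0 : ℝ) 1) :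
    Tendsto (contourRe α) (𝓝[<] π) atTop :=
  (tendsto_log_atTop.comp (tendsto_sinRatio_pi hα)).atTop_div_const (sub_pos.2 hα.2)

theorem exp_contourRe (hα : α ∈ Ioo (0 : ℝ) 1) (hθ : θ ∈ Ioo 0 π) :
    exp (contourRe α θ) = exp (α * contourRe α θ) * sinRatio α θ := by
  have hexp : exp ((1 - α) * contourRe α θ) = sinRatio α θ := by
    rw [contourRe, mul_div_cancel₀ _ (sub_pos.2 hα.2).ne', exp_log (sinRatio_pos hα hθ)]
  rw [← hexp, ← exp_add]
  ring_nf

theorem exp_contourRe_mul_sin (hα : α ∈ Ioo (0 : ℝ) 1) (hθ : θ ∈ Ioo 0 π) :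
    exp (contourRe α θ) * sin θ = exp (α * contourRe α θ) * sin (α * θ) := by
  rw [exp_contourRe hα hθ, sinRatio, mul_assoc, div_mul_cancel₀ _ (sin_pos_of_mem_Ioo hθ).ne']

theorem exp_contourRe_mul_cos (hα : α ∈ Ioo (0 : ℝ) 1) (hθ : θ ∈ Ioo 0 π) :
    exp (contourRe α θ) * cos θ - exp (α * contourRe α θ) * cos (α * θ) = -kanter α θ := by
  have hsin := sin_pos_of_mem_Ioo hθ
  rw [exp_contourRe hα hθ, kanter, sinRatio, sinRatio, one_sub_mul, sin_sub]
  field_simp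
  ring

theorem kernel_contour (hα : α ∈ Ioo (0 : ℝ) 1) (hθ : θ ∈ Ioo 0 π) (y k : ℝ) :
    kernel α y k (contourRe α θ + θ * Complex.I)
      = Complex.exp ⟨-y * kanter α θ + k * contourRe α θ, k * θ⟩ := by
  rw [kernel_ofReal_add_mul_I, exp_contourRe_mul_sin hα hθ, exp_contourRe_mul_cos hα hθ]
  simp

theorem exists_kernel_primitive (hα : 0 < α) (hy : 0 ≤ y) (hk : 0 < k) :
    ∃ P : ℂ → ℂ, (∀ z, HasDerivAt P (kernel α y k z) z) ∧ ∀ θ u : ℝ,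
      (P (u + θ * Complex.I)).im = ∫ v in Iic u, (kernel α y k (v + θ * Complex.I)).im := by
  obtain ⟨P, hP, hint⟩ := exists_primitive_eq_setIntegral_Iic (differentiable_kernel α y k)
    (norm_kernel_le hy) (monotone_kernel_bound hα.le hy hk.le)
    (integrableOn_Iic_kernel_bound hα.le hy hk) (tendsto_kernel_bound_atBot hα hk)
  refine ⟨P, hP, fun θ u ↦ ?_⟩
  rw [hint]
  exact (integral_im (𝕜 := ℂ) (integrableOn_Iic_kernel hα.le hy hk θ u)).symm

theorem hasDerivAt_contourIntegral (hα : α ∈ Ioo (0 : ℝ) 1) (hy : 0 ≤ y) (hk : 0 < k)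
    (hθ : θ ∈ Ioo 0 π) :
    HasDerivAt (contourIntegral α y k) (exp (-y * kanter α θ) * contourDensity α k θ) θ := by
  obtain ⟨P, hP, hint⟩ := exists_kernel_primitive hα.1 hy hk
  have hpath : HasDerivAt (fun t : ℝ ↦ (contourRe α t + t * Complex.I : ℂ))
      ⟨contourSlope α θ, 1⟩ θ := by
    refine ((hasDerivAt_contourRe hα hθ).ofReal_comp.add
      ((hasDerivAt_id θ).ofReal_comp.mul_const Complex.I)).congr_deriv ?_
    rw [Complex.mk_eq_add_mul_I]
  have him := Complex.imCLM.hasFDerivAt.comp_hasDerivAt θ ((hP _).comp θ hpath)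
  refine (him.congr_deriv ?_).congr_of_eventuallyEq
    (Eventually.of_forall fun t ↦ (hint t (contourRe α t)).symm)
  rw [kernel_contour hα hθ, Complex.imCLM_apply, Complex.mul_im, Complex.exp_re, Complex.exp_im,
    contourDensity, exp_add]
  ring

theorem tendsto_contourIntegral_zero (hα : 0 < α) (hy : 0 ≤ y) (hk : 0 < k) :
    Tendsto (contourIntegral α y k) (𝓝[>] 0) (𝓝 0) := by
  obtain ⟨P, hP, hint⟩ := exists_kernel_primitive hα hy hk
  set u := log α / (1 - α)
  have hpath : Tendsto (fun t : ℝ ↦ (contourRe α t + t * Complex.I : ℂ)) (𝓝[>] 0)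
      (𝓝 (u + (0 : ℝ) * Complex.I)) :=
    ((Complex.continuous_ofReal.tendsto u).comp (tendsto_contourRe_zero hα)).add
      ((Complex.continuous_ofReal.continuousWithinAt (x := 0)).tendsto.mul_const _)
  have him : (P (u + (0 : ℝ) * Complex.I)).im = 0 := by
    rw [hint]
    simp only [im_kernel]
    simp
  have hlim := (Complex.continuous_im.tendsto _).comp ((hP _).continuousAt.tendsto.comp hpath)
  rw [him] at hlim
  exact hlim.congr fun t ↦ hint t (contourRe α t)

theorem abs_im_kernel_le_of_cos_le (hy : 0 ≤ y) (hθ : cos θ ≤ -(1 / 2)) (v : ℝ) :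
    |(kernel α y k (v + θ * Complex.I)).im| ≤
      exp (-(y / 2) * exp v + y * exp (α * v) + k * v) := by
  refine (Complex.abs_im_le_norm _).trans ?_
  rw [norm_kernel]
  have hcos : exp v * cos θ ≤ exp v * -(1 / 2) := by gcongr
  have hcosα : exp (α * v) * -cos (α * θ) ≤ exp (α * v) :=
    mul_le_of_le_one_right (exp_pos _).le (neg_le.2 (neg_one_le_cos _))
  have := mul_le_mul_of_nonneg_left (add_le_add hcos hcosα) hy
  exact exp_le_exp.2 (by linarith)

theorem tendsto_contourIntegral_pi (hα : α ∈ Ioo (0 : ℝ) 1) (hy : 0 < y) (hk : 0 < k) :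
    Tendsto (contourIntegral α y k) (𝓝[<] π) (𝓝 (π * laplaceProfile α k y)) := by
  have hcont : Continuous fun p : ℝ × ℝ ↦ (kernel α y k (p.1 + p.2 * Complex.I)).im :=
    Complex.continuous_im.comp ((differentiable_kernel α y k).continuous.comp (by fun_prop))
  have hcos : ∀ᶠ θ in 𝓝[<] π, cos θ ≤ -(1 / 2) :=
    continuous_cos.continuousWithinAt.eventually_le_const (by norm_num [cos_pi])
  have hlim := tendsto_integral_filter_of_dominated_convergence (μ := volume)
    (F := fun θ ↦ (Iic (contourRe α θ)).indicator
      fun v : ℝ ↦ (kernel α y k (v + θ * Complex.I)).im)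
    (f := fun v : ℝ ↦ (kernel α y k (v + π * Complex.I)).im) (l := 𝓝[<] π)
    (fun v ↦ exp (-(y / 2) * exp v + y * exp (α * v) + k * v))
    (Eventually.of_forall fun θ ↦ ((hcont.comp (by fun_prop : Continuous fun v ↦ (v, θ)))
      |>.aestronglyMeasurable.indicator measurableSet_Iic)) ?_
    (integrable_exp_neg_mul_exp_add_mul_exp (Ioo_subset_Ico_self hα) (half_pos hy) y hk) ?_
  · rw [integral_im_kernel_pi hα hy hk] at hlim
    exact hlim.congr fun θ ↦ integral_indicator measurableSet_Iic
  · filter_upwards [hcos] with θ hθ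
    exact Eventually.of_forall fun v ↦ (norm_indicator_le_norm_self _ _).trans
      (abs_im_kernel_le_of_cos_le hy.le hθ v)
  · refine Eventually.of_forall fun v ↦ Tendsto.congr' ?_
      (hcont.comp (by fun_prop : Continuous fun θ ↦ (v, θ))).continuousWithinAt.tendsto
    filter_upwards [(tendsto_contourRe_pi hα).eventually_ge_atTop v] with θ hθ
    rw [indicator_of_mem (mem_Iic.2 hθ)]
    rfl

end Contour

/-! ### Monotonicity along the contour -/

section Monotonicity

variable {α a k θ : ℝ}

theorem one_sub_mem_Ioo (hα : α ∈ Ioo (0 : ℝ) 1) : 1 - α ∈ Ioo (0 : ℝ) 1 :=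
  ⟨sub_pos.2 hα.2, sub_lt_self _ hα.1⟩

theorem le_sinRatio (ha : a ∈ Icc (0 : ℝ) 1) (hθ : θ ∈ Ioo 0 π) : a ≤ sinRatio a θ := by
  rw [sinRatio, le_div_iff₀ (sin_pos_of_mem_Ioo hθ)]
  simpa using strictConcaveOn_sin_Icc.concaveOn.2 (left_mem_Icc.2 pi_pos.le)
    (Ioo_subset_Icc_self hθ) (sub_nonneg.2 ha.2) ha.1 (sub_add_cancel 1 a)

theorem cot_le_mul_cot_mul (ha : a ∈ Ioo (0 : ℝ) 1) (hθ : θ ∈ Ioo 0 π) :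
    cot θ ≤ a * cot (a * θ) := by
  have hderiv (t : ℝ) : HasDerivAt (fun t ↦ a * cos (a * t) * sin t - sin (a * t) * cos t)
      ((1 - a ^ 2) * (sin (a * t) * sin t)) t := by
    refine ((((hasDerivAt_const_mul a).cos.const_mul a).mul (hasDerivAt_sin t)).sub
      ((hasDerivAt_const_mul a).sin.mul (hasDerivAt_cos t))).congr_deriv ?_
    ring
  have hmono : MonotoneOn (fun t ↦ a * cos (a * t) * sin t - sin (a * t) * cos t) (Icc 0 π) := by
    refine monotoneOn_of_hasDerivWithinAt_nonneg (convex_Icc _ _)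
      (fun t _ ↦ (hderiv t).continuousAt.continuousWithinAt)
      (fun t _ ↦ (hderiv t).hasDerivWithinAt) fun t ht ↦ ?_
    rw [interior_Icc] at ht
    have hsq : a ^ 2 ≤ 1 := pow_le_one₀ ha.1.le ha.2.le
    exact mul_nonneg (sub_nonneg.2 hsq) (mul_pos (sin_mul_pos ha ht) (sin_pos_of_mem_Ioo ht)).le
  have hnum := hmono (left_mem_Icc.2 pi_pos.le) (Ioo_subset_Icc_self hθ) hθ.1.le
  simp only [mul_zero, sin_zero, zero_mul, sub_zero] at hnum
  have := sin_mul_pos ha hθ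
  rw [cot_eq_cos_div_sin, cot_eq_cos_div_sin, ← mul_div_assoc,
    div_le_div_iff₀ (sin_pos_of_mem_Ioo hθ) this]
  linarith

theorem monotoneOn_sinRatio (ha : a ∈ Ioo (0 : ℝ) 1) : MonotoneOn (sinRatio a) (Ioo 0 π) := by
  refine monotoneOn_of_hasDerivWithinAt_nonneg (convex_Ioo _ _)
    (fun t ht ↦ (hasDerivAt_sinRatio ha ht).continuousAt.continuousWithinAt)
    (fun t ht ↦ (hasDerivAt_sinRatio ha (interior_subset ht)).hasDerivWithinAt) fun t ht ↦ ?_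
  rw [interior_Ioo] at ht
  exact mul_nonneg (sinRatio_pos ha ht).le (sub_nonneg.2 (cot_le_mul_cot_mul ha ht))

theorem monotoneOn_contourRe (hα : α ∈ Ioo (0 : ℝ) 1) : MonotoneOn (contourRe α) (Ioo 0 π) :=
  fun _ hs _ ht hst ↦ div_le_div_of_nonneg_right
    (log_le_log (sinRatio_pos hα hs) (monotoneOn_sinRatio hα hs ht hst)) (sub_pos.2 hα.2).le

theorem monotoneOn_kanter (hα : α ∈ Ioo (0 : ℝ) 1) : MonotoneOn (kanter α) (Ioo 0 π) := by
  intro s hs t ht hst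
  refine mul_le_mul (exp_le_exp.2 (mul_le_mul_of_nonneg_left ?_ hα.1.le))
    (monotoneOn_sinRatio (one_sub_mem_Ioo hα) hs ht hst)
    (sinRatio_pos (one_sub_mem_Ioo hα) hs).le (exp_pos _).le
  exact monotoneOn_contourRe hα hs ht hst

theorem exists_pos_le_kanter (hα : α ∈ Ioo (0 : ℝ) 1) :
    ∃ E > 0, ∀ θ ∈ Ioo 0 π, E ≤ kanter α θ := by
  have hα' := one_sub_mem_Ioo hα
  refine ⟨exp (α * (log α / (1 - α))) * (1 - α), mul_pos (exp_pos _) hα'.1, fun θ hθ ↦ ?_⟩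
  refine mul_le_mul (exp_le_exp.2 (mul_le_mul_of_nonneg_left ?_ hα.1.le))
    (le_sinRatio (Ioo_subset_Icc_self hα') hθ) hα'.1.le (exp_pos _).le
  exact div_le_div_of_nonneg_right
    (log_le_log hα.1 (le_sinRatio (Ioo_subset_Icc_self hα) hθ)) hα'.1.le

theorem cot_mul_sub_cot (ha : a ∈ Ioo (0 : ℝ) 1) (hθ : θ ∈ Ioo 0 π) :
    cot (a * θ) - cot θ = sinRatio (1 - a) θ / sin (a * θ) := by
  have hsin := (sin_pos_of_mem_Ioo hθ).ne'
  have hsina := (sin_mul_pos ha hθ).ne'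
  rw [cot_eq_cos_div_sin, cot_eq_cos_div_sin, sinRatio, one_sub_mul, sin_sub]
  field_simp

theorem neg_cot_le_contourSlope (hα : α ∈ Ioo (0 : ℝ) 1) (hθ : θ ∈ Ioo 0 π) :
    -cot θ ≤ contourSlope α θ := by
  have hcot : 0 ≤ cot (α * θ) - cot θ := cot_mul_sub_cot hα hθ ▸
    (div_pos (sinRatio_pos (one_sub_mem_Ioo hα) hθ) (sin_mul_pos hα hθ)).le
  rw [contourSlope, le_div_iff₀ (sub_pos.2 hα.2)]
  linarith [mul_nonneg hα.1.le hcot]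

theorem one_add_cot_sq (hθ : sin θ ≠ 0) : 1 + cot θ ^ 2 = (sin θ ^ 2)⁻¹ := by
  rw [cot_eq_cos_div_sin]
  field_simp
  exact sin_sq_add_cos_sq θ

theorem hasDerivAt_cot (hθ : sin θ ≠ 0) : HasDerivAt cot (-(1 + cot θ ^ 2)) θ := by
  have h := (hasDerivAt_cos θ).div (hasDerivAt_sin θ) hθ
  refine (h.congr_of_eventuallyEq (Eventually.of_forall cot_eq_cos_div_sin)).congr_deriv ?_
  rw [one_add_cot_sq hθ]
  field_simp
  linarith [sin_sq_add_cos_sq θ]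

theorem hasDerivAt_contourSlope (hα : α ∈ Ioo (0 : ℝ) 1) (hθ : θ ∈ Ioo 0 π) :
    HasDerivAt (contourSlope α)
      ((1 + cot θ ^ 2 - α ^ 2 * (1 + cot (α * θ) ^ 2)) / (1 - α)) θ := by
  have hcot := (hasDerivAt_cot (sin_mul_pos hα hθ).ne').comp θ (hasDerivAt_const_mul α)
  refine (((hcot.const_mul α).sub
    (hasDerivAt_cot (sin_pos_of_mem_Ioo hθ).ne')).div_const (1 - α)).congr_deriv ?_
  ring

theorem contourSlope_deriv_le (hα : α ∈ Ioo (0 : ℝ) 1) (hθ : θ ∈ Ioo 0 π) :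
    (1 + cot θ ^ 2 - α ^ 2 * (1 + cot (α * θ) ^ 2)) / (1 - α) ≤ 1 + contourSlope α θ ^ 2 := by
  have hα' := one_sub_mem_Ioo hα
  have hsin := sin_mul_pos hα hθ
  have hkey : (1 - α) ^ 2 * (1 + cot (α * θ) ^ 2) ≤ (cot (α * θ) - cot θ) ^ 2 := by
    rw [one_add_cot_sq hsin.ne', ← div_eq_mul_inv, ← div_pow, cot_mul_sub_cot hα hθ]
    have := hα'.1.le
    gcongr
    exact le_sinRatio (Ioo_subset_Icc_self hα') hθ
  have hsq : 1 + contourSlope α θ ^ 2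
      = ((1 - α) ^ 2 + (α * cot (α * θ) - cot θ) ^ 2) / (1 - α) / (1 - α) := by
    rw [contourSlope]
    field_simp [hα'.1.ne']
  rw [hsq]
  gcongr
  · exact hα'.1.le
  rw [le_div_iff₀ hα'.1]
  linarith [mul_le_mul_of_nonneg_left hkey hα.1.le]

theorem monotoneOn_sub_arctan_contourSlope (hα : α ∈ Ioo (0 : ℝ) 1) :
    MonotoneOn (fun t ↦ t - arctan (contourSlope α t)) (Ioo 0 π) := by
  have hderiv {t : ℝ} (ht : t ∈ Ioo 0 π) :=
    (hasDerivAt_id t).sub (hasDerivAt_contourSlope hα ht).arctan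
  refine monotoneOn_of_hasDerivWithinAt_nonneg (convex_Ioo _ _)
    (fun t ht ↦ (hderiv ht).continuousAt.continuousWithinAt)
    (fun t ht ↦ (hderiv (interior_subset ht)).hasDerivWithinAt) fun t ht ↦ ?_
  rw [interior_Ioo] at ht
  rw [sub_nonneg, one_div, inv_mul_le_iff₀ (by positivity), mul_one]
  exact contourSlope_deriv_le hα ht

theorem sub_arctan_contourSlope_le (hα : α ∈ Ioo (0 : ℝ) 1) (hθ : θ ∈ Ioo 0 π) :
    θ - arctan (contourSlope α θ) ≤ π / 2 := by
  have htan : tan (θ - π / 2) = -cot θ := by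
    rw [tan_eq_sin_div_cos, sin_sub_pi_div_two, cos_sub_pi_div_two, neg_div, cot_eq_cos_div_sin]
  have harctan := arctan_mono (neg_cot_le_contourSlope hα hθ)
  rw [← htan, arctan_tan (by linarith [hθ.1]) (by linarith [hθ.2])] at harctan
  linarith

theorem contourDensity_eq_mul_cos (α k θ : ℝ) : contourDensity α k θ =
    exp (k * contourRe α θ) / cos (arctan (contourSlope α θ)) *
      cos (k * θ - arctan (contourSlope α θ)) := by
  have hcos := (cos_arctan_pos (contourSlope α θ)).ne'
  have hslope : contourSlope α θ * cos (arctan (contourSlope α θ))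
      = sin (arctan (contourSlope α θ)) := by
    rw [← tan_mul_cos hcos, tan_arctan]
  rw [contourDensity, cos_sub, ← hslope]
  field_simp
  ring

theorem contourDensity_nonneg_iff :
    0 ≤ contourDensity α k θ ↔ 0 ≤ cos (k * θ - arctan (contourSlope α θ)) := by
  rw [contourDensity_eq_mul_cos]
  exact mul_nonneg_iff_of_pos_left (div_pos (exp_pos _) (cos_arctan_pos _))

theorem contourDensity_nonneg (hα : α ∈ Ioo (0 : ℝ) 1) (hk : k ∈ Icc (0 : ℝ) 1)
    (hθ : θ ∈ Ioo 0 π) : 0 ≤ contourDensity α k θ := by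
  have harctan := arctan_lt_pi_div_two (contourSlope α θ)
  have hphase := sub_arctan_contourSlope_le hα hθ
  refine contourDensity_nonneg_iff.2 (cos_nonneg_of_neg_pi_div_two_le_of_le ?_ ?_)
  · linarith [mul_nonneg hk.1 hθ.1.le]
  · linarith [mul_le_of_le_one_left hθ.1.le hk.2]

theorem contourDensity_nonneg_of_lt {θ₁ θ₂ : ℝ} (hα : α ∈ Ioo (0 : ℝ) 1)
    (hk : k ∈ Icc (1 : ℝ) 2) (hθ₁ : θ₁ ∈ Ioo 0 π) (hθ₂ : θ₂ ∈ Ioo 0 π) (hlt : θ₁ < θ₂)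
    (hnonneg : 0 ≤ contourDensity α k θ₂) : 0 ≤ contourDensity α k θ₁ := by
  rw [contourDensity_nonneg_iff] at hnonneg ⊢
  have hphase : θ₁ - arctan (contourSlope α θ₁) ≤ θ₂ - arctan (contourSlope α θ₂) :=
    monotoneOn_sub_arctan_contourSlope hα hθ₁ hθ₂ hlt.le
  have hphase' := sub_arctan_contourSlope_le hα hθ₂
  have hk' : (k - 1) * θ₁ ≤ (k - 1) * θ₂ := mul_le_mul_of_nonneg_left hlt.le (by linarith [hk.1])
  have hkπ : (k - 1) * θ₂ ≤ θ₂ := mul_le_of_le_one_left hθ₂.1.le (by linarith [hk.2])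
  have hangle : k * θ₂ - arctan (contourSlope α θ₂) ≤ π / 2 := by
    by_contra! hgt
    exact (cos_neg_of_pi_div_two_lt_of_lt hgt (by linarith [hθ₂.2])).not_ge hnonneg
  refine cos_nonneg_of_neg_pi_div_two_le_of_le ?_ (by linarith)
  have := arctan_lt_pi_div_two (contourSlope α θ₁)
  linarith [mul_nonneg (zero_le_one.trans hk.1) hθ₁.1.le]

end Monotonicity

/-! ### Signs of M-Wright functions -/

section Sign

variable {α γ k x : ℝ}

theorem laplaceProfile_compare {y₁ y₂ A₁ A₂ : ℝ} (hα : α ∈ Ioo (0 : ℝ) 1) (hk : 0 < k)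
    (hy₁ : 0 < y₁) (hy₂ : 0 < y₂)
    (hle : ∀ θ ∈ Ioo 0 π, 0 ≤ (A₂ * exp (-y₂ * kanter α θ) - A₁ * exp (-y₁ * kanter α θ)) *
      contourDensity α k θ) :
    A₁ * laplaceProfile α k y₁ ≤ A₂ * laplaceProfile α k y₂ := by
  have hdiff := le_of_hasDerivAt_nonneg_of_tendsto
    (F := fun θ ↦ A₂ * contourIntegral α y₂ k θ - A₁ * contourIntegral α y₁ k θ) pi_pos
    (fun θ hθ ↦ ((hasDerivAt_contourIntegral hα hy₂.le hk hθ).const_mul A₂).sub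
      ((hasDerivAt_contourIntegral hα hy₁.le hk hθ).const_mul A₁))
    (fun θ hθ ↦ (hle θ hθ).trans_eq (by ring))
    (((tendsto_contourIntegral_zero hα.1 hy₂.le hk).const_mul A₂).sub
      ((tendsto_contourIntegral_zero hα.1 hy₁.le hk).const_mul A₁))
    (((tendsto_contourIntegral_pi hα hy₂ hk).const_mul A₂).sub
      ((tendsto_contourIntegral_pi hα hy₁ hk).const_mul A₁))
  refine le_of_mul_le_mul_left ?_ pi_pos
  linarith

theorem laplaceProfile_nonneg {y : ℝ} (hα : α ∈ Ioo (0 : ℝ) 1) (hk : 0 < k) (hy : 0 < y)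
    (hnonneg : ∀ θ ∈ Ioo 0 π, 0 ≤ contourDensity α k θ) : 0 ≤ laplaceProfile α k y := by
  simpa using laplaceProfile_compare (A₁ := 0) (A₂ := 1) hα hk hy hy fun θ hθ ↦
    mul_nonneg (by simpa using (exp_pos _).le) (hnonneg θ hθ)

-- With `c` the value of `kanter α` where the density changes sign, the product
-- `e ^ (y (c - kanter α θ)) * contourDensity α k θ` is nondecreasing in `y` for every `θ`.
theorem laplaceProfile_nonneg_of_le {y₁ y₂ : ℝ} (hα : α ∈ Ioo (0 : ℝ) 1) (hk : k ∈ Icc (1 : ℝ) 2)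
    (hy₁ : 0 < y₁) (hle : y₁ ≤ y₂) (hnonneg : 0 ≤ laplaceProfile α k y₁) :
    0 ≤ laplaceProfile α k y₂ := by
  have hk0 : 0 < k := zero_lt_one.trans_le hk.1
  have hy₂ : 0 < y₂ := hy₁.trans_le hle
  by_cases hneg : ∃ θ ∈ Ioo 0 π, contourDensity α k θ < 0
  swap
  · push Not at hneg
    exact laplaceProfile_nonneg hα hk0 hy₂ hneg
  obtain ⟨E, -, hE⟩ := exists_pos_le_kanter hα
  obtain ⟨c, hc⟩ := exists_threshold_of_single_sign_change (monotoneOn_kanter hα)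
    ⟨E, forall_mem_image.2 hE⟩
    (fun θ₁ hθ₁ θ₂ hθ₂ ↦ contourDensity_nonneg_of_lt hα hk hθ₁ hθ₂) hneg
  suffices hcompare :
      exp (c * y₁) * laplaceProfile α k y₁ ≤ exp (c * y₂) * laplaceProfile α k y₂ from
    nonneg_of_mul_nonneg_right ((mul_nonneg (exp_pos _).le hnonneg).trans hcompare) (exp_pos _)
  refine laplaceProfile_compare hα hk0 hy₁ hy₂ fun θ hθ ↦ ?_
  rw [← exp_add, ← exp_add]
  rcases lt_trichotomy (kanter α θ) c with h | h | h
  · refine mul_nonneg (sub_nonneg.2 (exp_le_exp.2 ?_)) ((hc θ hθ).1 h)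
    linarith [mul_le_mul_of_nonneg_left hle (sub_pos.2 h).le]
  · simp [h, mul_comm]
  · refine mul_nonneg_of_nonpos_of_nonpos (sub_nonpos.2 (exp_le_exp.2 ?_)) ((hc θ hθ).2 h)
    linarith [mul_le_mul_of_nonneg_left hle (sub_pos.2 h).le]

theorem mWright_eq_laplaceProfile (hα : α ≠ 1) (hx : 0 < x) (γ : ℝ) :
    mWright α γ x = (x ^ (1 - α)⁻¹) ^ (1 - γ) * laplaceProfile α (1 - γ) (x ^ (1 - α)⁻¹) := by
  rw [laplaceProfile, ← mul_assoc, ← rpow_add (rpow_pos_of_pos hx _), add_neg_cancel, rpow_zero,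
    one_mul, sub_sub_cancel, rpow_inv_rpow hx.le (sub_ne_zero.2 hα.symm)]

theorem mWright_nonneg_iff_laplaceProfile (hα : α ≠ 1) (hx : 0 < x) :
    0 ≤ mWright α γ x ↔ 0 ≤ laplaceProfile α (1 - γ) (x ^ (1 - α)⁻¹) := by
  rw [mWright_eq_laplaceProfile hα hx]
  exact mul_nonneg_iff_of_pos_left (rpow_pos_of_pos (rpow_pos_of_pos hx _) _)

theorem mWright_nonneg_of_mem_Ico (hα : α ∈ Ioo (0 : ℝ) 1) (hγ : γ ∈ Ico (0 : ℝ) 1)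
    (hx : 0 < x) : 0 ≤ mWright α γ x :=
  (mWright_nonneg_iff_laplaceProfile hα.2.ne hx).2 <|
    laplaceProfile_nonneg hα (sub_pos.2 hγ.2) (rpow_pos_of_pos hx _) fun _ ↦
      contourDensity_nonneg hα ⟨(sub_pos.2 hγ.2).le, sub_le_self 1 hγ.1⟩

end Sign

/-! ### Decay at infinity and positivity -/

section Decay

variable {α β γ δ k x : ℝ}

theorem exists_laplaceProfile_le_exp (hα : α ∈ Ioo (0 : ℝ) 1) (hk : k ∈ Ioc (0 : ℝ) 1) :
    ∃ E > 0, ∀ y ≥ 1, laplaceProfile α k y ≤ laplaceProfile α k 1 * exp (E - E * y) := by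
  obtain ⟨E, hE, hle⟩ := exists_pos_le_kanter hα
  refine ⟨E, hE, fun y hy ↦ ?_⟩
  have hcompare := laplaceProfile_compare (A₁ := 1) (A₂ := exp (E - E * y)) hα hk.1
    (zero_lt_one.trans_le hy) one_pos fun θ hθ ↦ ?_
  · rwa [one_mul, mul_comm] at hcompare
  refine mul_nonneg (sub_nonneg.2 ?_) (contourDensity_nonneg hα (Ioc_subset_Icc_self hk) hθ)
  rw [one_mul, ← exp_add, exp_le_exp]
  linarith [mul_le_mul_of_nonneg_left (hle θ hθ) (sub_nonneg.2 hy)]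

theorem superpolynomialDecay_mWright_of_mem_Ico (hα : α ∈ Ioo (0 : ℝ) 1)
    (hγ : γ ∈ Ico (0 : ℝ) 1) : SuperpolynomialDecay atTop id (mWright α γ) := by
  have hα' := one_sub_mem_Ioo hα
  obtain ⟨E, hE, hle⟩ := exists_laplaceProfile_le_exp (k := 1 - γ) hα
    ⟨sub_pos.2 hγ.2, sub_le_self 1 hγ.1⟩
  intro n
  have hlim := ((tendsto_rpow_mul_exp_neg_mul_atTop_nhds_zero ((1 - α) * n + (1 - γ)) E hE).comp
    (tendsto_rpow_atTop (inv_pos.2 hα'.1))).const_mul (laplaceProfile α (1 - γ) 1 * exp E)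
  rw [mul_zero] at hlim
  refine squeeze_zero' ?_ ?_ hlim
  · filter_upwards [eventually_gt_atTop 0] with x hx
    exact mul_nonneg (pow_nonneg hx.le n) (mWright_nonneg_of_mem_Ico hα hγ hx)
  filter_upwards [eventually_ge_atTop 1] with x hx
  have hx0 := zero_lt_one.trans_le hx
  have hxy : x = (x ^ (1 - α)⁻¹) ^ (1 - α) := (rpow_inv_rpow hx0.le hα'.1.ne').symm
  rw [mWright_eq_laplaceProfile hα.2.ne hx0, Function.comp_apply, id]
  nth_rw 1 [hxy]
  have hy : 1 ≤ x ^ (1 - α)⁻¹ := one_le_rpow hx (inv_pos.2 hα'.1).le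
  generalize x ^ (1 - α)⁻¹ = y at hy
  have hy0 := zero_lt_one.trans_le hy
  calc (y ^ (1 - α)) ^ n * (y ^ (1 - γ) * laplaceProfile α (1 - γ) y)
      ≤ (y ^ (1 - α)) ^ n *
          (y ^ (1 - γ) * (laplaceProfile α (1 - γ) 1 * exp (E - E * y))) := by
        gcongr
        exact hle y hy
    _ = laplaceProfile α (1 - γ) 1 * exp E *
          (y ^ ((1 - α) * n + (1 - γ)) * exp (-E * y)) := by
        rw [rpow_add hy0, rpow_mul_natCast hy0.le, sub_eq_add_neg E, exp_add, ← neg_mul]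
        ring

theorem superpolynomialDecay_mWright_of_lt_one (hα : α ∈ Ioo (0 : ℝ) 1)
    (hγ : γ ∈ Ico (α - 1) 1) : SuperpolynomialDecay atTop id (mWright α γ) := by
  rcases le_or_gt 0 γ with hγ0 | hγ0
  · exact superpolynomialDecay_mWright_of_mem_Ico hα ⟨hγ0, hγ.2⟩
  have h₁ := superpolynomialDecay_mWright_of_mem_Ico (γ := γ + 1) hα
    ⟨by linarith [hγ.1, hα.1], by linarith⟩
  have h₂ := superpolynomialDecay_mWright_of_mem_Ico (γ := γ + 1 - α) hα
    ⟨by linarith [hγ.1], by linarith [hα.1]⟩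
  refine ((h₁.const_mul γ).add (h₂.param_mul.const_mul α)).congr fun x ↦ ?_
  rw [mWright_eq_add hα γ x, mul_assoc]
  rfl

theorem superpolynomialDecay_mWright_of_ne_one (hα : α ∈ Ioo (0 : ℝ) 1) (hδ : δ ≠ 1)
    (h₁ : SuperpolynomialDecay atTop id (mWright α (δ - 1)))
    (h₂ : SuperpolynomialDecay atTop id (mWright α (δ - α))) :
    SuperpolynomialDecay atTop id (mWright α δ) := by
  refine ((h₁.add (h₂.param_mul.const_mul (-α))).const_mul (δ - 1)⁻¹).congr fun x ↦ ?_
  have hrec := mWright_eq_add hα (δ - 1) x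
  rw [sub_add_cancel] at hrec
  rw [inv_mul_eq_iff_eq_mul₀ (sub_ne_zero.2 hδ)]
  simp only [Pi.add_apply, Pi.mul_apply, id, hrec]
  ring

theorem antitoneOn_mWright {a : ℝ} (hα : α ∈ Ioo (0 : ℝ) 1)
    (hnonneg : ∀ x > a, 0 ≤ mWright α (β - α) x) : AntitoneOn (mWright α β) (Ici a) := by
  refine antitoneOn_of_hasDerivWithinAt_nonpos (convex_Ici a)
    (fun x _ ↦ (hasDerivAt_mWright hα β x).continuousAt.continuousWithinAt)
    (fun x _ ↦ (hasDerivAt_mWright hα β x).hasDerivWithinAt) fun x hx ↦ ?_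
  rw [interior_Ici] at hx
  exact neg_nonpos.2 (hnonneg x hx)

/-- The parameters from which finitely many steps `δ ↦ δ - 1` and `δ ↦ δ - α` lead to `1`, where
the recurrence `mWright_eq_add` does not determine `mWright α δ`. -/
def exceptionalParams (α : ℝ) : Set ℝ := range fun p : ℕ × ℕ ↦ 1 + p.1 * α + p.2

theorem exceptionalParams_compl_induction {P : ℝ → Prop} (hα : α ∈ Ioo (0 : ℝ) 1)
    (hbase : ∀ δ ∈ Ico (0 : ℝ) 1, P δ) (hstep : ∀ δ > 1, P (δ - 1) → P (δ - α) → P δ)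
    (hδ : 0 ≤ δ) (hδα : δ ∉ exceptionalParams α) : P δ := by
  obtain ⟨n, hn⟩ := exists_nat_gt (δ / α)
  replace hn : δ < 1 + n * α := by linarith [(div_lt_iff₀ hα.1).1 hn]
  induction n generalizing δ with
  | zero => exact hbase δ ⟨hδ, by simpa using hn⟩
  | succ n ih =>
    push_cast at hn
    rcases lt_or_ge δ 1 with hlt | hge
    · exact hbase δ ⟨hδ, hlt⟩
    have hne : δ ≠ 1 := fun h ↦ hδα ⟨(0, 0), by simp [h]⟩
    refine hstep δ (hge.lt_of_ne' hne) (ih (by linarith) ?_ (by linarith [hα.2]))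
      (ih (by linarith [hα.2]) ?_ (by linarith))
    · rintro ⟨⟨m, j⟩, h⟩
      exact hδα ⟨(m, j + 1), by push_cast; linarith⟩
    · rintro ⟨⟨m, j⟩, h⟩
      exact hδα ⟨(m + 1, j), by push_cast; linarith⟩

theorem mWright_nonneg_of_notMem_exceptionalParams (hα : α ∈ Ioo (0 : ℝ) 1) (hδ : 0 ≤ δ)
    (hδα : δ ∉ exceptionalParams α) (hx : 0 < x) : 0 ≤ mWright α δ x := by
  suffices h : SuperpolynomialDecay atTop id (mWright α δ) ∧ ∀ x > 0, 0 ≤ mWright α δ x from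
    h.2 x hx
  refine exceptionalParams_compl_induction hα
    (P := fun δ ↦ SuperpolynomialDecay atTop id (mWright α δ) ∧ ∀ x > 0, 0 ≤ mWright α δ x)
    (fun γ hγ ↦
    ⟨superpolynomialDecay_mWright_of_mem_Ico hα hγ, fun _ ↦ mWright_nonneg_of_mem_Ico hα hγ⟩)
    (fun γ hγ h₁ h₂ ↦ ?_) hδ hδα
  have hdecay := superpolynomialDecay_mWright_of_ne_one hα hγ.ne' h₁.1 h₂.1
  refine ⟨hdecay, fun x hx ↦ le_of_tendsto (by simpa using hdecay 0) ?_⟩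
  filter_upwards [eventually_ge_atTop x] with z hz
  exact antitoneOn_mWright hα h₂.2 hx.le (hx.le.trans hz) hz

theorem mWright_nonneg (hα : α ∈ Ioo (0 : ℝ) 1) (hδ : 0 ≤ δ) (hx : 0 < x) :
    0 ≤ mWright α δ x := by
  rcases lt_or_ge δ 1 with hlt | hge
  · exact mWright_nonneg_of_mem_Ico hα ⟨hδ, hlt⟩ hx
  have hdense : Dense (exceptionalParams α)ᶜ := (countable_range _).dense_compl ℝ
  have hclosed : IsClosed {d | 0 ≤ mWright α d x} :=
    isClosed_le continuous_const (continuous_mWright_param hα x)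
  refine hclosed.closure_subset_iff.2 (fun d (hd : d ∈ Ioi 0 ∩ (exceptionalParams α)ᶜ) ↦ ?_)
    (hdense.open_subset_closure_inter isOpen_Ioi (zero_lt_one.trans_le hge))
  exact mWright_nonneg_of_notMem_exceptionalParams hα (mem_Ioi.1 hd.1).le hd.2 hx

end Decay

/-! ### Unimodality -/

section Unimodality

variable {α β γ : ℝ}

theorem mWright_nonneg_of_le {x₁ x₂ : ℝ} (hα : α ∈ Ioo (0 : ℝ) 1) (hγ : -1 ≤ γ)
    (hx₁ : 0 < x₁) (hle : x₁ ≤ x₂) (hnonneg : 0 ≤ mWright α γ x₁) : 0 ≤ mWright α γ x₂ := by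
  rcases le_total 0 γ with hγ0 | hγ0
  · exact mWright_nonneg hα hγ0 (hx₁.trans_le hle)
  rw [mWright_nonneg_iff_laplaceProfile hα.2.ne hx₁] at hnonneg
  rw [mWright_nonneg_iff_laplaceProfile hα.2.ne (hx₁.trans_le hle)]
  exact laplaceProfile_nonneg_of_le hα ⟨by linarith, by linarith⟩ (rpow_pos_of_pos hx₁ _)
    (rpow_le_rpow hx₁.le hle (inv_nonneg.2 (sub_pos.2 hα.2).le)) hnonneg

theorem exists_pos_mWright_nonneg (hα : α ∈ Ioo (0 : ℝ) 1) (hγ : -1 ≤ γ) :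
    ∃ x > 0, 0 ≤ mWright α γ x := by
  obtain ⟨n, hn⟩ := exists_nat_ge (-γ / α)
  replace hn : 0 ≤ γ + n * α := by linarith [(div_le_iff₀ hα.1).1 hn]
  induction n generalizing γ with
  | zero => exact ⟨1, one_pos, mWright_nonneg hα (by simpa using hn) one_pos⟩
  | succ n ih =>
    push_cast at hn
    rcases le_or_gt 0 γ with hγ0 | hγ0
    · exact ⟨1, one_pos, mWright_nonneg hα hγ0 one_pos⟩
    obtain ⟨a, ha, hnonneg⟩ := ih (γ := γ + α) (by linarith [hα.1]) (by linarith)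
    by_contra! hneg
    have hmono : StrictMonoOn (mWright α (γ + α)) (Ici 0) := by
      refine strictMonoOn_of_hasDerivWithinAt_pos (convex_Ici 0)
        (fun x _ ↦ (hasDerivAt_mWright hα _ x).continuousAt.continuousWithinAt)
        (fun x _ ↦ (hasDerivAt_mWright hα _ x).hasDerivWithinAt) fun x hx ↦ ?_
      rw [interior_Ici] at hx
      rw [add_sub_cancel_right]
      exact neg_pos.2 (hneg x hx)
    have hdecay := superpolynomialDecay_mWright_of_lt_one (γ := γ + α) hα
      ⟨by linarith, by linarith [hα.2]⟩
    have ha' : 0 < a + 1 := by positivity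
    have hpos : 0 < mWright α (γ + α) (a + 1) :=
      hnonneg.trans_lt (hmono ha.le ha'.le (lt_add_one a))
    refine hpos.not_ge (ge_of_tendsto (by simpa using hdecay 0) ?_)
    filter_upwards [eventually_ge_atTop (a + 1)] with z hz
    exact hmono.monotoneOn ha'.le (ha'.le.trans hz) hz

theorem exists_monotoneOn_antitoneOn_mWright (hα : α ∈ Ioo (0 : ℝ) 1) (hβ : α - 1 ≤ β) :
    ∃ m, 0 ≤ m ∧ MonotoneOn (mWright α β) (Icc 0 m) ∧ AntitoneOn (mWright α β) (Ici m) := by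
  have hγ : -1 ≤ β - α := by linarith
  have hne : {x | 0 < x ∧ 0 ≤ mWright α (β - α) x}.Nonempty := exists_pos_mWright_nonneg hα hγ
  have hpos : ∀ x ∈ {x | 0 < x ∧ 0 ≤ mWright α (β - α) x}, 0 ≤ x := fun x hx ↦ hx.1.le
  refine ⟨sInf {x | 0 < x ∧ 0 ≤ mWright α (β - α) x}, le_csInf hne hpos, ?_, ?_⟩
  · refine monotoneOn_of_hasDerivWithinAt_nonneg (convex_Icc _ _)
      (fun x _ ↦ (hasDerivAt_mWright hα β x).continuousAt.continuousWithinAt)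
      (fun x _ ↦ (hasDerivAt_mWright hα β x).hasDerivWithinAt) fun x hx ↦ ?_
    rw [interior_Icc] at hx
    refine neg_nonneg.2 (le_of_not_ge fun h ↦ ?_)
    exact notMem_of_lt_csInf hx.2 ⟨0, hpos⟩ ⟨hx.1, h⟩
  · refine antitoneOn_mWright hα fun x hx ↦ ?_
    obtain ⟨a, ⟨ha, hnonneg⟩, hax⟩ := exists_lt_of_csInf_lt hne hx
    exact mWright_nonneg_of_le hα hγ ha hax.le hnonneg

theorem Gamma_neg_of_mem_Ioo (hγ : γ ∈ Ioo (-1 : ℝ) 0) : Gamma γ < 0 := by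
  have hpos : 0 < Gamma (γ + 1) := Gamma_pos_of_pos (by linarith [hγ.1])
  rw [Gamma_add_one hγ.2.ne] at hpos
  exact neg_of_mul_pos_right hpos hγ.2.le

theorem not_antitoneOn_mWright (hα : α ∈ Ioo (0 : ℝ) 1) (hβ : β ∈ Ioo (α - 1) α) :
    ¬ AntitoneOn (mWright α β) (Ici 0) := by
  intro hanti
  have hderiv : derivWithin (mWright α β) (Ici 0) 0 = -(Gamma (β - α))⁻¹ := by
    rw [(hasDerivAt_mWright hα β 0).hasDerivWithinAt.derivWithin
      (uniqueDiffOn_Ici (0 : ℝ) 0 self_mem_Ici), mWright_zero_right]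
  have hle : derivWithin (mWright α β) (Ici 0) 0 ≤ 0 := hanti.derivWithin_nonpos
  have hGamma := inv_neg''.2
    (Gamma_neg_of_mem_Ioo (γ := β - α) ⟨by linarith [hβ.1], by linarith [hβ.2]⟩)
  linarith

end Unimodality

end MWright

open MWright Set in
theorem wright_unimodal_general (α β : ℝ) (hα : α ∈ Set.Ioo (0 : ℝ) 1) (hβ : α - 1 < β) :
    (∃ m : ℝ, 0 ≤ m ∧
        MonotoneOn (fun x => wright (-α) β (-x)) (Set.Icc 0 m) ∧
        AntitoneOn (fun x => wright (-α) β (-x)) (Set.Ici m)) ∧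
    (α ≤ β → AntitoneOn (fun x => wright (-α) β (-x)) (Set.Ici 0)) ∧
    (β < α →
      (¬ AntitoneOn (fun x => wright (-α) β (-x)) (Set.Ici 0)) ∧
      ∀ m : ℝ, 0 ≤ m →
        MonotoneOn (fun x => wright (-α) β (-x)) (Set.Icc 0 m) →
        AntitoneOn (fun x => wright (-α) β (-x)) (Set.Ici m) → 0 < m) := by
  refine ⟨exists_monotoneOn_antitoneOn_mWright hα hβ.le, fun hle ↦ ?_, fun hlt ↦ ?_⟩
  · exact antitoneOn_mWright hα fun x hx ↦ mWright_nonneg hα (sub_nonneg.2 hle) hx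
  · have hnot : ¬ AntitoneOn (mWright α β) (Ici 0) := not_antitoneOn_mWright hα ⟨hβ, hlt⟩
    refine ⟨hnot, fun m hm _ hanti ↦ hm.lt_of_ne ?_⟩
    rintro rfl
    exact hnot hanti

/-- Theorem A: for `α ∈ (0,1)` and `β ≥ 0`, the function `x ↦ φ(-α, β, -x)` is
unimodal on `[0,∞)`; if `β ≥ α` the mode can be taken at `0`, while if `β < α`
every mode is strictly positive and the function is not nonincreasing on `[0,∞)`. -/
theorem wright_unimodal (α β : ℝ) (hα : α ∈ Set.Ioo (0 : ℝ) 1) (hβ : 0 ≤ β) :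
    (∃ m : ℝ, 0 ≤ m ∧
        MonotoneOn (fun x => wright (-α) β (-x)) (Set.Icc 0 m) ∧
        AntitoneOn (fun x => wright (-α) β (-x)) (Set.Ici m)) ∧
    (α ≤ β → AntitoneOn (fun x => wright (-α) β (-x)) (Set.Ici 0)) ∧
    (β < α →
      (¬ AntitoneOn (fun x => wright (-α) β (-x)) (Set.Ici 0)) ∧
      ∀ m : ℝ, 0 ≤ m →
        MonotoneOn (fun x => wright (-α) β (-x)) (Set.Icc 0 m) →
        AntitoneOn (fun x => wright (-α) β (-x)) (Set.Ici m) → 0 < m) := by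
  exact wright_unimodal_general α β hα (by linarith [hα.2])
end

section
/- For every α ∈ (0,1) and every β ∈ ℝ, the function x ↦ φ(-α, β, -x) is differentiable on ℝ and its derivative satisfies d/dx φ(-α, β, -x) = − φ(-α, β − α, -x) for every x ∈ ℝ. In particular, for β ≥ α and x > 0 this derivative is strictly negative. -/
/-! Differentiating the power series shifts `β` to `β + ρ`, so for `ρ = -α` the sign of the
derivative is that of `-φ(ρ, β + ρ, x)` with `x < 0`. Euler's limit reads
`1 / Γ(s) = lim_k k^(-s) / k! * s (s + 1) ⋯ (s + k)`. Putting the `k`-th approximant in place of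
`1 / Γ` turns `φ(ρ, β, x)` into a positive multiple of `∑ y^n / n! * (β + ρ n)_{k+1}` with
`y = x k^(-ρ)`, which is `(k + 1)!` times the coefficient of `z^(k+1)` in
`(1 - z)^(-β) exp (y (1 - z)^(-ρ))`. The identity `(s)_{k+1} = s (s + 1)_k` shows by induction on
`k` that it is nonnegative for `-1 ≤ ρ ≤ 0`, `x ≤ 0`, `β ≥ 0`. A bound on the approximants that is
uniform in `k` and summable in `n` passes this to the limit.

If `φ(ρ, β, ·)` vanished at some `x ≤ 0` while being nonnegative and monotone on `(-∞, 0]`, it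
would vanish on `(-∞, x]`, hence identically by analyticity, contradicting
`φ(ρ, β, 0) = 1 / Γ(β) > 0`. The recursion
`φ(ρ, β, x) = β φ(ρ, β + 1, x) + ρ x φ(ρ, β + ρ + 1, x)` then covers the small values of `β`,
where monotonicity is not available. -/

open Filter Real Topology
open scoped Nat

lemma hasDerivAt_of_hasFPowerSeriesOnBall_ofScalars {𝕜 : Type*} [NontriviallyNormedField 𝕜]
    [CompleteSpace 𝕜] {f : 𝕜 → 𝕜} {c : ℕ → 𝕜} {r : ENNReal} {x : 𝕜}
    (hf : HasFPowerSeriesOnBall f (.ofScalars 𝕜 c) 0 r) (hx : x ∈ Metric.eball 0 r) :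
    HasDerivAt f (∑' n : ℕ, x ^ n * ((n + 1) * c (n + 1))) x := by
  have hderiv : HasSum (fun n ↦ x ^ n * ((n + 1) * c (n + 1))) (deriv f x) := by
    have := (hf.fderiv.hasSum hx).mapL (ContinuousLinearMap.apply 𝕜 𝕜 1)
    simpa [FormalMultilinearSeries.apply_eq_pow_smul_coeff,
      FormalMultilinearSeries.coeff_ofScalars] using this
  rw [hderiv.tsum_eq]
  exact (hf.analyticAt_of_mem hx).differentiableAt.hasDerivAt

lemma summable_pow_self_of_tendsto_zero {R : Type*} [NormedRing R] [CompleteSpace R] {u : ℕ → R}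
    (hu : Tendsto u atTop (𝓝 0)) : Summable fun n ↦ u n ^ n := by
  refine .of_norm_bounded_eventually_nat summable_geometric_two ?_
  have hsmall : ∀ᶠ n in atTop, ‖u n‖ ≤ 1 / 2 := hu.norm.eventually_le_const (by norm_num)
  filter_upwards [hsmall, eventually_gt_atTop 0] with n hn hn0
  calc ‖u n ^ n‖ ≤ ‖u n‖ ^ n := norm_pow_le' _ hn0
    _ ≤ (1 / 2) ^ n := by gcongr

lemma inv_Gamma_eq_mul_inv_Gamma_add_one (s : ℝ) : (Gamma s)⁻¹ = s * (Gamma (s + 1))⁻¹ := by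
  rcases eq_or_ne s 0 with rfl | hs
  · simp
  · rw [Gamma_add_one hs, mul_inv, mul_inv_cancel_left₀ hs]

lemma tendsto_inv_GammaSeq (s : ℝ) :
    Tendsto (fun k ↦ (GammaSeq s k)⁻¹) atTop (𝓝 (Gamma s)⁻¹) := by
  by_cases hs : Gamma s = 0
  · obtain ⟨m, rfl⟩ := (Gamma_eq_zero_iff s).mp hs
    rw [hs, inv_zero]
    refine tendsto_const_nhds.congr' ?_
    filter_upwards [eventually_ge_atTop m] with k hk
    have hprod : ∏ j ∈ Finset.range (k + 1), (-(m : ℝ) + j) = 0 :=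
      Finset.prod_eq_zero (Finset.mem_range.mpr (Nat.lt_succ_of_le hk)) (neg_add_cancel _)
    simp [GammaSeq, hprod]
  · exact (GammaSeq_tendsto_Gamma s).inv₀ hs

lemma ascPochhammer_eval_eq_prod_range {S : Type*} [CommSemiring S] (k : ℕ) (s : S) :
    (ascPochhammer S k).eval s = ∏ j ∈ Finset.range k, (s + j) := by
  induction k with
  | zero => simp
  | succ k ih => rw [ascPochhammer_succ_eval, ih, Finset.prod_range_succ]

lemma inv_GammaSeq_eq_ascPochhammer (s : ℝ) (k : ℕ) :
    (GammaSeq s k)⁻¹ = (k : ℝ) ^ (-s) / k ! * (ascPochhammer ℝ (k + 1)).eval s := by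
  rw [GammaSeq, ascPochhammer_eval_eq_prod_range, rpow_neg k.cast_nonneg, inv_div]
  ring

lemma inv_GammaSeq_eq_prod (s : ℝ) (k : ℕ) :
    (GammaSeq s k)⁻¹ = s * ((k : ℝ) ^ (-s) * ∏ j ∈ Finset.range k, (1 + s / (j + 1))) := by
  have hfactor (j : ℕ) : 1 + s / ((j : ℝ) + 1) = (s + ↑(j + 1)) / ↑(j + 1) := by
    push_cast
    field_simp
    ring
  rw [GammaSeq, Finset.prod_range_succ', inv_div, rpow_neg k.cast_nonneg,
    Finset.prod_congr rfl fun j _ ↦ hfactor j, Finset.prod_div_distrib, ← Nat.cast_prod,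
    Finset.prod_range_add_one_eq_factorial]
  simp only [Nat.cast_zero, add_zero]
  ring

lemma abs_one_add_div_le {s : ℝ} {N : ℕ} (hN : -s ≤ N) (j : ℕ) :
    |1 + s / (j + 1)| ≤ exp (s / (j + 1)) *
      if j < N then N / (j + 1) * exp (N / (j + 1)) else 1 := by
  have hj : (0 : ℝ) < j + 1 := by positivity
  rcases le_or_gt 0 (1 + s / ((j : ℝ) + 1)) with hpos | hneg
  · have hcorr : (1 : ℝ) ≤ if j < N then N / (j + 1) * exp (N / (j + 1)) else 1 := by
      split_ifs with hjN
      · exact one_le_mul_of_one_le_of_one_le ((one_le_div hj).mpr (by exact_mod_cast hjN))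
          (one_le_exp (by positivity))
      · exact le_rfl
    calc |1 + s / (j + 1)| = s / (j + 1) + 1 := by rw [abs_of_nonneg hpos, add_comm]
      _ ≤ exp (s / (j + 1)) := add_one_le_exp _
      _ ≤ _ := le_mul_of_one_le_right (exp_pos _).le hcorr
  · have hjs : (j : ℝ) + 1 < -s := by
      linarith [(div_lt_iff₀ hj).mp (by linarith : s / ((j : ℝ) + 1) < -1)]
    have hjN : j < N := by
      have : (j : ℝ) < N := by linarith
      exact_mod_cast this
    have hle : -(s / (j + 1)) ≤ N / ((j : ℝ) + 1) := by rw [← neg_div]; gcongr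
    rw [if_pos hjN, abs_of_neg hneg, mul_left_comm, ← exp_add]
    calc -(1 + s / (j + 1)) ≤ N / ((j : ℝ) + 1) := by linarith
      _ ≤ _ := le_mul_of_one_le_right (by positivity) (one_le_exp (by linarith))

lemma prod_exp_div_add_one (a : ℝ) (k : ℕ) :
    ∏ j ∈ Finset.range k, exp (a / (j + 1)) = exp (a * harmonic k) := by
  simp only [harmonic, Rat.cast_sum, Finset.mul_sum, exp_sum, div_eq_mul_inv]
  simp

lemma prod_natCast_div_mul_exp_le (N : ℕ) :
    ∏ j ∈ Finset.range N, ((N : ℝ) / (j + 1) * exp (N / (j + 1))) ≤ (exp 2 * N) ^ N := by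
  have hprod : ∏ j ∈ Finset.range N, ((N : ℝ) / (j + 1)) = (N : ℝ) ^ N / N ! := by
    rw [Finset.prod_div_distrib, Finset.prod_const, Finset.card_range,
      ← Finset.prod_range_add_one_eq_factorial]
    push_cast
    rfl
  have hexp : exp (N * harmonic N) ≤ exp N * N ^ N := by
    rcases N.eq_zero_or_pos with rfl | hN
    · simp
    · calc exp (N * harmonic N) ≤ exp (N * (1 + log N)) := by
            gcongr
            exact harmonic_le_one_add_log N
        _ = exp N * N ^ N := by
            rw [mul_add, mul_one, exp_add, exp_nat_mul (log N), exp_log (by exact_mod_cast hN)]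
  rw [Finset.prod_mul_distrib, hprod, prod_exp_div_add_one]
  calc (N : ℝ) ^ N / N ! * exp (N * harmonic N) ≤ exp N * (exp N * N ^ N) := by
        gcongr
        exact pow_div_factorial_le_exp _ N.cast_nonneg N
    _ = (exp 2 * N) ^ N := by
        rw [mul_pow, ← exp_nat_mul, ← mul_assoc, ← exp_add]
        ring_nf

lemma abs_prod_one_add_div_le {s : ℝ} {N : ℕ} (hN : -s ≤ N) (k : ℕ) :
    |∏ j ∈ Finset.range k, (1 + s / (j + 1))| ≤ exp (s * harmonic k) * (exp 2 * N) ^ N := by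
  set b : ℕ → ℝ := fun j ↦ N / (j + 1) * exp (N / (j + 1))
  have hcorr : ∏ j ∈ Finset.range k, (if j < N then b j else 1) ≤
      ∏ j ∈ Finset.range N, b j := by
    rw [← Finset.prod_filter]
    refine Finset.prod_le_prod_of_subset_of_one_le (fun j hj ↦ ?_) (fun j _ ↦ ?_) fun j hj _ ↦ ?_
    · exact Finset.mem_range.mpr (Finset.mem_filter.mp hj).2
    · positivity
    · have : (j : ℝ) + 1 ≤ N := by exact_mod_cast Finset.mem_range.mp hj
      exact one_le_mul_of_one_le_of_one_le ((one_le_div (by positivity)).mpr this)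
        (one_le_exp (by positivity))
  calc |∏ j ∈ Finset.range k, (1 + s / (j + 1))|
      = ∏ j ∈ Finset.range k, |1 + s / (j + 1)| := Finset.abs_prod _ _
    _ ≤ ∏ j ∈ Finset.range k, (exp (s / (j + 1)) * if j < N then b j else 1) := by
        gcongr with j _
        exact abs_one_add_div_le hN j
    _ = exp (s * harmonic k) * ∏ j ∈ Finset.range k, (if j < N then b j else 1) := by
        rw [Finset.prod_mul_distrib, prod_exp_div_add_one]
    _ ≤ exp (s * harmonic k) * (exp 2 * N) ^ N := by
        gcongr
        exact hcorr.trans (prod_natCast_div_mul_exp_le N)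

lemma rpow_neg_mul_exp_mul_harmonic_le (s : ℝ) {k : ℕ} (hk : k ≠ 0) :
    (k : ℝ) ^ (-s) * exp (s * harmonic k) ≤ exp |s| := by
  have hk0 : (0 : ℝ) < k := by positivity
  have hlower : log k ≤ harmonic k :=
    (log_le_log hk0 (by simp)).trans (log_add_one_le_harmonic k)
  have hdist : |(harmonic k : ℝ) - log k| ≤ 1 :=
    abs_le.mpr ⟨by linarith, by linarith [harmonic_le_one_add_log k]⟩
  rw [rpow_def_of_pos hk0, ← exp_add, exp_le_exp]
  calc log k * -s + s * harmonic k = s * (harmonic k - log k) := by ring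
    _ ≤ |s| * |(harmonic k : ℝ) - log k| := (le_abs_self _).trans (abs_mul _ _).le
    _ ≤ |s| := mul_le_of_le_one_right (abs_nonneg s) hdist

/-- A bound for `1 / Γ(s)` and for all its Euler approximants `(GammaSeq s k)⁻¹` with `k ≠ 0`. The
last factor accounts for the factors `1 + s / (j + 1)` that can be negative, which have
`j < ⌈-s⌉₊`; for `0 ≤ s` there are none, and it is `0 ^ 0 = 1`. -/
noncomputable def invGammaBound (s : ℝ) : ℝ :=
  |s| * exp |s| * (exp 2 * ⌈-s⌉₊) ^ ⌈-s⌉₊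

lemma abs_inv_GammaSeq_le (s : ℝ) {k : ℕ} (hk : k ≠ 0) :
    |(GammaSeq s k)⁻¹| ≤ invGammaBound s := by
  rw [inv_GammaSeq_eq_prod, abs_mul, abs_mul, abs_of_nonneg (by positivity : 0 ≤ (k : ℝ) ^ (-s))]
  calc |s| * ((k : ℝ) ^ (-s) * |∏ j ∈ Finset.range k, (1 + s / (j + 1))|)
      ≤ |s| * ((k : ℝ) ^ (-s) * (exp (s * harmonic k) * (exp 2 * ⌈-s⌉₊) ^ ⌈-s⌉₊)) := by
        gcongr
        exact abs_prod_one_add_div_le (Nat.le_ceil _) k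
    _ = |s| * ((k : ℝ) ^ (-s) * exp (s * harmonic k)) * (exp 2 * ⌈-s⌉₊) ^ ⌈-s⌉₊ := by ring
    _ ≤ invGammaBound s := by
        unfold invGammaBound
        gcongr
        exact rpow_neg_mul_exp_mul_harmonic_le s hk

lemma abs_inv_Gamma_le (s : ℝ) : |(Gamma s)⁻¹| ≤ invGammaBound s := by
  refine le_of_tendsto (tendsto_inv_GammaSeq s).abs ?_
  filter_upwards [eventually_ne_atTop 0] with k hk using abs_inv_GammaSeq_le s hk

lemma eventually_ceil_le_mul {a b τ : ℝ} (haτ : a < τ) (hτ : 0 < τ) :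
    ∀ᶠ n : ℕ in atTop, (⌈a * n + b⌉₊ : ℝ) ≤ τ * n := by
  have hlarge : ∀ᶠ n : ℕ in atTop, b + 1 ≤ (τ - a) * n :=
    (tendsto_natCast_atTop_atTop.const_mul_atTop (sub_pos.mpr haτ)).eventually_ge_atTop _
  filter_upwards [hlarge] with n hn
  rcases le_or_gt (a * n + b) 0 with hneg | hpos
  · rw [Nat.ceil_eq_zero.mpr hneg, Nat.cast_zero]
    positivity
  · linarith [Nat.ceil_lt_add_one hpos.le]

lemma exists_eventually_invGammaBound_le {ρ : ℝ} (hρ : -1 < ρ) (β : ℝ) :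
    ∃ A τ : ℝ, τ < 1 ∧ ∀ᶠ n : ℕ in atTop, invGammaBound (β + ρ * n) ≤ (A * (n : ℝ) ^ τ) ^ n := by
  obtain ⟨τ, hρτ, hτ1⟩ : ∃ τ, max (-ρ) 0 < τ ∧ τ < 1 :=
    exists_between (max_lt (by linarith) one_pos)
  obtain ⟨hρτ, hτ0⟩ := max_lt_iff.mp hρτ
  refine ⟨exp (2 * (|ρ| + 1)) * exp 2, τ, hτ1, ?_⟩
  filter_upwards [eventually_ceil_le_mul (b := -β) hρτ hτ0, eventually_ge_atTop ⌈|β|⌉₊,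
    eventually_ge_atTop 1] with n hceil hβ hn
  have hn1 : (1 : ℝ) ≤ n := by exact_mod_cast hn
  rw [show -ρ * n + -β = -(β + ρ * n) by ring] at hceil
  set s := β + ρ * n with hs
  set M := ⌈-s⌉₊
  have habs : |s| ≤ (|ρ| + 1) * n := by
    calc |s| ≤ |β| + |ρ| * n := by simpa [hs, abs_mul] using abs_add_le β (ρ * n)
      _ ≤ (|ρ| + 1) * n := by linarith [Nat.ceil_le.mp hβ]
  have hMn : (M : ℝ) ≤ n := by nlinarith
  have hgeom : |s| * exp |s| ≤ exp (2 * (|ρ| + 1)) ^ n := by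
    calc |s| * exp |s| ≤ exp |s| * exp |s| := by
          gcongr
          linarith [add_one_le_exp |s|]
      _ = exp (2 * |s|) := by rw [← exp_add, two_mul]
      _ ≤ exp (2 * ((|ρ| + 1) * n)) := by gcongr
      _ = exp (2 * (|ρ| + 1)) ^ n := by rw [← exp_nat_mul]; ring_nf
  have hpow : (exp 2 * M) ^ M ≤ exp 2 ^ n * ((n : ℝ) ^ τ) ^ n := by
    rw [mul_pow]
    gcongr
    · exact one_le_exp zero_le_two
    · exact_mod_cast hMn
    · calc (M : ℝ) ^ M ≤ (n : ℝ) ^ M := by gcongr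
        _ = (n : ℝ) ^ (M : ℝ) := (rpow_natCast _ _).symm
        _ ≤ (n : ℝ) ^ (τ * n) := by gcongr
        _ = ((n : ℝ) ^ τ) ^ n := rpow_mul_natCast n.cast_nonneg τ n
  calc |s| * exp |s| * (exp 2 * M) ^ M
      ≤ exp (2 * (|ρ| + 1)) ^ n * (exp 2 ^ n * ((n : ℝ) ^ τ) ^ n) := by gcongr
    _ = (exp (2 * (|ρ| + 1)) * exp 2 * (n : ℝ) ^ τ) ^ n := by simp only [mul_pow, mul_assoc]

lemma inv_factorial_le_exp_div_pow {n : ℕ} (hn : n ≠ 0) : (n ! : ℝ)⁻¹ ≤ (exp 1 / n) ^ n := by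
  have h := pow_div_factorial_le_exp (n : ℝ) n.cast_nonneg n
  rw [div_pow, ← exp_nat_mul, mul_one, le_div_iff₀ (by positivity), ← div_eq_inv_mul]
  exact h

lemma summable_pow_div_factorial_mul_invGammaBound {ρ : ℝ} (hρ : -1 < ρ) (β x : ℝ) :
    Summable fun n : ℕ ↦ |x| ^ n / n ! * invGammaBound (β + ρ * n) := by
  obtain ⟨A, τ, hτ, hA⟩ := exists_eventually_invGammaBound_le hρ β
  have hu : Tendsto (fun n : ℕ ↦ |x| * exp 1 * A * (n : ℝ) ^ (-(1 - τ))) atTop (𝓝 0) := by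
    simpa using ((tendsto_rpow_neg_atTop (sub_pos.mpr hτ)).comp
      tendsto_natCast_atTop_atTop).const_mul (|x| * exp 1 * A)
  refine .of_norm_bounded_eventually_nat (summable_pow_self_of_tendsto_zero hu) ?_
  filter_upwards [hA, eventually_ne_atTop 0] with n hn hn0
  have hn0' : (0 : ℝ) < n := by positivity
  have hbound : 0 ≤ invGammaBound (β + ρ * n) := by unfold invGammaBound; positivity
  rw [norm_of_nonneg (by positivity), div_eq_mul_inv]
  calc |x| ^ n * (n ! : ℝ)⁻¹ * invGammaBound (β + ρ * n)
      ≤ |x| ^ n * (exp 1 / n) ^ n * (A * (n : ℝ) ^ τ) ^ n := by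
        gcongr
        exact inv_factorial_le_exp_div_pow hn0
    _ = (|x| * exp 1 * A * (n : ℝ) ^ (-(1 - τ))) ^ n := by
        rw [← mul_pow, ← mul_pow, neg_sub, rpow_sub_one hn0'.ne']
        ring

lemma wright_eq_tsum (ρ β x : ℝ) :
    wright ρ β x = ∑' n : ℕ, x ^ n / n ! * (Gamma (β + ρ * n))⁻¹ := by
  simp only [wright, ← div_div, div_eq_mul_inv (_ / _) (Gamma _)]

lemma hasFPowerSeriesOnBall_wright {ρ : ℝ} (hρ : -1 < ρ) (β : ℝ) :
    HasFPowerSeriesOnBall (wright ρ β)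
      (.ofScalars ℝ fun n : ℕ ↦ (n ! * Gamma (β + ρ * n))⁻¹) 0 ⊤ := by
  set p := FormalMultilinearSeries.ofScalars ℝ fun n : ℕ ↦ (n ! * Gamma (β + ρ * n))⁻¹ with hp
  have hradius : p.radius = ⊤ := by
    refine p.radius_eq_top_of_summable_norm fun r ↦ ?_
    refine .of_nonneg_of_le (fun n ↦ by positivity) (fun n ↦ ?_)
      (summable_pow_div_factorial_mul_invGammaBound hρ β r)
    have hnorm : ‖p n‖ * (r : ℝ) ^ n = |(r : ℝ)| ^ n / n ! * |(Gamma (β + ρ * n))⁻¹| := by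
      rw [hp, FormalMultilinearSeries.ofScalars_norm, norm_eq_abs, mul_inv, abs_mul,
        abs_of_nonneg (by positivity : (0 : ℝ) ≤ (n ! : ℝ)⁻¹), NNReal.abs_eq]
      ring
    rw [hnorm]
    gcongr
    exact abs_inv_Gamma_le _
  have hsum : wright ρ β = p.sum := by
    ext x
    refine tsum_congr fun n ↦ ?_
    rw [hp, FormalMultilinearSeries.ofScalars_apply_eq, smul_eq_mul, div_eq_inv_mul]
  rw [hsum, ← hradius]
  exact p.hasFPowerSeriesOnBall (hradius ▸ ENNReal.zero_lt_top)

lemma hasDerivAt_wright {ρ : ℝ} (hρ : -1 < ρ) (β x : ℝ) :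
    HasDerivAt (wright ρ β) (wright ρ (β + ρ) x) x := by
  convert! hasDerivAt_of_hasFPowerSeriesOnBall_ofScalars (hasFPowerSeriesOnBall_wright hρ β)
    (by simp : x ∈ Metric.eball 0 ⊤) using 1
  refine tsum_congr fun n ↦ ?_
  rw [show β + ρ * (n + 1 : ℕ) = β + ρ + ρ * n by push_cast; ring, Nat.factorial_succ]
  push_cast
  field_simp

lemma analyticOnNhd_wright {ρ : ℝ} (hρ : -1 < ρ) (β : ℝ) :
    AnalyticOnNhd ℝ (wright ρ β) Set.univ := fun x _ ↦
  (hasFPowerSeriesOnBall_wright hρ β).analyticAt_of_mem (by simp)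

lemma hasSum_wright {ρ : ℝ} (hρ : -1 < ρ) (β x : ℝ) :
    HasSum (fun n : ℕ ↦ x ^ n / n ! * (Gamma (β + ρ * n))⁻¹) (wright ρ β x) := by
  rw [wright_eq_tsum]
  refine Summable.hasSum <| .of_norm_bounded
    (summable_pow_div_factorial_mul_invGammaBound hρ β x) fun n ↦ ?_
  rw [norm_mul, norm_div, norm_pow, norm_natCast, norm_eq_abs, norm_eq_abs]
  gcongr
  exact abs_inv_Gamma_le _

lemma hasSum_natCast_mul_pow_div_factorial_mul {𝕜 : Type*} [Field 𝕜] [CharZero 𝕜]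
    [TopologicalSpace 𝕜] [IsTopologicalRing 𝕜] {c : ℕ → 𝕜} {x S : 𝕜}
    (h : HasSum (fun n : ℕ ↦ x ^ n / n ! * c (n + 1)) S) :
    HasSum (fun n : ℕ ↦ n * (x ^ n / n ! * c n)) (x * S) := by
  rw [← hasSum_nat_add_iff' 1]
  simp only [Finset.range_one, Finset.sum_singleton, Nat.cast_zero, zero_mul, sub_zero]
  refine (h.mul_left x).congr_fun fun n ↦ ?_
  rw [Nat.factorial_succ]
  push_cast
  field_simp
  ring

lemma hasSum_self_mul_shift {𝕜 : Type*} [Field 𝕜] [CharZero 𝕜] [TopologicalSpace 𝕜]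
    [IsTopologicalRing 𝕜] {g : 𝕜 → 𝕜} {ρ β x S T : 𝕜}
    (hS : HasSum (fun n : ℕ ↦ x ^ n / n ! * g (β + 1 + ρ * n)) S)
    (hT : HasSum (fun n : ℕ ↦ x ^ n / n ! * g (β + ρ + 1 + ρ * n)) T) :
    HasSum (fun n : ℕ ↦ x ^ n / n ! * ((β + ρ * n) * g (β + ρ * n + 1)))
      (β * S + ρ * (x * T)) := by
  have hT' : HasSum (fun n : ℕ ↦ n * (x ^ n / n ! * g (β + 1 + ρ * n))) (x * T) := by
    refine hasSum_natCast_mul_pow_div_factorial_mul (hT.congr_fun fun n ↦ ?_)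
    push_cast
    ring_nf
  refine ((hS.mul_left β).add (hT'.mul_left ρ)).congr_fun fun n ↦ ?_
  ring_nf

lemma wright_eq_add {ρ : ℝ} (hρ : -1 < ρ) (β x : ℝ) :
    wright ρ β x = β * wright ρ (β + 1) x + ρ * (x * wright ρ (β + ρ + 1) x) := by
  have h := hasSum_self_mul_shift (g := fun s ↦ (Gamma s)⁻¹) (hasSum_wright hρ (β + 1) x)
    (hasSum_wright hρ (β + ρ + 1) x)
  simp only [← inv_Gamma_eq_mul_inv_Gamma_add_one] at h
  exact (hasSum_wright hρ β x).unique h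

lemma exists_nonneg_hasSum_ascPochhammer {ρ x : ℝ} (hρ : -1 ≤ ρ) (hρ0 : ρ ≤ 0) (hx : x ≤ 0)
    (k : ℕ) {β : ℝ} (hβ : 0 ≤ β) :
    ∃ S, 0 ≤ S ∧
      HasSum (fun n : ℕ ↦ x ^ n / n ! * (ascPochhammer ℝ k).eval (β + ρ * n)) S := by
  induction k generalizing β with
  | zero =>
    refine ⟨exp x, (exp_pos x).le, ?_⟩
    rw [exp_eq_exp_ℝ]
    simpa using NormedSpace.expSeries_div_hasSum_exp x
  | succ k ih =>
    obtain ⟨S, hS0, hS⟩ := ih (by linarith : 0 ≤ β + 1)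
    obtain ⟨T, hT0, hT⟩ := ih (by linarith : 0 ≤ β + ρ + 1)
    refine ⟨β * S + ρ * (x * T), ?_, ?_⟩
    · have := mul_nonneg_of_nonpos_of_nonpos hρ0 (mul_nonpos_of_nonpos_of_nonneg hx hT0)
      positivity
    · simpa [ascPochhammer_succ_left] using
        hasSum_self_mul_shift (g := fun s ↦ (ascPochhammer ℝ k).eval s) hS hT

lemma tsum_inv_GammaSeq_nonneg {ρ β x : ℝ} (hρ : -1 ≤ ρ) (hρ0 : ρ ≤ 0) (hβ : 0 ≤ β) (hx : x ≤ 0)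
    {k : ℕ} (hk : k ≠ 0) :
    0 ≤ ∑' n : ℕ, x ^ n / n ! * (GammaSeq (β + ρ * n) k)⁻¹ := by
  have hk0 : (0 : ℝ) < k := by positivity
  have hrescale (n : ℕ) : x ^ n / n ! * (GammaSeq (β + ρ * n) k)⁻¹ =
      (k : ℝ) ^ (-β) / k ! *
        ((x * (k : ℝ) ^ (-ρ)) ^ n / n ! * (ascPochhammer ℝ (k + 1)).eval (β + ρ * n)) := by
    rw [inv_GammaSeq_eq_ascPochhammer, neg_add, rpow_add hk0, ← neg_mul,
      rpow_mul_natCast hk0.le, mul_pow]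
    ring
  obtain ⟨S, hS0, hS⟩ := exists_nonneg_hasSum_ascPochhammer hρ hρ0
    (mul_nonpos_of_nonpos_of_nonneg hx (rpow_nonneg hk0.le (-ρ))) (k + 1) hβ
  simp only [hrescale, (hS.mul_left _).tsum_eq]
  positivity

lemma tendsto_tsum_inv_GammaSeq {ρ : ℝ} (hρ : -1 < ρ) (β x : ℝ) :
    Tendsto (fun k ↦ ∑' n : ℕ, x ^ n / n ! * (GammaSeq (β + ρ * n) k)⁻¹) atTop
      (𝓝 (wright ρ β x)) := by
  rw [wright_eq_tsum]
  refine tendsto_tsum_of_dominated_convergence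
    (summable_pow_div_factorial_mul_invGammaBound hρ β x)
    (fun n ↦ (tendsto_inv_GammaSeq _).const_mul _) ?_
  filter_upwards [eventually_ne_atTop 0] with k hk n
  rw [norm_mul, norm_div, norm_pow, norm_natCast, norm_eq_abs, norm_eq_abs]
  gcongr
  exact abs_inv_GammaSeq_le _ hk

lemma wright_nonneg {ρ β x : ℝ} (hρ : -1 < ρ) (hρ0 : ρ ≤ 0) (hβ : 0 ≤ β) (hx : x ≤ 0) :
    0 ≤ wright ρ β x := by
  refine ge_of_tendsto (tendsto_tsum_inv_GammaSeq hρ β x) ?_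
  filter_upwards [eventually_ne_atTop 0] with k hk
  exact tsum_inv_GammaSeq_nonneg hρ.le hρ0 hβ hx hk

lemma wright_zero_right (ρ β : ℝ) : wright ρ β 0 = (Gamma β)⁻¹ := by
  rw [wright, tsum_eq_single 0 fun n hn ↦ by simp [hn]]
  simp

lemma monotoneOn_wright {ρ β : ℝ} (hρ : -1 < ρ) (hρ0 : ρ ≤ 0) (hβ : -ρ ≤ β) :
    MonotoneOn (wright ρ β) (Set.Iic 0) := by
  have hderiv := hasDerivAt_wright hρ β
  refine monotoneOn_of_deriv_nonneg (convex_Iic 0)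
    (fun x _ ↦ (hderiv x).continuousAt.continuousWithinAt)
    (fun x _ ↦ (hderiv x).differentiableAt.differentiableWithinAt) fun x hx ↦ ?_
  rw [(hderiv x).deriv]
  exact wright_nonneg hρ hρ0 (by linarith) (Set.mem_Iic.mp (interior_subset hx))

lemma wright_pos_of_neg_le {ρ β x : ℝ} (hρ : -1 < ρ) (hρ0 : ρ ≤ 0) (hβ : -ρ ≤ β) (hβ0 : 0 < β)
    (hx : x ≤ 0) : 0 < wright ρ β x := by
  refine (wright_nonneg hρ hρ0 hβ0.le hx).lt_of_ne' fun hzero ↦ ?_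
  have hvanish : ∀ y ≤ x, wright ρ β y = 0 := fun y hy ↦
    le_antisymm (hzero ▸ monotoneOn_wright hρ hρ0 hβ (hy.trans hx) hx hy)
      (wright_nonneg hρ hρ0 hβ0.le (hy.trans hx))
  have hlocal : wright ρ β =ᶠ[𝓝 (x - 1)] fun _ ↦ 0 := by
    filter_upwards [Iio_mem_nhds (sub_one_lt x)] with y hy using hvanish y (le_of_lt hy)
  have hglobal : wright ρ β = fun _ ↦ 0 :=
    (analyticOnNhd_wright hρ β).eq_of_eventuallyEq analyticOnNhd_const hlocal
  have hΓ : (Gamma β)⁻¹ = 0 := by rw [← wright_zero_right ρ β, hglobal]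
  exact (inv_pos.mpr (Gamma_pos_of_pos hβ0)).ne' hΓ

lemma wright_pos_of_pos {ρ β x : ℝ} (hρ : -1 < ρ) (hρ0 : ρ ≤ 0) (hβ : 0 < β) (hx : x ≤ 0) :
    0 < wright ρ β x := by
  have hfirst : 0 < wright ρ (β + 1) x :=
    wright_pos_of_neg_le hρ hρ0 (by linarith) (by linarith) hx
  have hsecond : 0 ≤ wright ρ (β + ρ + 1) x := wright_nonneg hρ hρ0 (by linarith) hx
  rw [wright_eq_add hρ]
  exact add_pos_of_pos_of_nonneg (mul_pos hβ hfirst)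
    (mul_nonneg_of_nonpos_of_nonpos hρ0 (mul_nonpos_of_nonpos_of_nonneg hx hsecond))

lemma wright_pos {ρ β x : ℝ} (hρ : -1 < ρ) (hρ0 : ρ < 0) (hβ : 0 ≤ β) (hx : x < 0) :
    0 < wright ρ β x := by
  rcases hβ.eq_or_lt with rfl | hβ
  · rw [wright_eq_add hρ, zero_mul, zero_add]
    exact mul_pos_of_neg_of_neg hρ0
      (mul_neg_of_neg_of_pos hx (wright_pos_of_pos hρ hρ0.le (by linarith) hx.le))
  · exact wright_pos_of_pos hρ hρ0.le hβ hx.le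

theorem wright_hasDerivAt_general {α : ℝ} (hα : α < 1) (β : ℝ) :
    (∀ x : ℝ, HasDerivAt (fun y ↦ wright (-α) β (-y)) (-(wright (-α) (β - α) (-x))) x) ∧
    (0 < α → α ≤ β → ∀ x : ℝ, 0 < x → deriv (fun y ↦ wright (-α) β (-y)) x < 0) := by
  have hderiv (x : ℝ) :
      HasDerivAt (fun y ↦ wright (-α) β (-y)) (-(wright (-α) (β - α) (-x))) x := by
    simpa [sub_eq_add_neg, Function.comp_def] using
      (hasDerivAt_wright (neg_lt_neg hα) β (-x)).comp x (hasDerivAt_neg x)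
  refine ⟨hderiv, fun hα0 hαβ x hx ↦ ?_⟩
  rw [(hderiv x).deriv, neg_lt_zero]
  exact wright_pos (neg_lt_neg hα) (neg_lt_zero.mpr hα0) (sub_nonneg.mpr hαβ) (neg_lt_zero.mpr hx)

/-- For `α ∈ (0,1)` and any `β`, the function `x ↦ φ(-α, β, -x)` is differentiable with
derivative `-φ(-α, β-α, -x)`; in particular for `β ≥ α` and `x > 0` the derivative is
strictly negative. -/
theorem wright_hasDerivAt (α β : ℝ) (hα : α ∈ Set.Ioo (0 : ℝ) 1) :
    (∀ x : ℝ, HasDerivAt (fun y => wright (-α) β (-y)) (-(wright (-α) (β - α) (-x))) x) ∧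
    (α ≤ β → ∀ x : ℝ, 0 < x → deriv (fun y => wright (-α) β (-y)) x < 0) :=
  (wright_hasDerivAt_general hα.2 β).imp_right fun h ↦ h hα.1
end
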